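/- arXiv:1009.2944 — 2 statements merged into one kernel-verified Lean document; each statement's English description precedes it below -/
import Mathlib

section
/- Assume the Riemann hypothesis. Then for every integer k ≥ 1 and every real x ≥ max(p_k, e²), one has η_k(x) ≥ 1 − (8k/5)·(log x)/√x. -/
/-- `eta k x` is η_k(x) = min{ p_{i−k}/p_i : p_i > x } (with 1-based prime indexing;
here `Nat.nth Nat.Prime` is 0-based, so p_i = Nat.nth Nat.Prime (i-1)). -/
noncomputable def eta (k : ℕ) (x : ℝ) : ℝ :=
  sInf {r : ℝ | ∃ i : ℕ, x < (Nat.nth Nat.Prime (i + k) : ℝ) ∧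
    r = (Nat.nth Nat.Prime i : ℝ) / (Nat.nth Nat.Prime (i + k) : ℝ)}

/-!
Let `ξ(s) = s (s - 1) Λ(s)`, with `Λ` the completed zeta function. Under the Riemann hypothesis
`z ↦ ξ(1/2 + z - c) / ξ(1/2 + z + c)` is holomorphic for `Re z ≥ 0`, of modulus one on the imaginary
axis by the functional equation, bounded on the positive reals and of exponential type, so by
Phragmén–Lindelöf `|ξ(s - c)| ≤ |ξ(s + c)|`, and `c → 0` gives `Re (ξ'/ξ)(s) ≥ 0` for `Re s > 1/2`.
This positivity replaces any summation over zeros. It is tested against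
`Φ(w) = B(w) (1 - exp (L w)) (1 - exp (-L w))`, with `B` the transform of a tent of half-width `κ`:
`Φ ≥ 0` on the imaginary axis, while the integral of `(ξ'/ξ)(1/2 + δ + w) Φ(w)` over `Re w = 2`,
where `ξ'/ξ` is an explicit series, is computed term by term. If `(exp (L - κ), exp (L + κ))`
contains no prime, then von Mangoldt's function contributes only through proper prime powers, whose
total `ψ - θ` is too small to balance the term `κ² exp (L/2)` coming from the pole of `ζ`.

With `κ = (4/5) log Y / √Y` and `L = log Y - κ` this puts a prime in `(Y - (8/5) √Y log Y, Y)` for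
`Y ≥ 10⁶`; below `10⁶` a sparse list of primes shows that prime gaps are as small. Summing `k`
consecutive gaps and using that `log x / √x` decreases for `x ≥ e²` concludes.
-/

namespace RHPrimeGap

open Complex Set MeasureTheory Filter Topology Asymptotics FourierTransform
open scoped ArithmeticFunction.vonMangoldt

section HalfPlane

lemma isOpen_re_gt (a : ℝ) : IsOpen {z : ℂ | a < z.re} := isOpen_lt continuous_const continuous_re

lemma one_le_norm_sub_one {s : ℂ} (hs : 2 ≤ s.re) : 1 ≤ ‖s - 1‖ := by
  have := re_le_norm (s - 1)
  rw [sub_re, one_re] at this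
  linarith

end HalfPlane

section ZetaUpperBound

/-- The fractional part cut off to `(1, ∞)`. Its Mellin transform at `-s`, which is
`∫₁^∞ {t} t^(-s-1) dt`, continues `ζ` to the half-plane `0 < re s`. -/
noncomputable def fractIndicator : ℝ → ℂ := indicator (Ioi 1) fun t ↦ (Int.fract t : ℝ)

lemma norm_fractIndicator_le_one (t : ℝ) : ‖fractIndicator t‖ ≤ 1 := by
  refine (norm_indicator_le_norm_self _ t).trans ?_
  rw [norm_real, Real.norm_of_nonneg (Int.fract_nonneg t)]
  exact (Int.fract_lt_one t).le

lemma locallyIntegrable_fractIndicator : LocallyIntegrable fractIndicator := by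
  have hmeas : Measurable fractIndicator :=
    (measurable_ofReal.comp measurable_fract).indicator measurableSet_Ioi
  exact (locallyIntegrable_const (1 : ℝ)).mono hmeas.aestronglyMeasurable
    (ae_of_all _ fun t ↦ by simpa using norm_fractIndicator_le_one t)

lemma fractIndicator_isBigO_atTop : fractIndicator =O[atTop] fun x : ℝ ↦ x ^ (-(0 : ℝ)) :=
  .of_bound 1 (.of_forall fun t ↦ by simpa using norm_fractIndicator_le_one t)

lemma fractIndicator_isBigO_nhdsGT_zero (b : ℝ) :
    fractIndicator =O[𝓝[>] 0] fun x : ℝ ↦ x ^ (-b) := by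
  have h : fractIndicator =ᶠ[𝓝[>] 0] fun _ ↦ 0 := by
    filter_upwards [mem_nhdsWithin_of_mem_nhds (Iio_mem_nhds one_pos)] with t ht
    exact indicator_of_notMem (notMem_Ioi.mpr (mem_Iio.mp ht).le) _
  exact h.trans_isBigO (isBigO_zero _ _)

lemma differentiableAt_mellin_fractIndicator {s : ℂ} (hs : s.re < 0) :
    DifferentiableAt ℂ (mellin fractIndicator) s :=
  mellin_differentiableAt_of_isBigO_rpow (locallyIntegrable_fractIndicator.locallyIntegrableOn _)
    fractIndicator_isBigO_atTop hs (fractIndicator_isBigO_nhdsGT_zero (s.re - 1)) (by linarith)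

lemma mellinConvergent_fractIndicator {s : ℂ} (hs : s.re < 0) :
    MellinConvergent fractIndicator s :=
  mellinConvergent_of_isBigO_rpow (locallyIntegrable_fractIndicator.locallyIntegrableOn _)
    fractIndicator_isBigO_atTop hs (fractIndicator_isBigO_nhdsGT_zero (s.re - 1)) (by linarith)

lemma mellin_fractIndicator_neg (s : ℂ) :
    mellin fractIndicator (-s) = ∫ t in Ioi (1 : ℝ), (t : ℂ) ^ (-s - 1) * (Int.fract t : ℝ) := by
  have h (t : ℝ) : (t : ℂ) ^ (-s - 1) • fractIndicator t =
      indicator (Ioi 1) (fun t : ℝ ↦ (t : ℂ) ^ (-s - 1) * (Int.fract t : ℝ)) t := by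
    rw [fractIndicator, smul_eq_mul,
      indicator_mul_right (Ioi 1) (fun t : ℝ ↦ (t : ℂ) ^ (-s - 1))]
  simp_rw [mellin, h]
  rw [setIntegral_indicator measurableSet_Ioi, Ioi_inter_Ioi, max_eq_right zero_le_one]

lemma norm_mellin_fractIndicator_neg_le {s : ℂ} (hs : 0 < s.re) :
    ‖mellin fractIndicator (-s)‖ ≤ 1 / s.re := by
  have hint : ∫ t in Ioi (1 : ℝ), t ^ (-s.re - 1) = 1 / s.re := by
    rw [integral_Ioi_rpow_of_lt (by linarith) one_pos]
    simp
  rw [mellin_fractIndicator_neg, ← hint]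
  refine norm_integral_le_of_norm_le (integrableOn_Ioi_rpow_of_lt (by linarith) one_pos)
    ((ae_restrict_iff' measurableSet_Ioi).mpr (ae_of_all _ fun t ht ↦ ?_))
  have ht0 : (0 : ℝ) < t := one_pos.trans ht
  rw [norm_mul, norm_cpow_eq_rpow_re_of_pos ht0, norm_real,
    Real.norm_of_nonneg (Int.fract_nonneg t), sub_re, neg_re, one_re]
  exact mul_le_of_le_one_right (by positivity) (Int.fract_lt_one t).le

lemma integral_floor_mul_cpow {s : ℂ} (hs : 1 < s.re) :
    ∫ t in Ioi (1 : ℝ), (⌊t⌋₊ : ℂ) * (t : ℂ) ^ (-(s + 1)) =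
      (∫ t in Ioi (1 : ℝ), (t : ℂ) ^ (-s)) - mellin fractIndicator (-s) := by
  rw [mellin_fractIndicator_neg, ← integral_sub]
  · refine setIntegral_congr_fun measurableSet_Ioi fun t ht ↦ ?_
    have ht0 : (0 : ℝ) < t := one_pos.trans ht
    have htc : (t : ℂ) ≠ 0 := ofReal_ne_zero.mpr ht0.ne'
    have hpow : (t : ℂ) ^ (-s) = t * (t : ℂ) ^ (-s - 1) := by
      rw [cpow_sub _ _ htc, cpow_one, mul_div_cancel₀ _ htc]
    have hfloor : (⌊t⌋₊ : ℂ) = t - (Int.fract t : ℝ) := by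
      rw [← ofReal_sub, Int.self_sub_fract, ← natCast_floor_eq_intCast_floor ht0.le,
        ofReal_natCast]
    simp only [hpow, hfloor, neg_add']
    ring
  · exact integrableOn_Ioi_cpow_of_lt (by simpa using hs) one_pos
  · have hconv : MellinConvergent fractIndicator (-s) :=
      mellinConvergent_fractIndicator (by rw [neg_re]; linarith)
    refine (hconv.mono_set (Ioi_subset_Ioi zero_le_one)).congr_fun (fun t ht ↦ ?_)
      measurableSet_Ioi
    simp only [fractIndicator, smul_eq_mul, indicator_of_mem ht]

lemma riemannZeta₁_eq_mul {s : ℂ} (hs : s ≠ 1) : riemannZeta₁ s = (s - 1) * riemannZeta s := by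
  rw [riemannZeta_eq_inv_sub_mul hs, mul_inv_cancel_left₀ (sub_ne_zero.mpr hs)]

lemma riemannZeta₁_eq_of_one_lt_re {s : ℂ} (hs : 1 < s.re) :
    riemannZeta₁ s = s - s * (s - 1) * mellin fractIndicator (-s) := by
  have hs1 : s ≠ 1 := by rintro rfl; simp at hs
  have hzeta : riemannZeta s = s * ∫ t in Ioi (1 : ℝ), (⌊t⌋₊ : ℂ) * (t : ℂ) ^ (-(s + 1)) := by
    have h := LSeries_eq_mul_integral 1 (r := 1) zero_le_one hs (LSeriesSummable_one_iff.mpr hs)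
      (.of_bound 1 (.of_forall fun n ↦ by simp))
    simpa [LSeries_one_eq_riemannZeta hs] using h
  have hne : -s + 1 ≠ 0 := by rw [neg_add_eq_sub]; exact sub_ne_zero.mpr hs1.symm
  rw [riemannZeta₁_eq_mul hs1, hzeta, integral_floor_mul_cpow hs,
    integral_Ioi_cpow_of_lt (by simpa using hs) one_pos, ofReal_one, one_cpow]
  field_simp
  ring

lemma riemannZeta₁_eq {s : ℂ} (hs : 0 < s.re) :
    riemannZeta₁ s = s - s * (s - 1) * mellin fractIndicator (-s) := by
  have hzeta : AnalyticOnNhd ℂ riemannZeta₁ {z : ℂ | 0 < z.re} :=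
    differentiable_riemannZeta₁.differentiableOn.analyticOnNhd (isOpen_re_gt 0)
  have hmellin : AnalyticOnNhd ℂ (fun s ↦ s - s * (s - 1) * mellin fractIndicator (-s))
      {z : ℂ | 0 < z.re} := by
    refine DifferentiableOn.analyticOnNhd (fun z hz ↦ ?_) (isOpen_re_gt 0)
    have : DifferentiableAt ℂ (fun s ↦ mellin fractIndicator (-s)) z :=
      (differentiableAt_mellin_fractIndicator (s := -z) (by simpa using hz)).comp z
        differentiableAt_id.neg
    exact DifferentiableAt.differentiableWithinAt (by fun_prop)
  refine hzeta.eqOn_of_preconnected_of_eventuallyEq hmellin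
    (convex_halfSpace_re_gt 0).isPreconnected (z₀ := 2) (by simp) ?_ hs
  filter_upwards [(isOpen_re_gt 1).mem_nhds (x := 2) (by simp)] with z hz
    using riemannZeta₁_eq_of_one_lt_re hz

lemma norm_riemannZeta₁_le {s : ℂ} (hs : 1 / 4 ≤ s.re) :
    ‖riemannZeta₁ s‖ ≤ 20 * Real.exp ‖s‖ := by
  have hmellin : ‖mellin fractIndicator (-s)‖ ≤ 4 := by
    refine (norm_mellin_fractIndicator_neg_le (by linarith)).trans ?_
    rw [div_le_iff₀ (by linarith)]
    linarith
  have hsub : ‖s - 1‖ ≤ ‖s‖ + 1 := by simpa using norm_sub_le s 1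
  have hexp : 1 + ‖s‖ ≤ 2 * Real.exp (‖s‖ / 2) := by linarith [Real.add_one_le_exp (‖s‖ / 2)]
  rw [riemannZeta₁_eq (by linarith)]
  calc ‖s - s * (s - 1) * mellin fractIndicator (-s)‖
      ≤ ‖s‖ + ‖s‖ * ‖s - 1‖ * ‖mellin fractIndicator (-s)‖ :=
        (norm_sub_le _ _).trans_eq (by rw [norm_mul, norm_mul])
    _ ≤ ‖s‖ + ‖s‖ * (‖s‖ + 1) * 4 := by gcongr
    _ ≤ 5 * (1 + ‖s‖) ^ 2 := by nlinarith [norm_nonneg s]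
    _ ≤ 5 * (2 * Real.exp (‖s‖ / 2)) ^ 2 := by gcongr
    _ = 20 * Real.exp ‖s‖ := by rw [mul_pow, ← Real.exp_nat_mul]; ring_nf

end ZetaUpperBound

section ZetaLowerBound

lemma exists_eq_mul_exp_of_ne_zero {f : ℂ → ℂ} {w : ℂ} {R : ℝ} (hR : 0 < R)
    (hf : DifferentiableOn ℂ f (Metric.ball w R)) (h0 : ∀ z ∈ Metric.ball w R, f z ≠ 0) :
    ∃ h : ℂ → ℂ, DifferentiableOn ℂ h (Metric.ball w R) ∧ h w = 0 ∧
      ∀ z ∈ Metric.ball w R, f z = f w * exp (h z) := by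
  obtain ⟨h, hw, hderiv⟩ :=
    (((hf.deriv Metric.isOpen_ball).div hf h0).isExactOn_ball).with_val_at w 0
  have hhd : DifferentiableOn ℂ h (Metric.ball w R) :=
    fun z hz ↦ (hderiv z hz).differentiableAt.differentiableWithinAt
  refine ⟨h, hhd, hw, fun z hz ↦ ?_⟩
  have hconst : EqOn (fun z ↦ f z * exp (-h z)) (fun _ ↦ f w) (Metric.ball w R) := by
    refine Metric.isOpen_ball.eqOn_of_deriv_eq (convex_ball w R).isPreconnected
      (hf.mul hhd.neg.cexp) (differentiableOn_const _) (fun u hu ↦ ?_)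
      (Metric.mem_ball_self hR) (by simp [hw])
    have hfu := (hf.differentiableAt (Metric.isOpen_ball.mem_nhds hu)).hasDerivAt
    have hfu0 := h0 u hu
    refine ((hfu.mul (hderiv u hu).neg.cexp).deriv).trans ?_
    simp only [Pi.div_apply, Pi.neg_apply, deriv_const]
    field_simp
    ring
  rw [← show f z * exp (-h z) = f w from hconst hz, mul_assoc, ← exp_add, neg_add_cancel,
    exp_zero, mul_one]

lemma norm_mul_exp_le_of_ne_zero {f : ℂ → ℂ} {w z : ℂ} {R r A : ℝ} (hA : 0 < A) (hrR : r < R)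
    (hf : DifferentiableOn ℂ f (Metric.ball w R)) (h0 : ∀ z ∈ Metric.ball w R, f z ≠ 0)
    (hb : ∀ z ∈ Metric.ball w R, ‖f z‖ ≤ Real.exp A * ‖f w‖) (hz : ‖z - w‖ ≤ r) :
    ‖f w‖ * Real.exp (-(2 * A * r / (R - r))) ≤ ‖f z‖ := by
  have hr : 0 ≤ r := (norm_nonneg _).trans hz
  have hR : 0 < R := hr.trans_lt hrR
  obtain ⟨h, hd, hw, hh⟩ := exists_eq_mul_exp_of_ne_zero hR hf h0
  have hfw : 0 < ‖f w‖ := norm_pos_iff.mpr (h0 w (Metric.mem_ball_self hR))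
  have hzR : ‖z - w‖ < R := hz.trans_lt hrR
  have hball : MapsTo (fun u ↦ w + u) (Metric.ball 0 R) (Metric.ball w R) := fun u hu ↦ by
    simpa using hu
  have hre : MapsTo (fun u ↦ h (w + u)) (Metric.ball 0 R) {z | z.re ≤ A} := by
    intro u hu
    have hu' := hb _ (hball hu)
    rw [hh _ (hball hu), norm_mul, norm_exp, mul_comm] at hu'
    exact Real.exp_le_exp.mp (le_of_mul_le_mul_right hu' hfw)
  have hlog : ‖h z‖ ≤ 2 * A * r / (R - r) := by
    have hbc := borelCaratheodory_zero hA (hd.comp (by fun_prop) hball) hre hR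
      (mem_ball_zero_iff.mpr hzR) (by simpa using hw)
    rw [Function.comp_apply, add_sub_cancel] at hbc
    exact hbc.trans (by gcongr)
  rw [hh z (by rwa [mem_ball_iff_norm]), norm_mul, norm_exp]
  gcongr
  exact (neg_le_neg hlog).trans (neg_le_of_abs_le (abs_re_le_norm (h z)))

lemma summable_one_div_succ_sq : Summable fun n : ℕ ↦ 1 / ((n : ℝ) + 1) ^ 2 := by
  simpa using (summable_nat_add_iff 1).mpr (Real.summable_one_div_nat_pow.mpr one_lt_two)

lemma tsum_one_div_succ_sq : ∑' n : ℕ, 1 / ((n : ℝ) + 1) ^ 2 = Real.pi ^ 2 / 6 := by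
  have h := hasSum_zeta_two.tsum_eq
  rw [hasSum_zeta_two.summable.tsum_eq_zero_add] at h
  simpa using h

lemma norm_one_div_succ_cpow_le {s : ℂ} (hs : 2 ≤ s.re) (n : ℕ) :
    ‖1 / ((n : ℂ) + 1) ^ s‖ ≤ 1 / ((n : ℝ) + 1) ^ 2 := by
  rw [norm_div, norm_one, ← Nat.cast_succ, norm_natCast_cpow_of_pos n.succ_pos, Nat.cast_succ]
  gcongr
  rw [← Real.rpow_natCast]
  exact Real.rpow_le_rpow_of_exponent_le (by simp) (by simpa using hs)

lemma norm_riemannZeta_sub_one_le {s : ℂ} (hs : 2 ≤ s.re) :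
    ‖riemannZeta s - 1‖ ≤ Real.pi ^ 2 / 6 - 1 := by
  have hsum : Summable fun n : ℕ ↦ 1 / ((n : ℂ) + 1) ^ s :=
    .of_norm_bounded summable_one_div_succ_sq (norm_one_div_succ_cpow_le hs)
  have htail : ‖∑' n : ℕ, 1 / (((n + 1 : ℕ) : ℂ) + 1) ^ s‖ ≤
      ∑' n : ℕ, 1 / (((n + 1 : ℕ) : ℝ) + 1) ^ 2 :=
    tsum_of_norm_bounded ((summable_nat_add_iff 1).mpr summable_one_div_succ_sq).hasSum
      fun n ↦ norm_one_div_succ_cpow_le hs (n + 1)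
  have hreal := summable_one_div_succ_sq.tsum_eq_zero_add
  rw [tsum_one_div_succ_sq] at hreal
  rw [zeta_eq_tsum_one_div_nat_add_one_cpow (by linarith), hsum.tsum_eq_zero_add]
  simp only [Nat.cast_zero, zero_add, one_cpow, div_one, one_pow] at hreal ⊢
  rw [add_sub_cancel_left]
  linarith

lemma norm_riemannZeta_sub_one_le_of_two_le_re {s : ℂ} (hs : 2 ≤ s.re) :
    ‖riemannZeta s - 1‖ ≤ 0.65 :=
  (norm_riemannZeta_sub_one_le hs).trans (by nlinarith [Real.pi_lt_d4, Real.pi_pos])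

lemma le_norm_riemannZeta₁ {s : ℂ} (hs : 2 ≤ s.re) : 0.35 * ‖s - 1‖ ≤ ‖riemannZeta₁ s‖ := by
  have hzeta : 0.35 ≤ ‖riemannZeta s‖ := by
    have := norm_riemannZeta_sub_one_le_of_two_le_re hs
    have := norm_sub_norm_le 1 (riemannZeta s)
    rw [norm_one, norm_sub_rev] at this
    linarith
  rw [riemannZeta₁_eq_mul (by rintro rfl; norm_num at hs), norm_mul, mul_comm]
  gcongr

lemma norm_riemannZeta₁_le_mul_norm_sub_one {s : ℂ} (hs : 2 ≤ s.re) :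
    ‖riemannZeta₁ s‖ ≤ 1.65 * ‖s - 1‖ := by
  have hzeta : ‖riemannZeta s‖ ≤ 1.65 := by
    have := norm_riemannZeta_sub_one_le_of_two_le_re hs
    have := norm_le_norm_sub_add (riemannZeta s) 1
    rw [norm_one] at this
    linarith
  rw [riemannZeta₁_eq_mul (by rintro rfl; norm_num at hs), norm_mul, mul_comm]
  gcongr

lemma riemannZeta₁_ne_zero (hRH : RiemannHypothesis) {s : ℂ} (hs : 1 / 2 < s.re) :
    riemannZeta₁ s ≠ 0 := by
  rcases eq_or_ne s 1 with rfl | h1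
  · simp
  rw [riemannZeta₁_eq_mul h1]
  refine mul_ne_zero (sub_ne_zero.mpr h1) fun h ↦ hs.ne' (hRH s h ?_ h1)
  rintro ⟨n, rfl⟩
  simp only [neg_mul, neg_re, mul_re, add_re, add_im, re_ofNat, im_ofNat, natCast_re, natCast_im,
    one_re, one_im] at hs
  linarith

lemma le_norm_riemannZeta₁_of_re_eq_three {w : ℂ} (hw : w.re = 3) : 0.7 ≤ ‖riemannZeta₁ w‖ := by
  have hre := re_le_norm (w - 1)
  rw [sub_re, one_re, hw] at hre
  linarith [le_norm_riemannZeta₁ (s := w) (by linarith)]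

lemma norm_riemannZeta₁_le_exp_mul {w z : ℂ} (hw : w.re = 3) (hz : ‖z - w‖ < 5 / 2) :
    ‖riemannZeta₁ z‖ ≤ Real.exp (12 + |w.im|) * ‖riemannZeta₁ w‖ := by
  have hre : 1 / 4 ≤ z.re := by
    have := neg_le_of_abs_le (abs_re_le_norm (z - w))
    rw [sub_re] at this
    linarith
  have hnorm : ‖z‖ ≤ 6 + |w.im| := by
    have := norm_le_norm_sub_add z w
    have := norm_le_abs_re_add_abs_im w
    rw [hw, abs_of_pos three_pos] at this
    linarith
  have hexp : 60 ≤ Real.exp 6 := by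
    have := Real.add_one_le_exp 1
    calc (60 : ℝ) ≤ 2 ^ 6 := by norm_num
      _ ≤ Real.exp 1 ^ 6 := by gcongr; linarith
      _ = Real.exp 6 := by rw [← Real.exp_nat_mul]; norm_num
  have hw0 := le_norm_riemannZeta₁_of_re_eq_three hw
  calc ‖riemannZeta₁ z‖ ≤ 20 * Real.exp ‖z‖ := norm_riemannZeta₁_le hre
    _ ≤ 20 * Real.exp (6 + |w.im|) := by gcongr
    _ ≤ Real.exp 6 * Real.exp (6 + |w.im|) * 0.7 := by nlinarith [Real.exp_pos (6 + |w.im|)]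
    _ ≤ Real.exp 6 * Real.exp (6 + |w.im|) * ‖riemannZeta₁ w‖ := by gcongr
    _ = Real.exp (12 + |w.im|) * ‖riemannZeta₁ w‖ := by rw [← Real.exp_add]; ring_nf

lemma exp_le_norm_riemannZeta₁_of_re_le_two (hRH : RiemannHypothesis) {c : ℝ} (hc : 0 < c) {s : ℂ}
    (hs : 1 / 2 + c ≤ s.re) (hs2 : s.re ≤ 2) :
    0.7 * Real.exp (-(5 * (12 + |s.im|) / c)) ≤ ‖riemannZeta₁ s‖ := by
  set w : ℂ := ⟨3, s.im⟩ with hw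
  have hne {z : ℂ} (hz : z ∈ Metric.ball w (5 / 2)) : riemannZeta₁ z ≠ 0 := by
    have := (abs_re_le_norm (z - w)).trans_lt (mem_ball_iff_norm.mp hz)
    rw [sub_re, abs_lt] at this
    exact riemannZeta₁_ne_zero hRH (by linarith [this.1, show w.re = 3 from rfl])
  have hdist : ‖s - w‖ ≤ 5 / 2 - c := by
    rw [show s - w = (s.re - 3 : ℝ) by apply Complex.ext <;> simp [hw], norm_real,
      Real.norm_eq_abs, abs_le]
    constructor <;> linarith
  have hborel := norm_mul_exp_le_of_ne_zero (A := 12 + |s.im|) (by positivity) (by linarith)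
    differentiable_riemannZeta₁.differentiableOn (fun z hz ↦ hne hz)
    (fun z hz ↦ norm_riemannZeta₁_le_exp_mul rfl (mem_ball_iff_norm.mp hz)) hdist
  have hexponent : 2 * (12 + |s.im|) * (5 / 2 - c) / (5 / 2 - (5 / 2 - c)) ≤
      5 * (12 + |s.im|) / c := by
    rw [sub_sub_cancel]
    gcongr ?_ / c
    nlinarith [abs_nonneg s.im]
  calc 0.7 * Real.exp (-(5 * (12 + |s.im|) / c))
      ≤ ‖riemannZeta₁ w‖ *
        Real.exp (-(2 * (12 + |s.im|) * (5 / 2 - c) / (5 / 2 - (5 / 2 - c)))) := by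
        gcongr
        exact le_norm_riemannZeta₁_of_re_eq_three rfl
    _ ≤ ‖riemannZeta₁ s‖ := hborel

lemma exp_le_norm_riemannZeta₁ (hRH : RiemannHypothesis) {c : ℝ} (hc : 0 < c) {s : ℂ}
    (hs : 1 / 2 + c ≤ s.re) :
    1 / 3 * Real.exp (-(5 * (12 + ‖s‖) / c)) ≤ ‖riemannZeta₁ s‖ := by
  rcases le_total s.re 2 with h2 | h2
  · refine le_trans ?_ (exp_le_norm_riemannZeta₁_of_re_le_two hRH hc hs h2)
    gcongr
    · norm_num
    · exact abs_im_le_norm s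
  · have hexp : Real.exp (-(5 * (12 + ‖s‖) / c)) ≤ 1 := by
      rw [Real.exp_le_one_iff, neg_nonpos]; positivity
    linarith [le_norm_riemannZeta₁ h2, one_le_norm_sub_one h2]

end ZetaLowerBound

section Xi

/-- The entire completed zeta function `ξ(s) = s (s - 1) Λ(s)` (twice Riemann's `ξ`), written with
`completedRiemannZeta₀` so that the values at the poles `0` and `1` of `Λ` are the right ones. -/
noncomputable def xi (s : ℂ) : ℂ := s * (s - 1) * completedRiemannZeta₀ s + 1

lemma differentiable_xi : Differentiable ℂ xi :=
  ((differentiable_id.mul (differentiable_id.sub_const 1)).mul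
    differentiable_completedZeta₀).add_const 1

lemma xi_one_sub (s : ℂ) : xi (1 - s) = xi s := by
  rw [xi, xi, completedRiemannZeta₀_one_sub]
  ring

lemma xi_eq {s : ℂ} (hs : 0 < s.re) : xi s = s * riemannZeta₁ s * Gammaℝ s := by
  have hs0 : s ≠ 0 := ne_zero_of_re_pos hs
  rcases eq_or_ne s 1 with rfl | hs1
  · simp [xi, Gammaℝ_one]
  have hΓ : Gammaℝ s ≠ 0 := Gammaℝ_ne_zero_of_re_pos hs
  have hone_sub : 1 - s ≠ 0 := sub_ne_zero.mpr hs1.symm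
  rw [riemannZeta₁_eq_mul hs1, riemannZeta_def_of_ne_zero hs0, completedRiemannZeta_eq, xi]
  field_simp
  ring

lemma xi_ne_zero (hRH : RiemannHypothesis) {s : ℂ} (hs : 1 / 2 < s.re) : xi s ≠ 0 := by
  have hs0 : 0 < s.re := by linarith
  rw [xi_eq hs0]
  exact mul_ne_zero (mul_ne_zero (ne_zero_of_re_pos hs0) (riemannZeta₁_ne_zero hRH hs))
    (Gammaℝ_ne_zero_of_re_pos hs0)

lemma riemannZeta₁_conj (s : ℂ) :
    riemannZeta₁ (starRingEnd ℂ s) = starRingEnd ℂ (riemannZeta₁ s) := by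
  rcases eq_or_ne s 1 with rfl | h
  · simp
  have h' : starRingEnd ℂ s ≠ 1 := by rwa [ne_eq, map_eq_one_iff _ (starRingEnd ℂ).injective]
  rw [riemannZeta₁_eq_mul h, riemannZeta₁_eq_mul h', riemannZeta_conj, map_mul, map_sub, map_one]

lemma norm_Gammaℝ (s : ℂ) : ‖Gammaℝ s‖ = Real.pi ^ (-s.re / 2) * ‖Complex.Gamma (s / 2)‖ := by
  rw [Gammaℝ_def, norm_mul, norm_cpow_eq_rpow_re_of_pos Real.pi_pos, div_ofNat_re, neg_re]

lemma norm_xi_conj {s : ℂ} (hs : 0 < s.re) : ‖xi (starRingEnd ℂ s)‖ = ‖xi s‖ := by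
  have hdiv : starRingEnd ℂ s / 2 = starRingEnd ℂ (s / 2) := by rw [map_div₀, map_ofNat]
  rw [xi_eq hs, xi_eq (by simpa using hs)]
  simp only [norm_mul, riemannZeta₁_conj, norm_Gammaℝ, conj_re, RCLike.norm_conj, hdiv, Gamma_conj]

end Xi

section GammaRatio

lemma exists_norm_betaIntegral_le {a c : ℝ} (ha : 0 < a) (hc : 0 < c) :
    ∃ K : ℝ, ∀ u : ℂ, a ≤ u.re → ‖betaIntegral u c‖ ≤ K := by
  have hint : IntervalIntegrable
      (fun x : ℝ ↦ ‖(x : ℂ) ^ ((a : ℂ) - 1) * (1 - (x : ℂ)) ^ ((c : ℂ) - 1)‖) volume 0 1 :=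
    (betaIntegral_convergent (by simpa using ha) (by simpa using hc)).norm
  refine ⟨_, fun u hu ↦ intervalIntegral.norm_integral_le_of_norm_le zero_le_one ?_ hint⟩
  filter_upwards with x hx
  rw [norm_mul, norm_mul, norm_cpow_eq_rpow_re_of_pos hx.1, norm_cpow_eq_rpow_re_of_pos hx.1]
  exact mul_le_mul_of_nonneg_right
    (Real.rpow_le_rpow_of_exponent_ge hx.1 hx.2 (by simpa using hu)) (by positivity)

lemma exists_norm_Gamma_le_mul_norm_Gamma_add {a c : ℝ} (ha : 0 < a) (hc : 0 < c) :
    ∃ K : ℝ, ∀ u : ℂ, a ≤ u.re → ‖Complex.Gamma u‖ ≤ K * ‖Complex.Gamma (u + c)‖ := by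
  obtain ⟨B, hB⟩ := exists_norm_betaIntegral_le ha hc
  have hΓ : 0 < ‖Complex.Gamma c‖ :=
    norm_pos_iff.mpr (Gamma_ne_zero_of_re_pos (by simpa using hc))
  refine ⟨B / ‖Complex.Gamma c‖, fun u hu ↦ ?_⟩
  rw [div_mul_eq_mul_div, le_div_iff₀ hΓ, ← norm_mul,
    Gamma_mul_Gamma_eq_betaIntegral (ha.trans_le hu) (by simpa using hc), norm_mul, mul_comm]
  gcongr
  exact hB u hu

lemma exists_norm_Gammaℝ_le_mul_norm_Gammaℝ_add {a c : ℝ} (ha : 0 < a) (hc : 0 < c) :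
    ∃ K : ℝ, ∀ s : ℂ, a ≤ s.re → ‖Gammaℝ s‖ ≤ K * ‖Gammaℝ (s + c)‖ := by
  obtain ⟨K, hK⟩ := exists_norm_Gamma_le_mul_norm_Gamma_add (half_pos ha) (half_pos hc)
  refine ⟨Real.pi ^ (c / 2) * K, fun s hs ↦ ?_⟩
  have hΓ := hK (s / 2) (by rw [div_ofNat_re]; linarith)
  rw [ofReal_div, ofReal_ofNat, ← add_div] at hΓ
  have hpi : Real.pi ^ (-s.re / 2) =
      Real.pi ^ (c / 2) * Real.pi ^ (-(s + c).re / 2) := by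
    rw [← Real.rpow_add Real.pi_pos, add_re, ofReal_re]
    ring_nf
  calc ‖Gammaℝ s‖ = Real.pi ^ (-s.re / 2) * ‖Complex.Gamma (s / 2)‖ := norm_Gammaℝ s
    _ ≤ Real.pi ^ (-s.re / 2) * (K * ‖Complex.Gamma ((s + c) / 2)‖) := by gcongr
    _ = Real.pi ^ (c / 2) * K * ‖Gammaℝ (s + c)‖ := by rw [norm_Gammaℝ, hpi]; ring

end GammaRatio

section Positivity

lemma norm_sub_ofReal_le_norm_add_ofReal {s : ℂ} {c : ℝ} (hs : 0 ≤ s.re) (hc : 0 ≤ c) :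
    ‖s - c‖ ≤ ‖s + c‖ := by
  rw [norm_def, norm_def]
  gcongr
  simp only [normSq_apply, sub_re, add_re, ofReal_re, sub_im, add_im, ofReal_im]
  nlinarith

/-- The quotient of `ξ` at the two points at distance `c` to the left and to the right of
`1 / 2 + z`. Under RH it is holomorphic for `0 ≤ re z`, and it has modulus one on the imaginary
axis by the functional equation. -/
noncomputable def xiQuotient (c : ℝ) (z : ℂ) : ℂ := xi (1 / 2 + z - c) / xi (1 / 2 + z + c)

lemma half_add_sub_ofReal_re (z : ℂ) (c : ℝ) : (1 / 2 + z - c).re = 1 / 2 + z.re - c := by simp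

lemma half_add_add_ofReal_re (z : ℂ) (c : ℝ) : (1 / 2 + z + c).re = 1 / 2 + z.re + c := by simp

lemma norm_xiQuotient_mul_I {c : ℝ} (hc : 0 < c) (x : ℝ) : ‖xiQuotient c (x * I)‖ ≤ 1 := by
  have hreflect : 1 / 2 + x * I - c = 1 - starRingEnd ℂ (1 / 2 + x * I + c) := by
    apply Complex.ext
    · simp; ring
    · simp
  rw [xiQuotient, norm_div, hreflect, xi_one_sub, norm_xi_conj (by simp; linarith)]
  exact div_self_le_one _

lemma differentiableAt_xiQuotient (hRH : RiemannHypothesis) {c : ℝ} (hc : 0 < c) {z : ℂ}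
    (hz : 0 ≤ z.re) : DifferentiableAt ℂ (xiQuotient c) z :=
  ((differentiable_xi _).comp z (by fun_prop)).div ((differentiable_xi _).comp z (by fun_prop))
    (xi_ne_zero hRH (by rw [half_add_add_ofReal_re]; linarith))

lemma exists_norm_xiQuotient_le (hRH : RiemannHypothesis) {c : ℝ} (hc : 0 < c) (hc' : c ≤ 1 / 4) :
    ∃ K : ℝ, 0 < K ∧ ∀ z : ℂ, 0 ≤ z.re → ‖xiQuotient c z‖ ≤
      K * (‖riemannZeta₁ (1 / 2 + z - c)‖ / ‖riemannZeta₁ (1 / 2 + z + c)‖) := by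
  obtain ⟨K, hK⟩ := exists_norm_Gammaℝ_le_mul_norm_Gammaℝ_add (a := 1 / 4) (c := c + c)
    (by norm_num) (by positivity)
  refine ⟨max K 1, by positivity, fun z hz ↦ ?_⟩
  have hleft := half_add_sub_ofReal_re z c
  have hright := half_add_add_ofReal_re z c
  have hΓ : ‖Gammaℝ (1 / 2 + z - c)‖ ≤ max K 1 * ‖Gammaℝ (1 / 2 + z + c)‖ := by
    have h := hK (1 / 2 + z - c) (by linarith)
    rw [ofReal_add, sub_add_add_cancel] at h
    exact h.trans (by gcongr; exact le_max_left K 1)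
  have hlin := norm_sub_ofReal_le_norm_add_ofReal (s := 1 / 2 + z) (by simp; linarith) hc.le
  have hpos : 0 < (1 / 2 + z + c).re := by linarith
  have hs_pos := norm_pos_iff.mpr (ne_zero_of_re_pos hpos)
  have hζ_pos :=
    norm_pos_iff.mpr (riemannZeta₁_ne_zero hRH (by linarith : 1 / 2 < (1 / 2 + z + c).re))
  have hΓ_pos := norm_pos_iff.mpr (Gammaℝ_ne_zero_of_re_pos hpos)
  rw [xiQuotient, xi_eq (by linarith), xi_eq hpos]
  simp only [norm_div, norm_mul]
  rw [mul_div_assoc', div_le_div_iff₀ (by positivity) (by positivity)]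
  calc _ ≤ ‖1 / 2 + z + c‖ * ‖riemannZeta₁ (1 / 2 + z - c)‖ *
        (max K 1 * ‖Gammaℝ (1 / 2 + z + c)‖) * ‖riemannZeta₁ (1 / 2 + z + c)‖ := by gcongr
    _ = _ := by ring

lemma riemannZeta₁_quotient_le_exp (hRH : RiemannHypothesis) {c : ℝ} (hc : 0 < c) (hc' : c ≤ 1 / 4)
    {z : ℂ} (hz : 0 ≤ z.re) :
    ‖riemannZeta₁ (1 / 2 + z - c)‖ / ‖riemannZeta₁ (1 / 2 + z + c)‖ ≤
      60 * Real.exp (1 + 65 / c) * Real.exp ((1 + 5 / c) * ‖z‖) := by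
  have hhalf : ‖(1 / 2 : ℂ)‖ = 1 / 2 := by norm_num
  have hcnorm : ‖(c : ℂ)‖ = c := by rw [norm_real, Real.norm_of_nonneg hc.le]
  have hadd : ‖1 / 2 + z‖ ≤ 1 / 2 + ‖z‖ := (norm_add_le _ _).trans_eq (by rw [hhalf])
  have hnum : ‖riemannZeta₁ (1 / 2 + z - c)‖ ≤ 20 * Real.exp (1 + ‖z‖) := by
    refine (norm_riemannZeta₁_le (by rw [half_add_sub_ofReal_re]; linarith)).trans ?_
    gcongr
    linarith [norm_sub_le (1 / 2 + z) c]
  have hden : 1 / 3 * Real.exp (-(5 * (13 + ‖z‖) / c)) ≤ ‖riemannZeta₁ (1 / 2 + z + c)‖ := by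
    refine le_trans ?_ (exp_le_norm_riemannZeta₁ hRH hc
      (by rw [half_add_add_ofReal_re]; linarith))
    gcongr 1 / 3 * Real.exp (-(5 * ?_ / c))
    linarith [norm_add_le (1 / 2 + z) c]
  calc _ ≤ 20 * Real.exp (1 + ‖z‖) / (1 / 3 * Real.exp (-(5 * (13 + ‖z‖) / c))) := by gcongr
    _ = 60 * (Real.exp (1 + ‖z‖) * Real.exp (5 * (13 + ‖z‖) / c)) := by
      rw [Real.exp_neg]; field_simp; norm_num
    _ = 60 * (Real.exp (1 + 65 / c) * Real.exp ((1 + 5 / c) * ‖z‖)) := by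
      rw [← Real.exp_add, ← Real.exp_add]; ring_nf
    _ = _ := by ring

lemma riemannZeta₁_quotient_le_of_three_le {c x : ℝ} (hc : 0 < c) (hc' : c ≤ 1 / 4) (hx : 3 ≤ x) :
    ‖riemannZeta₁ (1 / 2 + x - c)‖ / ‖riemannZeta₁ (1 / 2 + x + c)‖ ≤ 1.65 / 0.35 := by
  have hleft : 2 ≤ ((1 / 2 + x - c : ℂ)).re := by
    rw [half_add_sub_ofReal_re, ofReal_re]; linarith
  have hright : 2 ≤ ((1 / 2 + x + c : ℂ)).re := by
    rw [half_add_add_ofReal_re, ofReal_re]; linarith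
  have hlin : ‖(1 / 2 + x - c : ℂ) - 1‖ ≤ ‖(1 / 2 + x + c : ℂ) - 1‖ := by
    rw [sub_right_comm, add_sub_right_comm _ (c : ℂ)]
    refine norm_sub_ofReal_le_norm_add_ofReal ?_ hc.le
    rw [sub_re, add_re, div_ofNat_re, one_re, ofReal_re]
    linarith
  have hnum := norm_riemannZeta₁_le_mul_norm_sub_one hleft
  have hden := le_norm_riemannZeta₁ hright
  have hone := one_le_norm_sub_one hright
  rw [div_le_div_iff₀ (by linarith) (by norm_num)]
  linarith

lemma norm_xiQuotient_le_one (hRH : RiemannHypothesis) {c : ℝ} (hc : 0 < c) (hc' : c ≤ 1 / 4)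
    {z : ℂ} (hz : 0 ≤ z.re) : ‖xiQuotient c z‖ ≤ 1 := by
  obtain ⟨K, hK, hQ⟩ := exists_norm_xiQuotient_le hRH hc hc'
  refine PhragmenLindelof.right_half_plane_of_bounded_on_real ?_
    ⟨1, one_lt_two, 1 + 5 / c, .of_bound (K * (60 * Real.exp (1 + 65 / c))) ?_⟩
    ⟨K * (1.65 / 0.35), ?_⟩ (norm_xiQuotient_mul_I hc) hz
  · refine DifferentiableOn.diffContOnCl fun w hw ↦ ?_
    rw [closure_setOfPred_lt_re] at hw
    exact (differentiableAt_xiQuotient hRH hc hw).differentiableWithinAt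
  · rw [eventually_inf_principal]
    refine .of_forall fun w (hw : 0 < w.re) ↦ (hQ w hw.le).trans ?_
    rw [Real.norm_eq_abs, Real.abs_exp, Real.rpow_one, mul_assoc]
    gcongr
    exact riemannZeta₁_quotient_le_exp hRH hc hc' hw.le
  · rw [eventually_map]
    filter_upwards [eventually_ge_atTop 3] with x hx
    refine (hQ x (by rw [ofReal_re]; linarith)).trans ?_
    exact mul_le_mul_of_nonneg_left (riemannZeta₁_quotient_le_of_three_le hc hc' hx) hK.le

lemma norm_xi_sub_le_norm_xi_add (hRH : RiemannHypothesis) {s : ℂ} (hs : 1 / 2 ≤ s.re) {c : ℝ}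
    (hc : 0 < c) (hc' : c ≤ 1 / 4) : ‖xi (s - c)‖ ≤ ‖xi (s + c)‖ := by
  have h := norm_xiQuotient_le_one hRH hc hc' (z := s - 1 / 2) (by simpa using hs)
  rwa [xiQuotient, norm_div, add_sub_cancel, div_le_one] at h
  exact norm_pos_iff.mpr (xi_ne_zero hRH (by rw [add_re, ofReal_re]; linarith))

lemma nonneg_of_hasDerivAt_of_le_neg {φ : ℝ → ℝ} {φ' : ℝ} (h : HasDerivAt φ φ' 0)
    (hle : ∀ᶠ c in 𝓝[>] 0, φ (-c) ≤ φ c) : 0 ≤ φ' := by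
  have hneg : HasDerivAt (fun c ↦ φ (-c)) (-φ') 0 := by
    have h' : HasDerivAt φ φ' (-0) := by rwa [neg_zero]
    simpa [Function.comp_def] using h'.comp 0 (hasDerivAt_neg 0)
  have hslope := (hasDerivAt_iff_tendsto_slope.mp (h.sub hneg)).mono_left
    (nhdsWithin_mono (0 : ℝ) (s := Ioi 0) fun _ hx ↦ ne_of_gt hx)
  have : 0 ≤ φ' - -φ' := by
    refine ge_of_tendsto hslope ?_
    filter_upwards [hle, self_mem_nhdsWithin] with c hc (hc0 : 0 < c)
    rw [slope_def_field, Pi.sub_apply, Pi.sub_apply, neg_zero, sub_self, sub_zero, sub_zero]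
    exact div_nonneg (sub_nonneg.mpr hc) hc0.le
  linarith

lemma re_logDeriv_nonneg_of_norm_le {f : ℂ → ℂ} {s : ℂ} (hf : DifferentiableAt ℂ f s)
    (hle : ∀ᶠ c : ℝ in 𝓝[>] 0, ‖f (s - c)‖ ≤ ‖f (s + c)‖) : 0 ≤ (logDeriv f s).re := by
  have hline : HasDerivAt (fun c : ℝ ↦ f (s + c)) (deriv f s) 0 := by
    have h : HasDerivAt f (deriv f s) (s + (0 : ℝ)) := by simpa using hf.hasDerivAt
    exact (h.comp_const_add s _).comp_ofReal
  have hinner : 0 ≤ 2 * inner ℝ (f (s + (0 : ℝ))) (deriv f s) := by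
    refine nonneg_of_hasDerivAt_of_le_neg hline.norm_sq ?_
    filter_upwards [hle] with c hc
    rw [ofReal_neg, ← sub_eq_add_neg]
    gcongr
  rw [ofReal_zero, add_zero, Complex.inner] at hinner
  rw [logDeriv_apply, div_eq_mul_inv, inv_def, ← mul_assoc, re_mul_ofReal]
  exact mul_nonneg (by linarith) (inv_nonneg.mpr (normSq_nonneg _))

lemma re_logDeriv_xi_nonneg (hRH : RiemannHypothesis) {s : ℂ} (hs : 1 / 2 < s.re) :
    0 ≤ (logDeriv xi s).re := by
  refine re_logDeriv_nonneg_of_norm_le differentiable_xi.differentiableAt ?_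
  filter_upwards [Ioc_mem_nhdsGT (by norm_num : (0 : ℝ) < 1 / 4)] with c hc
    using norm_xi_sub_le_norm_xi_add hRH hs.le hc.1 hc.2

end Positivity

section DigammaSeries

/-- The `m`-th term of the partial fraction expansion `ψ(s) = -γ + ∑ (1 / (m + 1) - 1 / (m + s))`
of the digamma function. -/
noncomputable def digammaTerm (s : ℂ) (m : ℕ) : ℂ := 1 / ((m : ℂ) + 1) - 1 / ((m : ℂ) + s)

/-- The real partial fraction series `∑ (1 / (m + 1) - 1 / (m + x))`, on which monotonicity in `x`
can be used. -/
noncomputable def realDigammaSeries (x : ℝ) : ℝ := ∑' m : ℕ, (1 / ((m : ℝ) + 1) - 1 / ((m : ℝ) + x))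

lemma ne_neg_natCast_of_re_pos {s : ℂ} (hs : 0 < s.re) (m : ℕ) : s ≠ -m := by
  rintro rfl
  rw [neg_re, natCast_re] at hs
  linarith [(Nat.cast_nonneg m : (0 : ℝ) ≤ m)]

lemma natCast_add_ne_zero_of_re_pos {s : ℂ} (hs : 0 < s.re) (m : ℕ) : (m : ℂ) + s ≠ 0 :=
  fun h ↦ ne_neg_natCast_of_re_pos hs m (eq_neg_of_add_eq_zero_right h)

lemma norm_natCast_add_one (m : ℕ) : ‖(m : ℂ) + 1‖ = (m : ℝ) + 1 := by
  exact_mod_cast norm_natCast (m + 1)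

lemma norm_digammaTerm_le {s : ℂ} {ε R : ℝ} (hε : 0 < ε) (hε1 : ε ≤ 1) (hs : ε ≤ s.re)
    (hR : ‖s‖ ≤ R) (m : ℕ) : ‖digammaTerm s m‖ ≤ (R + 1) / ε * (1 / ((m : ℝ) + 1) ^ 2) := by
  have hne := natCast_add_ne_zero_of_re_pos (hε.trans_le hs) m
  have hone : (m : ℂ) + 1 ≠ 0 := m.cast_add_one_ne_zero
  have hterm : digammaTerm s m = (s - 1) / (((m : ℂ) + 1) * ((m : ℂ) + s)) := by
    rw [digammaTerm]; field_simp; ring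
  have hden : ε * ((m : ℝ) + 1) ≤ ‖(m : ℂ) + s‖ := by
    have := re_le_norm ((m : ℂ) + s)
    rw [add_re, natCast_re] at this
    nlinarith
  have hnum : ‖s - 1‖ ≤ R + 1 := (norm_sub_le s 1).trans (by rw [norm_one]; gcongr)
  rw [hterm, norm_div, norm_mul, norm_natCast_add_one]
  calc _ ≤ (R + 1) / (((m : ℝ) + 1) * (ε * ((m : ℝ) + 1))) := by
        gcongr
        exact (norm_nonneg _).trans hnum
    _ = _ := by field_simp

lemma summable_digammaTerm {s : ℂ} (hs : 0 < s.re) : Summable (digammaTerm s) :=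
  .of_norm_bounded (summable_one_div_succ_sq.mul_left _)
    (norm_digammaTerm_le (lt_min hs one_pos) (min_le_right _ _) (min_le_left _ _) le_rfl)

lemma differentiableOn_tsum_digammaTerm :
    DifferentiableOn ℂ (fun s ↦ ∑' m, digammaTerm s m) {s : ℂ | 0 < s.re} := by
  intro s (hs : 0 < s.re)
  obtain ⟨ε, hε, hεs⟩ := exists_between (lt_min hs one_pos)
  have hopen : IsOpen ({z : ℂ | ε < z.re} ∩ Metric.ball 0 (‖s‖ + 1)) :=
    (isOpen_re_gt ε).inter Metric.isOpen_ball
  have hmem : s ∈ {z : ℂ | ε < z.re} ∩ Metric.ball 0 (‖s‖ + 1) :=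
    ⟨hεs.trans_le (min_le_left _ _), by simp⟩
  have hsum := differentiableOn_tsum_of_summable_norm (F := fun m z ↦ digammaTerm z m)
    (summable_one_div_succ_sq.mul_left ((‖s‖ + 1 + 1) / ε)) (fun m z hz ↦ ?_) hopen
    fun m z hz ↦ norm_digammaTerm_le hε (hεs.le.trans (min_le_right _ _)) (le_of_lt hz.1)
      (mem_ball_zero_iff.mp hz.2).le m
  · exact (hsum.differentiableAt (hopen.mem_nhds hmem)).differentiableWithinAt
  · have hne := natCast_add_ne_zero_of_re_pos (hε.trans hz.1) m
    unfold digammaTerm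
    exact DifferentiableAt.differentiableWithinAt (by fun_prop (disch := assumption))

lemma digammaTerm_ofReal (x : ℝ) (m : ℕ) :
    digammaTerm x m = ((1 / ((m : ℝ) + 1) - 1 / ((m : ℝ) + x) : ℝ) : ℂ) := by
  rw [digammaTerm]; push_cast; rfl

lemma tsum_digammaTerm_ofReal (x : ℝ) : ∑' m, digammaTerm x m = realDigammaSeries x := by
  simp only [digammaTerm_ofReal, realDigammaSeries, ofReal_tsum]

lemma summable_realDigammaSeries {x : ℝ} (hx : 0 < x) :
    Summable fun m : ℕ ↦ 1 / ((m : ℝ) + 1) - 1 / ((m : ℝ) + x) :=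
  summable_ofReal.mp <| (summable_digammaTerm (by simpa using hx)).congr (digammaTerm_ofReal x)

lemma monotoneOn_realDigammaSeries : MonotoneOn realDigammaSeries (Ioi 0) := by
  intro x (hx : 0 < x) y (hy : 0 < y) hxy
  refine (summable_realDigammaSeries hx).tsum_le_tsum (fun m ↦ ?_) (summable_realDigammaSeries hy)
  gcongr

lemma realDigammaSeries_one : realDigammaSeries 1 = 0 := by simp [realDigammaSeries]

lemma hasSum_one_div_add_sub {x : ℝ} (hx : 0 < x) :
    HasSum (fun m : ℕ ↦ 1 / ((m : ℝ) + x) - 1 / ((m : ℝ) + (x + 1))) (1 / x) := by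
  have hsum : Summable fun m : ℕ ↦ 1 / ((m : ℝ) + x) - 1 / ((m : ℝ) + (x + 1)) :=
    ((summable_realDigammaSeries (add_pos hx one_pos)).sub (summable_realDigammaSeries hx)).congr
      fun m ↦ by ring
  have htel (n : ℕ) : ∑ m ∈ Finset.range n, (1 / ((m : ℝ) + x) - 1 / ((m : ℝ) + (x + 1))) =
      1 / x - 1 / ((n : ℝ) + x) := by
    have := Finset.sum_range_sub' (fun m : ℕ ↦ 1 / ((m : ℝ) + x)) n
    simpa [add_assoc, add_comm x] using this
  rw [hsum.hasSum_iff_tendsto_nat]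
  refine Tendsto.congr (fun n ↦ (htel n).symm) ?_
  simpa using (tendsto_atTop_add_const_right _ x
    tendsto_natCast_atTop_atTop).inv_tendsto_atTop.const_sub x⁻¹

lemma realDigammaSeries_add_one {x : ℝ} (hx : 0 < x) :
    realDigammaSeries (x + 1) = realDigammaSeries x + 1 / x := by
  have hdiff := (summable_realDigammaSeries (add_pos hx one_pos)).tsum_sub
    (summable_realDigammaSeries hx)
  rw [← (hasSum_one_div_add_sub hx).tsum_eq, realDigammaSeries, realDigammaSeries,
    ← sub_eq_iff_eq_add', ← hdiff]
  congr with m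
  ring

lemma hasDerivAt_realGamma {x : ℝ} (hx : 0 < x) :
    HasDerivAt Real.Gamma (deriv Real.Gamma x) x :=
  (Real.differentiableAt_Gamma fun m ↦ by linarith [(m.cast_nonneg : (0 : ℝ) ≤ m)]).hasDerivAt

lemma digamma_ofReal {x : ℝ} (hx : 0 < x) : digamma x = (logDeriv Real.Gamma x : ℝ) := by
  have hcomplex := (differentiableAt_Gamma x
    (ne_neg_natCast_of_re_pos (by simpa using hx))).hasDerivAt.comp_ofReal
  have hreal := (hasDerivAt_realGamma hx).ofReal_comp
  simp only [← Gamma_ofReal] at hreal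
  rw [digamma_def, logDeriv_apply, hcomplex.unique hreal, Gamma_ofReal, logDeriv_apply, ofReal_div]

lemma monotoneOn_logDeriv_realGamma : MonotoneOn (logDeriv Real.Gamma) (Ioi 0) := by
  have hderiv {x : ℝ} (hx : 0 < x) :
      HasDerivAt (Real.log ∘ Real.Gamma) (logDeriv Real.Gamma x) x :=
    (hasDerivAt_realGamma hx).log (Real.Gamma_pos_of_pos hx).ne'
  exact (Real.convexOn_log_Gamma.monotoneOn_deriv fun x hx ↦ (hderiv hx).differentiableAt).congr
    fun x hx ↦ (hderiv hx).deriv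

lemma logDeriv_realGamma_add_one {x : ℝ} (hx : 0 < x) :
    logDeriv Real.Gamma (x + 1) = logDeriv Real.Gamma x + 1 / x := by
  have h := digamma_apply_add_one x (ne_neg_natCast_of_re_pos (by simpa using hx))
  rw [← ofReal_one, ← ofReal_add, digamma_ofReal (by linarith), digamma_ofReal hx] at h
  rw [one_div]
  exact_mod_cast h

/-- The difference `f - g` is 1-periodic, and it varies by at most `h y` on `[y, y + 1]`. -/
lemma eqOn_of_monotoneOn_of_add_one {f g h : ℝ → ℝ} (hf : MonotoneOn f (Ioi 0))
    (hg : MonotoneOn g (Ioi 0)) (hf' : ∀ x, 0 < x → f (x + 1) = f x + h x)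
    (hg' : ∀ x, 0 < x → g (x + 1) = g x + h x) (hh : Tendsto h atTop (𝓝 0)) (h1 : f 1 = g 1) :
    EqOn f g (Ioi 0) := by
  intro x (hx : 0 < x)
  have hper (n : ℕ) {y : ℝ} (hy : 0 < y) : f (y + n) - g (y + n) = f y - g y := by
    induction n with
    | zero => simp
    | succ n ih =>
      rw [Nat.cast_succ, ← add_assoc, hf' _ (by positivity), hg' _ (by positivity), ← ih]
      ring
  have hosc {y z : ℝ} (hy : 0 < y) (hyz : y ≤ z) (hzy : z ≤ y + 1) :
      |(f z - g z) - (f y - g y)| ≤ h y := by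
    have hz : 0 < z := hy.trans_le hyz
    have hy1 : 0 < y + 1 := hz.trans_le hzy
    rw [abs_le]
    constructor <;> linarith [hf hy hz hyz, hf hz hy1 hzy, hg hy hz hyz, hg hz hy1 hzy, hf' y hy,
      hg' y hy]
  have hbound (n : ℕ) : |(f x - g x) - (f 1 - g 1)| ≤ h (1 + ↑(⌊x⌋₊ + n)) := by
    rw [← hper (n + 1) hx, ← hper (⌊x⌋₊ + n) one_pos]
    apply hosc (by positivity)
    · push_cast; linarith [Nat.floor_le hx.le]
    · push_cast; linarith [Nat.lt_floor_add_one x]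
  have hlim : Tendsto (fun n : ℕ ↦ h (1 + ↑(⌊x⌋₊ + n))) atTop (𝓝 0) :=
    hh.comp <| tendsto_atTop_add_const_left _ _ <|
      tendsto_natCast_atTop_atTop.comp (tendsto_add_atTop_nat _ |>.congr fun n ↦ add_comm _ _)
  have := abs_nonpos_iff.mp (ge_of_tendsto' hlim hbound)
  linarith

lemma logDeriv_realGamma_eq {x : ℝ} (hx : 0 < x) :
    logDeriv Real.Gamma x = realDigammaSeries x - Real.eulerMascheroniConstant := by
  have hone : logDeriv Real.Gamma 1 = -Real.eulerMascheroniConstant := by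
    have := digamma_ofReal one_pos
    rw [ofReal_one, digamma_one] at this
    exact_mod_cast this.symm
  refine eqOn_of_monotoneOn_of_add_one (h := fun x ↦ 1 / x)
    (g := fun x ↦ realDigammaSeries x - Real.eulerMascheroniConstant)
    monotoneOn_logDeriv_realGamma (monotoneOn_realDigammaSeries.add_const _)
    (fun x ↦ logDeriv_realGamma_add_one)
    (fun x hx ↦ by rw [realDigammaSeries_add_one hx]; ring) ?_ ?_ hx
  · simpa only [one_div] using tendsto_inv_atTop_zero
  · rw [hone, realDigammaSeries_one, zero_sub]

lemma differentiableOn_digamma : DifferentiableOn ℂ digamma {z : ℂ | 0 < z.re} := by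
  have hΓ : DifferentiableOn ℂ Complex.Gamma {z : ℂ | 0 < z.re} := fun z hz ↦
    (differentiableAt_Gamma z (ne_neg_natCast_of_re_pos hz)).differentiableWithinAt
  exact (hΓ.deriv (isOpen_re_gt 0)).div hΓ fun z hz ↦ Gamma_ne_zero_of_re_pos hz

lemma digamma_eq_tsum {s : ℂ} (hs : 0 < s.re) :
    digamma s = ∑' m, digammaTerm s m - Real.eulerMascheroniConstant := by
  have hreal (x : ℝ) (hx : 0 < x) :
      digamma x = ∑' m, digammaTerm x m - Real.eulerMascheroniConstant := by
    rw [digamma_ofReal hx, logDeriv_realGamma_eq hx, tsum_digammaTerm_ofReal, ofReal_sub]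
  have hanalytic := differentiableOn_digamma.analyticOnNhd (isOpen_re_gt 0)
  refine hanalytic.eqOn_of_preconnected_of_frequently_eq
    (g := fun s ↦ ∑' m, digammaTerm s m - Real.eulerMascheroniConstant)
    ((differentiableOn_tsum_digammaTerm.sub_const _).analyticOnNhd (isOpen_re_gt 0))
    (convex_halfSpace_re_gt 0).isPreconnected (z₀ := 1) (by simp) ?_ hs
  have hlim : Tendsto (fun x : ℝ ↦ (x : ℂ)) (𝓝[>] 1) (𝓝[≠] 1) := by
    refine tendsto_nhdsWithin_iff.mpr
      ⟨(continuous_ofReal.tendsto' 1 1 ofReal_one).mono_left nhdsWithin_le_nhds, ?_⟩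
    filter_upwards [self_mem_nhdsWithin] with x hx using ofReal_ne_one.mpr (ne_of_gt hx)
  refine hlim.frequently (Eventually.frequently ?_)
  filter_upwards [self_mem_nhdsWithin] with x (hx : 1 < x) using hreal x (by linarith)

end DigammaSeries

section LogDerivXi

/-- The constant term of the expansion `logDeriv_xi` of `ξ'/ξ`. -/
noncomputable def xiConst : ℝ := -(Real.log Real.pi + Real.eulerMascheroniConstant) / 2

/-- The contribution `1 / (2 m + 2) - 1 / (s + 2 m + 2)` of the trivial zero `-2 m - 2` of `ζ` to
`ξ'/ξ`. -/
noncomputable def trivialZeroTerm (s : ℂ) (m : ℕ) : ℂ :=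
  1 / (2 * ((m : ℂ) + 1)) - 1 / (s + 2 * ((m : ℂ) + 1))

lemma trivialZeroTerm_eq (s : ℂ) (m : ℕ) :
    trivialZeroTerm s m = digammaTerm (s / 2 + 1) m / 2 := by
  rw [trivialZeroTerm, digammaTerm, sub_div, div_div, div_div, mul_comm ((m : ℂ) + 1) 2]
  congr 2
  ring

lemma half_add_one_re_pos {s : ℂ} (hs : 0 < s.re) : 0 < (s / 2 + 1).re := by
  rw [add_re, div_ofNat_re, one_re]
  linarith

lemma summable_trivialZeroTerm {s : ℂ} (hs : 0 < s.re) : Summable (trivialZeroTerm s) :=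
  ((summable_digammaTerm (half_add_one_re_pos hs)).div_const 2).congr fun m ↦
    (trivialZeroTerm_eq s m).symm

lemma logDeriv_Gammaℝ {s : ℂ} (hs : 0 < s.re) :
    logDeriv Gammaℝ s = digamma (s / 2) / 2 - Real.log Real.pi / 2 := by
  have hs2 : 0 < (s / 2).re := by rw [div_ofNat_re]; linarith
  have hexp : HasDerivAt (fun z : ℂ ↦ cexp (-z / 2 * Real.log Real.pi))
      (cexp (-s / 2 * Real.log Real.pi) * (-1 / 2 * Real.log Real.pi)) s :=
    (((hasDerivAt_id s).neg.div_const 2).mul_const _).cexp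
  have hhalf : HasDerivAt (fun z : ℂ ↦ z / 2) (1 / 2) s := (hasDerivAt_id s).div_const 2
  have hΓ : DifferentiableAt ℂ Complex.Gamma (s / 2) :=
    differentiableAt_Gamma _ (ne_neg_natCast_of_re_pos hs2)
  have heq : Gammaℝ = fun z ↦ cexp (-z / 2 * Real.log Real.pi) * Complex.Gamma (z / 2) := by
    ext z
    rw [Gammaℝ_def, cpow_def_of_ne_zero (ofReal_ne_zero.mpr Real.pi_ne_zero),
      ← ofReal_log Real.pi_pos.le, mul_comm (Real.log Real.pi : ℂ)]
  have hmul := logDeriv_mul (f := fun z : ℂ ↦ cexp (-z / 2 * Real.log Real.pi))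
    (g := Complex.Gamma ∘ fun z ↦ z / 2) s (exp_ne_zero _) (Gamma_ne_zero_of_re_pos hs2)
    hexp.differentiableAt (hΓ.comp s hhalf.differentiableAt)
  rw [heq]
  refine hmul.trans ?_
  rw [logDeriv_comp (f := Complex.Gamma) (g := fun z ↦ z / 2) hΓ hhalf.differentiableAt,
    hhalf.deriv, ← digamma_def, logDeriv_apply,
    hexp.deriv, mul_div_cancel_left₀ _ (exp_ne_zero _)]
  ring

lemma one_div_add_logDeriv_Gammaℝ {s : ℂ} (hs : 0 < s.re) :
    1 / s + logDeriv Gammaℝ s = xiConst + ∑' m, trivialZeroTerm s m := by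
  have hs2 : 0 < (s / 2).re := by rw [div_ofNat_re]; linarith
  have hstep := digamma_apply_add_one (s / 2) (ne_neg_natCast_of_re_pos hs2)
  rw [digamma_eq_tsum (half_add_one_re_pos hs), inv_div] at hstep
  simp only [trivialZeroTerm_eq, tsum_div_const]
  rw [logDeriv_Gammaℝ hs, xiConst]
  push_cast
  linear_combination -hstep / 2

lemma hasSum_vonMangoldt {s : ℂ} (hs : 1 < s.re) :
    HasSum (fun n : ℕ ↦ (Λ n : ℂ) * (n : ℂ) ^ (-s)) (-logDeriv riemannZeta s) := by
  have h := (ArithmeticFunction.LSeriesSummable_vonMangoldt hs).hasSum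
  rw [← LSeries, ArithmeticFunction.LSeries_vonMangoldt_eq_deriv_riemannZeta_div hs] at h
  rw [funext (LSeries.term_def₀ (f := fun n : ℕ ↦ (Λ n : ℂ)) (by simp) s)] at h
  rwa [logDeriv_apply, ← neg_div]

lemma logDeriv_xi {s : ℂ} (hs : 1 < s.re) :
    logDeriv xi s = 1 / (s - 1) + xiConst + ∑' m, trivialZeroTerm s m -
      ∑' n : ℕ, (Λ n : ℂ) * (n : ℂ) ^ (-s) := by
  have hs0 : 0 < s.re := by linarith
  have hs1 : s ≠ 1 := fun h ↦ by simp [h] at hs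
  have hζ := riemannZeta_ne_zero_of_one_lt_re hs
  have hΓ := Gammaℝ_ne_zero_of_re_pos hs0
  have hdζ := differentiableAt_riemannZeta hs1
  have hdΓ : DifferentiableAt ℂ Gammaℝ s := by
    simpa using (differentiable_Gammaℝ_inv s).fun_inv (inv_ne_zero hΓ)
  have hev : xi =ᶠ[𝓝 s] fun z ↦ z * ((z - 1) * (riemannZeta z * Gammaℝ z)) := by
    filter_upwards [(isOpen_re_gt 1).mem_nhds hs] with z (hz : 1 < z.re)
    rw [xi_eq (by linarith), riemannZeta₁_eq_mul fun h ↦ by simp [h] at hz]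
    ring
  have hid : logDeriv (fun z : ℂ ↦ z - 1) s = 1 / (s - 1) := by simp [logDeriv_apply]
  have hζΓ := logDeriv_mul s hζ hΓ hdζ hdΓ
  have hpole := logDeriv_mul (f := fun z ↦ z - 1) (g := fun z ↦ riemannZeta z * Gammaℝ z) s
    (sub_ne_zero.mpr hs1) (mul_ne_zero hζ hΓ) (by fun_prop) (by fun_prop)
  have hzero := logDeriv_mul (f := fun z ↦ z)
    (g := fun z ↦ (z - 1) * (riemannZeta z * Gammaℝ z)) s (ne_zero_of_re_pos hs0)
    (mul_ne_zero (sub_ne_zero.mpr hs1) (mul_ne_zero hζ hΓ)) (by fun_prop) (by fun_prop)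
  rw [(logDeriv_congr_nhds hev).eq_of_nhds, hzero, hpole, hζΓ, logDeriv_id', hid,
    (hasSum_vonMangoldt hs).tsum_eq]
  linear_combination one_div_add_logDeriv_Gammaℝ hs0

lemma norm_trivialZeroTerm_le {s : ℂ} (hs : 0 < s.re) (m : ℕ) :
    ‖trivialZeroTerm s m‖ ≤ √‖s‖ * (1 / ((m : ℝ) + 1) ^ (3 / 2 : ℝ)) := by
  have hs0 : 0 < ‖s‖ := norm_pos_iff.mpr (ne_zero_of_re_pos hs)
  have hone : (m : ℂ) + 1 ≠ 0 := m.cast_add_one_ne_zero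
  set a : ℝ := (m : ℝ) + 1 with ha
  have ha0 : 0 < a := by positivity
  have hge_a : a ≤ ‖s + 2 * ((m : ℂ) + 1)‖ := by
    have : (s + 2 * ((m : ℂ) + 1)).re = s.re + 2 * a := by simp [ha]
    linarith [re_le_norm (s + 2 * ((m : ℂ) + 1))]
  have hge_s : ‖s‖ ≤ ‖s + 2 * ((m : ℂ) + 1)‖ := by
    have h := norm_sub_ofReal_le_norm_add_ofReal (s := s + a) (c := a)
      (by rw [add_re, ofReal_re]; positivity) ha0.le
    rwa [add_sub_cancel_right, add_assoc, ← two_mul, ha, ofReal_add, ofReal_natCast,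
      ofReal_one] at h
  have hne : s + 2 * ((m : ℂ) + 1) ≠ 0 := norm_pos_iff.mp (ha0.trans_le hge_a)
  have hterm : trivialZeroTerm s m = s / (2 * ((m : ℂ) + 1) * (s + 2 * ((m : ℂ) + 1))) := by
    rw [trivialZeroTerm]; field_simp; ring
  have hge : √‖s‖ * √a ≤ ‖s + 2 * ((m : ℂ) + 1)‖ :=
    calc √‖s‖ * √a ≤ √‖s + 2 * ((m : ℂ) + 1)‖ * √‖s + 2 * ((m : ℂ) + 1)‖ := by gcongr
      _ = _ := Real.mul_self_sqrt (norm_nonneg _)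
  have hpow : a ^ (3 / 2 : ℝ) = a * √a := by
    rw [Real.sqrt_eq_rpow, show (3 / 2 : ℝ) = 1 + 1 / 2 by norm_num, Real.rpow_add ha0,
      Real.rpow_one]
  rw [hterm, norm_div, norm_mul, norm_mul, norm_natCast_add_one, norm_ofNat, hpow]
  calc ‖s‖ / (2 * a * ‖s + 2 * ((m : ℂ) + 1)‖) ≤ ‖s‖ / (a * (√‖s‖ * √a)) := by
        gcongr
        linarith
    _ = ‖s‖ / √‖s‖ * (1 / (a * √a)) := by field_simp
    _ = √‖s‖ * (1 / (a * √a)) := by rw [Real.div_sqrt]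

lemma summable_one_div_succ_rpow : Summable fun m : ℕ ↦ 1 / ((m : ℝ) + 1) ^ (3 / 2 : ℝ) := by
  simpa using (summable_nat_add_iff 1).mpr
    (Real.summable_one_div_nat_rpow (p := 3 / 2) |>.mpr (by norm_num))

lemma norm_vonMangoldt_mul_cpow_le {σ : ℝ} {s : ℂ} (hs : σ ≤ s.re) (n : ℕ) :
    ‖(Λ n : ℂ) * (n : ℂ) ^ (-s)‖ ≤ ‖(Λ n : ℂ) * (n : ℂ) ^ (-(σ : ℂ))‖ := by
  rcases n.eq_zero_or_pos with rfl | hn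
  · simp
  rw [norm_mul, norm_mul]
  gcongr ?_ * ?_
  exact norm_natCast_cpow_le_norm_natCast_cpow_of_pos hn (by simpa using hs)

lemma norm_tsum_vonMangoldt_le {σ : ℝ} {s : ℂ} (hσ : 1 < σ) (hs : σ ≤ s.re) :
    ‖∑' n : ℕ, (Λ n : ℂ) * (n : ℂ) ^ (-s)‖ ≤ ∑' n : ℕ, ‖(Λ n : ℂ) * (n : ℂ) ^ (-(σ : ℂ))‖ :=
  tsum_of_norm_bounded (hasSum_vonMangoldt (by simpa using hσ)).summable.norm.hasSum
    (norm_vonMangoldt_mul_cpow_le hs)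

lemma exists_norm_logDeriv_xi_le_of_two_le_re :
    ∃ K : ℝ, 0 < K ∧ ∀ s : ℂ, 2 ≤ s.re → ‖logDeriv xi s‖ ≤ K * (1 + √‖s‖) := by
  set S₁ : ℝ := ∑' m : ℕ, 1 / ((m : ℝ) + 1) ^ (3 / 2 : ℝ)
  set S₂ : ℝ := ∑' n : ℕ, ‖(Λ n : ℂ) * (n : ℂ) ^ (-((2 : ℝ) : ℂ))‖
  have hS₁ : 0 ≤ S₁ := tsum_nonneg fun m ↦ by positivity
  refine ⟨1 + |xiConst| + S₁ + S₂, by positivity, fun s hs ↦ ?_⟩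
  have hpole : ‖1 / (s - 1)‖ ≤ 1 := by
    rw [norm_div, norm_one]
    exact div_le_one_of_le₀ (one_le_norm_sub_one hs) (norm_nonneg _)
  have hgamma : ‖∑' m, trivialZeroTerm s m‖ ≤ √‖s‖ * S₁ :=
    tsum_of_norm_bounded (summable_one_div_succ_rpow.hasSum.mul_left _)
      (norm_trivialZeroTerm_le (by linarith))
  have hconst : ‖(xiConst : ℂ)‖ = |xiConst| := by rw [norm_real, Real.norm_eq_abs]
  rw [logDeriv_xi (by linarith)]
  calc _ ≤ ‖1 / (s - 1)‖ + ‖(xiConst : ℂ)‖ + ‖∑' m, trivialZeroTerm s m‖ +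
        ‖∑' n : ℕ, (Λ n : ℂ) * (n : ℂ) ^ (-s)‖ :=
        (norm_sub_le _ _).trans (by gcongr; exact norm_add₃_le)
    _ ≤ 1 + |xiConst| + √‖s‖ * S₁ + S₂ := by
        gcongr
        exacts [hconst.le, norm_tsum_vonMangoldt_le one_lt_two hs]
    _ ≤ (1 + |xiConst| + S₂) * (1 + √‖s‖) + S₁ * (1 + √‖s‖) := by
        have : 0 ≤ (1 + |xiConst| + S₂) * √‖s‖ := by positivity
        linarith
    _ = _ := by ring

lemma differentiableOn_logDeriv_xi (hRH : RiemannHypothesis) :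
    DifferentiableOn ℂ (logDeriv xi) {s : ℂ | 1 / 2 < s.re} :=
  (differentiable_xi.differentiableOn.deriv (isOpen_re_gt _)).div differentiable_xi.differentiableOn
    fun _ hz ↦ xi_ne_zero hRH hz

lemma norm_le_of_re_nonneg {f : ℂ → ℂ} {z₀ z : ℂ} {r R : ℝ} (hr : 0 ≤ r) (hrR : r < R)
    (hf : DifferentiableOn ℂ f (Metric.ball z₀ R)) (hre : ∀ w ∈ Metric.ball z₀ R, 0 ≤ (f w).re)
    (hz : ‖z - z₀‖ ≤ r) : ‖f z‖ ≤ (2 * r + ‖f z₀‖ * (R + r)) / (R - r) := by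
  have hR : 0 < R := hr.trans_lt hrR
  have hmaps : MapsTo (fun w ↦ z₀ + w) (Metric.ball 0 R) (Metric.ball z₀ R) := fun w hw ↦ by
    simpa using hw
  have h := borelCaratheodory (f := fun w ↦ -f (z₀ + w)) (z := z - z₀) one_pos
    (hf.comp (by fun_prop) hmaps).neg
    (fun w hw ↦ by
      simpa using (neg_nonpos.mpr (hre _ (hmaps hw))).trans zero_le_one)
    hR (by simpa using hz.trans_lt hrR)
  simp only [norm_neg, add_zero, mul_one, add_sub_cancel, ← add_div] at h
  exact h.trans (by gcongr)

lemma exists_norm_logDeriv_xi_le (hRH : RiemannHypothesis) {δ : ℝ} (hδ : 0 < δ) :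
    ∃ K : ℝ, 0 < K ∧ ∀ s : ℂ, 1 / 2 + δ ≤ s.re → s.re ≤ 5 / 2 + δ →
      ‖logDeriv xi s‖ ≤ K * (1 + √(‖s‖ + 2)) := by
  obtain ⟨K, hK, hright⟩ := exists_norm_logDeriv_xi_le_of_two_le_re
  refine ⟨(4 + K * (4 + δ)) / δ, by positivity, fun s hs hs' ↦ ?_⟩
  set z₀ : ℂ := s + (5 / 2 + δ - s.re : ℝ) with hz₀
  have hz₀re : z₀.re = 5 / 2 + δ := by simp [hz₀]
  have hdist : ‖s - z₀‖ ≤ 2 := by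
    rw [hz₀, sub_add_cancel_left, norm_neg, norm_real, Real.norm_of_nonneg (by linarith)]
    linarith
  have hball : Metric.ball z₀ (2 + δ) ⊆ {w : ℂ | 1 / 2 < w.re} := fun w hw ↦ by
    have h := (abs_lt.mp ((abs_re_le_norm (w - z₀)).trans_lt (mem_ball_iff_norm.mp hw))).1
    rw [sub_re, hz₀re] at h
    simp only [mem_ofPred_eq]
    linarith
  have hbc := norm_le_of_re_nonneg zero_le_two (by linarith : 2 < 2 + δ)
    ((differentiableOn_logDeriv_xi hRH).mono hball)
    (fun w hw ↦ re_logDeriv_xi_nonneg hRH (hball hw)) hdist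
  have hz₀le : ‖logDeriv xi z₀‖ ≤ K * (1 + √(‖s‖ + 2)) := by
    refine (hright z₀ (by linarith)).trans ?_
    gcongr
    linarith [norm_sub_norm_le z₀ s, norm_sub_rev s z₀]
  have hsqrt := Real.sqrt_nonneg (‖s‖ + 2)
  calc ‖logDeriv xi s‖ ≤ (2 * 2 + ‖logDeriv xi z₀‖ * (2 + δ + 2)) / (2 + δ - 2) := hbc
    _ = (4 + ‖logDeriv xi z₀‖ * (4 + δ)) / δ := by ring_nf
    _ ≤ (4 * (1 + √(‖s‖ + 2)) + K * (1 + √(‖s‖ + 2)) * (4 + δ)) / δ := by gcongr; linarith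
    _ = _ := by ring

end LogDerivXi

section Tent

/-- The tent function of height and half-width `κ`, the test function whose two-sided Laplace
transform is `tentTransform κ`. -/
noncomputable def tent (κ u : ℝ) : ℝ := max (κ - |u|) 0

variable {κ : ℝ}

lemma tent_nonneg (κ u : ℝ) : 0 ≤ tent κ u := le_max_right _ _

@[fun_prop]
lemma continuous_tent (κ : ℝ) : Continuous (tent κ) := by
  unfold tent
  fun_prop

lemma tent_neg (κ u : ℝ) : tent κ (-u) = tent κ u := by
  rw [tent, tent, abs_neg]

lemma tent_eq_zero_of_le_abs {u : ℝ} (h : κ ≤ |u|) : tent κ u = 0 :=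
  max_eq_right (sub_nonpos.mpr h)

lemma tent_eq_sub_of_mem_Icc {u : ℝ} (hu : u ∈ Icc 0 κ) : tent κ u = κ - u := by
  rw [tent, abs_of_nonneg hu.1, max_eq_left (sub_nonneg.mpr hu.2)]

lemma tent_le (hκ : 0 ≤ κ) (u : ℝ) : tent κ u ≤ κ :=
  max_le (sub_le_self _ (abs_nonneg u)) hκ

lemma hasCompactSupport_tent (κ : ℝ) : HasCompactSupport (tent κ) :=
  .intro isCompact_Icc fun _ hu ↦ tent_eq_zero_of_le_abs (not_lt.mp fun h ↦ hu (abs_le.mp h.le))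

variable {E : Type*} [NormedAddCommGroup E] [NormedSpace ℝ E] {f : ℝ → E}

lemma integrable_tent_smul (κ : ℝ) (hf : Continuous f) : Integrable fun u ↦ tent κ u • f u :=
  Continuous.integrable_of_hasCompactSupport (by fun_prop) (hasCompactSupport_tent κ).smul_right

lemma integral_Ioi_tent_smul (hκ : 0 ≤ κ) (f : ℝ → E) :
    ∫ u in Ioi (0 : ℝ), tent κ u • f u = ∫ u in (0 : ℝ)..κ, (κ - u) • f u := by
  have hzero : ∀ u ∈ Ioi 0 \ Ioc 0 κ, tent κ u • f u = 0 := fun u ⟨hpos, hu⟩ ↦ by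
    have hκu : κ ≤ |u| := (not_le.mp fun h ↦ hu ⟨hpos, h⟩).le.trans (le_abs_self u)
    rw [tent_eq_zero_of_le_abs hκu, zero_smul]
  rw [setIntegral_eq_of_subset_of_forall_sdiff_eq_zero measurableSet_Ioi Ioc_subset_Ioi_self hzero,
    intervalIntegral.integral_of_le hκ]
  exact setIntegral_congr_fun measurableSet_Ioc fun u hu ↦ by
    simp only [tent_eq_sub_of_mem_Icc (Ioc_subset_Icc_self hu)]

lemma integral_tent_smul (hκ : 0 ≤ κ) (hf : Continuous f) :
    ∫ u, tent κ u • f u = ∫ u in (0 : ℝ)..κ, (κ - u) • (f u + f (-u)) := by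
  have hint := integrable_tent_smul κ hf
  have hneg : ∫ u in Iic (0 : ℝ), tent κ u • f u = ∫ u in Ioi (0 : ℝ), tent κ u • f (-u) := by
    simpa only [tent_neg, neg_neg, neg_zero] using
      (integral_comp_neg_Ioi 0 fun u ↦ tent κ u • f u).symm
  simp only [smul_add]
  rw [← intervalIntegral.integral_Iic_add_Ioi hint.integrableOn hint.integrableOn, hneg,
    integral_Ioi_tent_smul hκ, integral_Ioi_tent_smul hκ, add_comm,
    ← intervalIntegral.integral_add (Continuous.intervalIntegrable (by fun_prop) _ _)
      (Continuous.intervalIntegrable (by fun_prop) _ _)]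

end Tent

section TentTransform

/-- The entire function `(exp w - 1) / w`, with value `1` at `0`. -/
noncomputable def expSlope (w : ℂ) : ℂ := dslope cexp 0 w

@[fun_prop]
lemma differentiable_expSlope : Differentiable ℂ expSlope :=
  differentiableOn_univ.mp ((differentiableOn_dslope univ_mem).mpr
    Complex.differentiable_exp.differentiableOn)

lemma mul_expSlope (w : ℂ) : w * expSlope w = cexp w - 1 := by
  simpa [expSlope] using sub_smul_dslope cexp 0 w

lemma expSlope_conj (w : ℂ) : expSlope (starRingEnd ℂ w) = starRingEnd ℂ (expSlope w) := by
  rcases eq_or_ne w 0 with rfl | hw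
  · simp [expSlope]
  · apply mul_left_cancel₀ ((map_ne_zero (starRingEnd ℂ)).mpr hw)
    rw [mul_expSlope, ← map_mul, mul_expSlope, map_sub, map_one, Complex.exp_conj]

/-- The two-sided Laplace transform `∫ tent κ u * exp (w * u)` of the tent function. Written with
`expSlope` rather than as `(exp (κ w) + exp (-κ w) - 2) / w ^ 2`, it is visibly entire. -/
noncomputable def tentTransform (κ : ℝ) (w : ℂ) : ℂ :=
  κ ^ 2 * (expSlope (κ * w) * expSlope (-(κ * w)))

/-- The function `tent` combined with its translates so that its transform `tentDiffTransform κ L`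
is `2 - exp (L w) - exp (-L w)` times that of the tent. -/
noncomputable def tentDiff (κ L u : ℝ) : ℝ := 2 * tent κ u - tent κ (u - L) - tent κ (u + L)

/-- The two-sided Laplace transform of `tentDiff κ L`. -/
noncomputable def tentDiffTransform (κ L : ℝ) (w : ℂ) : ℂ :=
  tentTransform κ w * ((1 - cexp (L * w)) * (1 - cexp (-(L * w))))

variable {κ L : ℝ} {w : ℂ}

@[fun_prop]
lemma continuous_tentDiff (κ L : ℝ) : Continuous (tentDiff κ L) := by
  unfold tentDiff
  fun_prop

@[fun_prop]
lemma differentiable_tentTransform (κ : ℝ) : Differentiable ℂ (tentTransform κ) := by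
  unfold tentTransform
  fun_prop

@[fun_prop]
lemma differentiable_tentDiffTransform (κ L : ℝ) : Differentiable ℂ (tentDiffTransform κ L) := by
  unfold tentDiffTransform
  fun_prop

lemma tentTransform_eq (κ : ℝ) (hw : w ≠ 0) :
    tentTransform κ w = (cexp (κ * w) + cexp (-(κ * w)) - 2) / w ^ 2 := by
  rw [eq_div_iff (pow_ne_zero 2 hw)]
  have hmul : cexp (κ * w) * cexp (-(κ * w)) = 1 := by
    rw [← Complex.exp_add, add_neg_cancel, exp_zero]
  calc tentTransform κ w * w ^ 2
      = -((κ * w * expSlope (κ * w)) * (-(κ * w) * expSlope (-(κ * w)))) := by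
        unfold tentTransform; ring
    _ = _ := by rw [mul_expSlope, mul_expSlope]; linear_combination -hmul

lemma exists_tentDiffTransform_eq_ofReal (κ L t : ℝ) :
    ∃ r : ℝ, 0 ≤ r ∧ tentDiffTransform κ L (t * I) = r := by
  refine ⟨normSq (κ * expSlope (κ * (t * I)) * (1 - cexp (L * (t * I)))), normSq_nonneg _, ?_⟩
  have hneg (a : ℝ) : -((a : ℂ) * (t * I)) = starRingEnd ℂ (a * (t * I)) := by simp
  rw [← Complex.mul_conj, tentDiffTransform, tentTransform, hneg, hneg, expSlope_conj,
    Complex.exp_conj]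
  simp only [map_mul, map_sub, map_one, conj_ofReal]
  ring

lemma norm_exp_ofReal_mul_le {a : ℝ} (ha : 0 ≤ a) {w : ℂ} (hw : |w.re| ≤ 2) :
    ‖cexp (a * w)‖ ≤ Real.exp (2 * a) := by
  rw [Complex.norm_exp, re_ofReal_mul, mul_comm 2 a]
  gcongr
  exact (abs_le.mp hw).2

lemma norm_exp_neg_ofReal_mul_le {a : ℝ} (ha : 0 ≤ a) {w : ℂ} (hw : |w.re| ≤ 2) :
    ‖cexp (-(a * w))‖ ≤ Real.exp (2 * a) := by
  rw [← mul_neg]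
  exact norm_exp_ofReal_mul_le ha (by rwa [neg_re, abs_neg])

lemma norm_tentTransform_le (hκ : 0 ≤ κ) (hw : w ≠ 0) (hre : |w.re| ≤ 2) :
    ‖tentTransform κ w‖ ≤ (2 * Real.exp (2 * κ) + 2) / ‖w‖ ^ 2 := by
  rw [tentTransform_eq κ hw, norm_div, norm_pow]
  gcongr
  calc ‖cexp (κ * w) + cexp (-(κ * w)) - 2‖ ≤ ‖cexp (κ * w)‖ + ‖cexp (-(κ * w))‖ + ‖(2 : ℂ)‖ :=
        (norm_sub_le _ _).trans (by gcongr; exact norm_add_le _ _)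
    _ ≤ Real.exp (2 * κ) + Real.exp (2 * κ) + 2 := by
        gcongr
        exacts [norm_exp_ofReal_mul_le hκ hre, norm_exp_neg_ofReal_mul_le hκ hre,
          Complex.norm_two.le]
    _ = _ := by ring

lemma norm_tentDiffTransform_le (hκ : 0 ≤ κ) (hL : 0 ≤ L) (hw : w ≠ 0) (hre : |w.re| ≤ 2) :
    ‖tentDiffTransform κ L w‖ ≤
      (2 * Real.exp (2 * κ) + 2) * (1 + Real.exp (2 * L)) ^ 2 / ‖w‖ ^ 2 := by
  have hone {z : ℂ} (hz : ‖z‖ ≤ Real.exp (2 * L)) : ‖1 - z‖ ≤ 1 + Real.exp (2 * L) :=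
    (norm_sub_le _ _).trans (by rw [norm_one]; gcongr)
  rw [tentDiffTransform, norm_mul, norm_mul, sq, ← div_mul_eq_mul_div]
  gcongr
  exacts [norm_tentTransform_le hκ hw hre, hone (norm_exp_ofReal_mul_le hL hre),
    hone (norm_exp_neg_ofReal_mul_le hL hre)]

lemma intervalIntegral_sub_mul_exp (κ : ℝ) (hw : w ≠ 0) :
    ∫ u in (0 : ℝ)..κ, ((κ : ℂ) - u) * cexp (w * u) = (cexp (κ * w) - 1) / w ^ 2 - κ / w := by
  have hderiv (u : ℝ) : HasDerivAt
      (fun u : ℝ ↦ ((κ : ℂ) - u) * (cexp (w * u) / w) + cexp (w * u) / w ^ 2)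
      (((κ : ℂ) - u) * cexp (w * u)) u := by
    have hid : HasDerivAt (fun u : ℝ ↦ (u : ℂ)) 1 u := (hasDerivAt_id (u : ℂ)).comp_ofReal
    have hexp : HasDerivAt (fun u : ℝ ↦ cexp (w * u)) (cexp (w * u) * (w * 1)) u :=
      (hid.const_mul w).cexp
    refine (((hid.const_sub (κ : ℂ)).mul (hexp.div_const w)).add
      (hexp.div_const (w ^ 2))).congr_deriv ?_
    field_simp
    ring
  rw [intervalIntegral.integral_eq_sub_of_hasDerivAt (fun u _ ↦ hderiv u)
    (Continuous.intervalIntegrable (by fun_prop) _ _), mul_comm (κ : ℂ) w]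
  simp only [sub_self, zero_mul, zero_add, ofReal_zero, mul_zero, exp_zero, sub_zero]
  field_simp
  ring

lemma integral_tent_mul_exp (hκ : 0 ≤ κ) (hw : w ≠ 0) :
    ∫ u : ℝ, (tent κ u : ℂ) * cexp (w * u) = tentTransform κ w := by
  have hhalves := integral_tent_smul hκ (f := fun u : ℝ ↦ cexp (w * u)) (by fun_prop)
  simp only [real_smul, ofReal_sub, ofReal_neg, mul_neg, ← neg_mul, mul_add] at hhalves
  rw [hhalves, intervalIntegral.integral_add (Continuous.intervalIntegrable (by fun_prop) _ _)
      (Continuous.intervalIntegrable (by fun_prop) _ _),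
    intervalIntegral_sub_mul_exp κ hw, intervalIntegral_sub_mul_exp κ (neg_ne_zero.mpr hw),
    tentTransform_eq κ hw, mul_neg]
  field_simp
  ring

end TentTransform

section VerticalLine

/-- The parametrisation `t ↦ 2 + i t` of the vertical line along which the transforms are
integrated. -/
noncomputable def lineTwo (t : ℝ) : ℂ := 2 + t * I

@[simp]
lemma lineTwo_re (t : ℝ) : (lineTwo t).re = 2 := by simp [lineTwo]

@[simp]
lemma lineTwo_im (t : ℝ) : (lineTwo t).im = t := by simp [lineTwo]

lemma abs_lineTwo_re_le (t : ℝ) : |(lineTwo t).re| ≤ 2 := by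
  rw [lineTwo_re, abs_two]

lemma two_le_norm_lineTwo (t : ℝ) : 2 ≤ ‖lineTwo t‖ := by
  simpa using re_le_norm (lineTwo t)

lemma lineTwo_ne_zero (t : ℝ) : lineTwo t ≠ 0 :=
  norm_pos_iff.mp (two_pos.trans_le (two_le_norm_lineTwo t))

@[fun_prop]
lemma continuous_lineTwo : Continuous lineTwo := by
  unfold lineTwo
  fun_prop

lemma integrable_norm_lineTwo_rpow_neg {r : ℝ} (hr : 1 < r) :
    Integrable fun t : ℝ ↦ ‖lineTwo t‖ ^ (-r) := by
  refine (integrable_rpow_neg_one_add_norm_sq (E := ℝ) (r := r) (by simpa using hr)).mono'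
    ?_ (.of_forall fun t ↦ ?_)
  · exact (Continuous.rpow_const (by fun_prop) fun t ↦
      .inl (norm_ne_zero_iff.mpr (lineTwo_ne_zero t))).aestronglyMeasurable
  · have hpow : ‖lineTwo t‖ ^ (-r) = (‖lineTwo t‖ ^ 2) ^ (-r / 2) := by
      rw [← Real.rpow_natCast_mul (norm_nonneg _)]
      push_cast
      ring_nf
    have hbase : 1 + ‖t‖ ^ 2 ≤ ‖lineTwo t‖ ^ 2 := by
      rw [Complex.sq_norm, normSq_apply, lineTwo_re, lineTwo_im, Real.norm_eq_abs, sq_abs]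
      linarith [sq t]
    rw [Real.norm_of_nonneg (by positivity), hpow]
    exact Real.rpow_le_rpow_of_nonpos (by positivity) hbase (by linarith)

lemma integrable_of_norm_le_div_norm_lineTwo_sq {f : ℝ → ℂ} (hf : Continuous f) {K : ℝ}
    (h : ∀ t, ‖f t‖ ≤ K / ‖lineTwo t‖ ^ 2) : Integrable f := by
  refine ((integrable_norm_lineTwo_rpow_neg one_lt_two).const_mul K).mono' hf.aestronglyMeasurable
    (.of_forall fun t ↦ (h t).trans_eq ?_)
  rw [Real.rpow_neg (norm_nonneg _), Real.rpow_two, div_eq_mul_inv]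

variable {κ L : ℝ}

lemma integrable_tentTransform_lineTwo (hκ : 0 ≤ κ) :
    Integrable fun t : ℝ ↦ tentTransform κ (lineTwo t) :=
  integrable_of_norm_le_div_norm_lineTwo_sq
    ((differentiable_tentTransform κ).continuous.comp continuous_lineTwo) fun t ↦
    norm_tentTransform_le hκ (lineTwo_ne_zero t) (abs_lineTwo_re_le t)

lemma integrable_tentDiffTransform_lineTwo (hκ : 0 ≤ κ) (hL : 0 ≤ L) :
    Integrable fun t : ℝ ↦ tentDiffTransform κ L (lineTwo t) :=
  integrable_of_norm_le_div_norm_lineTwo_sq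
    ((differentiable_tentDiffTransform κ L).continuous.comp continuous_lineTwo) fun t ↦
    norm_tentDiffTransform_le hκ hL (lineTwo_ne_zero t) (abs_lineTwo_re_le t)

lemma integrable_mul_exp_neg_lineTwo {f : ℝ → ℂ} (hf : Integrable f) (v : ℝ) :
    Integrable fun t : ℝ ↦ f t * cexp (-(v * lineTwo t)) :=
  hf.mul_bdd (c := Real.exp (-(v * 2))) (Continuous.aestronglyMeasurable (by fun_prop))
    (.of_forall fun t ↦ by
      rw [Complex.norm_exp, neg_re, re_ofReal_mul, lineTwo_re])

end VerticalLine

section Inversion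

variable {κ : ℝ}

lemma fourier_tent_mul_exp (hκ : 0 < κ) (ξ : ℝ) :
    𝓕 (fun u : ℝ ↦ (tent κ u : ℂ) * cexp (2 * u)) ξ =
      tentTransform κ (lineTwo (-2 * Real.pi * ξ)) := by
  rw [Real.fourier_real_eq_integral_exp_smul, ← integral_tent_mul_exp hκ.le (lineTwo_ne_zero _)]
  congr 1 with u
  rw [smul_eq_mul, mul_left_comm, ← Complex.exp_add, lineTwo]
  push_cast
  ring_nf

lemma integral_tentTransform_lineTwo_mul_exp (hκ : 0 < κ) (v : ℝ) :
    ∫ t : ℝ, tentTransform κ (lineTwo t) * cexp (-(v * lineTwo t)) =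
      2 * Real.pi * tent κ v := by
  set f : ℝ → ℂ := fun u ↦ (tent κ u : ℂ) * cexp (2 * u) with hf
  set h : ℝ → ℂ := fun t ↦ tentTransform κ (lineTwo t) * cexp (-(v * lineTwo t)) with hh
  have hFourier : 𝓕 f = fun ξ : ℝ ↦ tentTransform κ (lineTwo (-2 * Real.pi * ξ)) :=
    funext (fourier_tent_mul_exp hκ)
  have hFint : Integrable (𝓕 f) := by
    rw [hFourier]
    exact (integrable_tentTransform_lineTwo hκ.le).comp_mul_left' (by simp [Real.pi_ne_zero])
  have htent : Integrable f := by
    simpa only [real_smul] using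
      integrable_tent_smul κ (f := fun u : ℝ ↦ cexp (2 * u)) (by fun_prop)
  have hinv : 𝓕⁻ (𝓕 f) v = f v := congrFun
    (Continuous.fourierInv_fourier_eq (by fun_prop) htent hFint) v
  have hscaled : ∫ ξ : ℝ, h (-2 * Real.pi * ξ) = tent κ v := by
    calc ∫ ξ : ℝ, h (-2 * Real.pi * ξ) = cexp (-(2 * v)) * 𝓕⁻ (𝓕 f) v := by
          rw [Real.fourierInv_eq', hFourier, ← integral_const_mul]
          congr 1 with ξ
          simp only [hh, smul_eq_mul, RCLike.inner_apply, conj_trivial]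
          rw [mul_comm (tentTransform _ _), ← mul_assoc, ← Complex.exp_add]
          congr 2
          simp only [lineTwo]
          push_cast
          ring
      _ = tent κ v := by
          rw [hinv, hf, mul_left_comm, ← Complex.exp_add, neg_add_cancel, exp_zero, mul_one]
  rw [Measure.integral_comp_mul_left, abs_inv, abs_mul, abs_neg, abs_two,
    abs_of_pos Real.pi_pos, inv_smul_eq_iff₀ (by positivity), real_smul] at hscaled
  rw [hscaled]
  push_cast
  ring

end Inversion

section ContourShift

variable {H : ℂ → ℂ}

lemma intervalIntegral_lineTwo_eq (hH : ∀ w : ℂ, 0 ≤ w.re → DifferentiableAt ℂ H w) (T : ℝ) :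
    ∫ y in (-T)..T, H (lineTwo y) = (∫ y in (-T)..T, H (y * I)) +
      I * ((∫ x in (0 : ℝ)..2, H (x + (-T : ℝ) * I)) - ∫ x in (0 : ℝ)..2, H (x + T * I)) := by
  have hrect := integral_boundary_rect_eq_zero_of_differentiableOn H (-T * I) (2 + T * I)
    fun w hw ↦ (hH w ?_).differentiableWithinAt
  · simp only [neg_re, neg_im, mul_re, mul_im, add_re, add_im, ofReal_re, ofReal_im, I_re, I_im,
      neg_mul, mul_zero, mul_one, sub_zero, add_zero, neg_zero, zero_add, re_ofNat,
      im_ofNat, ofReal_zero, ofReal_neg, ofReal_ofNat, smul_eq_mul] at hrect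
    simp only [lineTwo, ofReal_neg, neg_mul]
    linear_combination -I * hrect +
      ((∫ y in (-T)..T, H (2 + y * I)) - ∫ y in (-T)..T, H (y * I)) * I_mul_I
  · have hre := (mem_reProdIm.mp hw).1
    simp only [neg_re, mul_re, ofReal_re, I_re, neg_mul, mul_zero, ofReal_im, I_im, mul_one,
      sub_zero, neg_zero, add_re, re_ofNat, add_zero, uIcc_of_le zero_le_two] at hre
    exact hre.1

lemma norm_integral_horizontal_le {K : ℝ} (hK : 0 ≤ K)
    (hH : ∀ w : ℂ, 0 ≤ w.re → w.re ≤ 2 → 1 ≤ ‖w‖ → ‖H w‖ ≤ K / ‖w‖) {y : ℝ} (hy : 1 ≤ |y|) :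
    ‖∫ x in (0 : ℝ)..2, H (x + y * I)‖ ≤ 2 * K / |y| := by
  have hedge : ∀ x ∈ uIoc (0 : ℝ) 2, ‖H (x + y * I)‖ ≤ K / |y| := fun x hx ↦ by
    rw [uIoc_of_le zero_le_two] at hx
    have hre : ((x : ℂ) + y * I).re = x := by simp
    have him : |y| ≤ ‖(x : ℂ) + y * I‖ := by simpa using abs_im_le_norm ((x : ℂ) + y * I)
    exact (hH _ (hre.symm ▸ hx.1.le) (hre.symm ▸ hx.2) (hy.trans him)).trans (by gcongr)
  refine (intervalIntegral.norm_integral_le_of_norm_le_const hedge).trans_eq ?_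
  rw [sub_zero, abs_two]
  ring

lemma re_integral_lineTwo_nonneg (hH : ∀ w : ℂ, 0 ≤ w.re → DifferentiableAt ℂ H w) {K : ℝ}
    (hK : 0 ≤ K) (hdecay : ∀ w : ℂ, 0 ≤ w.re → w.re ≤ 2 → 1 ≤ ‖w‖ → ‖H w‖ ≤ K / ‖w‖)
    (hint : Integrable fun t ↦ H (lineTwo t)) (hnonneg : ∀ y : ℝ, 0 ≤ (H (y * I)).re) :
    0 ≤ (∫ t, H (lineTwo t)).re := by
  have hlim := (continuous_re.tendsto _).comp
    (intervalIntegral_tendsto_integral hint tendsto_neg_atTop_atBot tendsto_id)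
  have hzero : Tendsto (fun T : ℝ ↦ -(4 * K / T)) atTop (𝓝 0) := by
    simpa using (tendsto_const_nhds.div_atTop tendsto_id :
      Tendsto (fun T : ℝ ↦ 4 * K / T) atTop (𝓝 0)).neg
  refine le_of_tendsto_of_tendsto hzero hlim ?_
  filter_upwards [eventually_ge_atTop 1] with T hT
  have hT0 : 0 ≤ T := zero_le_one.trans hT
  have hTabs : |T| = T := abs_of_nonneg hT0
  have hmid : 0 ≤ (∫ y in (-T)..T, H (y * I)).re := by
    have hcont : Continuous fun y : ℝ ↦ H (y * I) := continuous_iff_continuousAt.mpr fun y ↦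
      ContinuousAt.comp (f := fun y : ℝ ↦ (y * I : ℂ)) (hH _ (by simp)).continuousAt (by fun_prop)
    have hre := reCLM.intervalIntegral_comp_comm (hcont.intervalIntegrable (μ := volume) (-T) T)
    simp only [reCLM_apply] at hre
    rw [← hre]
    exact intervalIntegral.integral_nonneg (by linarith) fun y _ ↦ hnonneg y
  have hbot := norm_integral_horizontal_le hK hdecay (y := -T) (by rwa [abs_neg, hTabs])
  have htop := norm_integral_horizontal_le hK hdecay (y := T) (by rwa [hTabs])
  rw [abs_neg, hTabs] at hbot
  rw [hTabs] at htop
  simp only [Function.comp_apply, id]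
  rw [intervalIntegral_lineTwo_eq hH, add_re]
  set bot := ∫ x in (0 : ℝ)..2, H (x + (-T : ℝ) * I)
  set top := ∫ x in (0 : ℝ)..2, H (x + T * I)
  have hedges : ‖I * (bot - top)‖ ≤ 2 * K / T + 2 * K / T := by
    rw [norm_mul, norm_I, one_mul]
    exact (norm_sub_le _ _).trans (add_le_add hbot htop)
  have hsplit : 4 * K / T = 2 * K / T + 2 * K / T := by ring
  linarith [(abs_le.mp (abs_re_le_norm (I * (bot - top)))).1]

end ContourShift

section ContourIntegrand

variable {κ L δ : ℝ}

/-- The function whose integral over `Re w = 2` is evaluated by the explicit formula and, after a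
shift to `Re w = 0`, is seen to be nonnegative. The offset `δ > 0` keeps `1 / 2 + δ + w` away from
the zeros of `xi`. -/
noncomputable def contourIntegrand (κ L δ : ℝ) (w : ℂ) : ℂ :=
  logDeriv xi (1 / 2 + δ + w) * tentDiffTransform κ L w

lemma half_add_add_re (δ : ℝ) (w : ℂ) : (1 / 2 + δ + w).re = 1 / 2 + δ + w.re := by
  simp

lemma sqrt_norm_half_add_add_le (hδ : 0 < δ) {w : ℂ} (hw : 1 ≤ ‖w‖) :
    √(‖1 / 2 + δ + w‖ + 2) ≤ √(4 + δ) * √‖w‖ := by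
  rw [← Real.sqrt_mul (by positivity)]
  have hhalf : ‖(1 / 2 + δ : ℂ)‖ = 1 / 2 + δ := by
    rw [← ofReal_ofNat, ← ofReal_one, ← ofReal_div, ← ofReal_add, norm_real,
      Real.norm_of_nonneg (by positivity)]
  have hadd := norm_add_le (1 / 2 + δ : ℂ) w
  gcongr
  nlinarith

lemma sqrt_div_sq_eq_rpow {a : ℝ} (ha : 0 < a) : √a / a ^ 2 = a ^ (-(3 / 2) : ℝ) := by
  rw [Real.sqrt_eq_rpow, ← Real.rpow_natCast, ← Real.rpow_sub ha]
  norm_num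

lemma differentiableAt_contourIntegrand (hRH : RiemannHypothesis) (hδ : 0 < δ) (κ L : ℝ) {w : ℂ}
    (hw : 0 ≤ w.re) : DifferentiableAt ℂ (contourIntegrand κ L δ) w := by
  have hmem : 1 / 2 + δ + w ∈ {z : ℂ | 1 / 2 < z.re} := by
    rw [mem_ofPred_eq, half_add_add_re]
    linarith
  have hG : DifferentiableAt ℂ (logDeriv xi) (1 / 2 + δ + w) :=
    (differentiableOn_logDeriv_xi hRH).differentiableAt ((isOpen_re_gt _).mem_nhds hmem)
  exact (hG.comp w (by fun_prop)).mul (differentiable_tentDiffTransform κ L w)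

lemma exists_norm_contourIntegrand_le (hRH : RiemannHypothesis) (hδ : 0 < δ) (hκ : 0 ≤ κ)
    (hL : 0 ≤ L) : ∃ K : ℝ, 0 < K ∧ ∀ w : ℂ, 0 ≤ w.re → w.re ≤ 2 → 1 ≤ ‖w‖ →
      ‖contourIntegrand κ L δ w‖ ≤ K * ‖w‖ ^ (-(3 / 2) : ℝ) := by
  obtain ⟨K, hK, hxi⟩ := exists_norm_logDeriv_xi_le hRH hδ
  set C := (2 * Real.exp (2 * κ) + 2) * (1 + Real.exp (2 * L)) ^ 2
  refine ⟨K * (1 + √(4 + δ)) * C, by positivity, fun w hw hw' hnorm ↦ ?_⟩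
  have hpos : 0 < ‖w‖ := one_pos.trans_le hnorm
  have hlog : ‖logDeriv xi (1 / 2 + δ + w)‖ ≤ K * (1 + √(4 + δ)) * √‖w‖ := by
    have hone : 1 ≤ √‖w‖ := Real.one_le_sqrt.mpr hnorm
    refine (hxi _ (by rw [half_add_add_re]; linarith) (by rw [half_add_add_re]; linarith)).trans ?_
    rw [mul_assoc, one_add_mul]
    gcongr
    exact sqrt_norm_half_add_add_le hδ hnorm
  calc ‖contourIntegrand κ L δ w‖
      = ‖logDeriv xi (1 / 2 + δ + w)‖ * ‖tentDiffTransform κ L w‖ := norm_mul _ _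
    _ ≤ K * (1 + √(4 + δ)) * √‖w‖ * (C / ‖w‖ ^ 2) := by
        gcongr
        exact norm_tentDiffTransform_le hκ hL (norm_pos_iff.mp hpos)
          (abs_le.mpr ⟨by linarith, hw'⟩)
    _ = K * (1 + √(4 + δ)) * C * (√‖w‖ / ‖w‖ ^ 2) := by ring
    _ = _ := by rw [sqrt_div_sq_eq_rpow hpos]

lemma integrable_contourIntegrand_lineTwo (hRH : RiemannHypothesis) (hδ : 0 < δ) (hκ : 0 ≤ κ)
    (hL : 0 ≤ L) : Integrable fun t : ℝ ↦ contourIntegrand κ L δ (lineTwo t) := by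
  obtain ⟨K, -, hbound⟩ := exists_norm_contourIntegrand_le hRH hδ hκ hL
  have hcont : Continuous fun t : ℝ ↦ contourIntegrand κ L δ (lineTwo t) :=
    continuous_iff_continuousAt.mpr fun t ↦
      (differentiableAt_contourIntegrand hRH hδ κ L (by simp)).continuousAt.comp
        continuous_lineTwo.continuousAt
  exact ((integrable_norm_lineTwo_rpow_neg (by norm_num)).const_mul K).mono'
    hcont.aestronglyMeasurable (.of_forall fun t ↦ hbound _ (by simp) (by simp)
      (one_le_two.trans (two_le_norm_lineTwo t)))

lemma re_contourIntegrand_mul_I_nonneg (hRH : RiemannHypothesis) (hδ : 0 < δ) (κ L y : ℝ) :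
    0 ≤ (contourIntegrand κ L δ (y * I)).re := by
  obtain ⟨r, hr, heq⟩ := exists_tentDiffTransform_eq_ofReal κ L y
  rw [contourIntegrand, heq, re_mul_ofReal]
  refine mul_nonneg (re_logDeriv_xi_nonneg hRH ?_) hr
  rw [half_add_add_re]
  simpa using hδ

lemma re_integral_contourIntegrand_nonneg (hRH : RiemannHypothesis) (hδ : 0 < δ) (hκ : 0 ≤ κ)
    (hL : 0 ≤ L) : 0 ≤ (∫ t : ℝ, contourIntegrand κ L δ (lineTwo t)).re := by
  obtain ⟨K, hK, hbound⟩ := exists_norm_contourIntegrand_le hRH hδ hκ hL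
  refine re_integral_lineTwo_nonneg (fun w ↦ differentiableAt_contourIntegrand hRH hδ κ L) hK.le
    (fun w hw hw' hnorm ↦ (hbound w hw hw' hnorm).trans ?_)
    (integrable_contourIntegrand_lineTwo hRH hδ hκ hL)
    (re_contourIntegrand_mul_I_nonneg hRH hδ κ L)
  have hpow : ‖w‖ ^ (-(3 / 2) : ℝ) ≤ ‖w‖⁻¹ := by
    simpa only [Real.rpow_neg_one] using
      Real.rpow_le_rpow_of_exponent_le hnorm (by norm_num : (-(3 / 2) : ℝ) ≤ -1)
  exact mul_le_mul_of_nonneg_left hpow hK.le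

end ContourIntegrand

section LaplaceTransform

variable {κ L α : ℝ}

lemma integral_tentDiffTransform_lineTwo_mul_exp (hκ : 0 < κ) (L v : ℝ) :
    ∫ t : ℝ, tentDiffTransform κ L (lineTwo t) * cexp (-(v * lineTwo t)) =
      2 * Real.pi * tentDiff κ L v := by
  have hint (a : ℝ) := integrable_mul_exp_neg_lineTwo (integrable_tentTransform_lineTwo hκ.le) a
  have hsplit (t : ℝ) : tentDiffTransform κ L (lineTwo t) * cexp (-(v * lineTwo t)) =
      2 * (tentTransform κ (lineTwo t) * cexp (-(v * lineTwo t))) -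
        tentTransform κ (lineTwo t) * cexp (-((v - L : ℝ) * lineTwo t)) -
        tentTransform κ (lineTwo t) * cexp (-((v + L : ℝ) * lineTwo t)) := by
    have hleft : cexp (-((v - L : ℝ) * lineTwo t)) =
        cexp (L * lineTwo t) * cexp (-(v * lineTwo t)) := by
      rw [← Complex.exp_add]; congr 1; push_cast; ring
    have hright : cexp (-((v + L : ℝ) * lineTwo t)) =
        cexp (-(L * lineTwo t)) * cexp (-(v * lineTwo t)) := by
      rw [← Complex.exp_add]; congr 1; push_cast; ring
    have hcancel : cexp (L * lineTwo t) * cexp (-(L * lineTwo t)) = 1 := by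
      rw [← Complex.exp_add, add_neg_cancel, exp_zero]
    rw [hleft, hright, tentDiffTransform]
    linear_combination (tentTransform κ (lineTwo t) * cexp (-(v * lineTwo t))) * hcancel
  simp only [hsplit]
  rw [integral_sub (by exact ((hint v).const_mul 2).sub (hint _)) (hint _),
    integral_sub ((hint v).const_mul 2) (hint _), integral_const_mul]
  simp only [integral_tentTransform_lineTwo_mul_exp hκ, tentDiff]
  push_cast
  ring

lemma integral_tentDiffTransform_lineTwo (hκ : 0 < κ) (L : ℝ) :
    ∫ t : ℝ, tentDiffTransform κ L (lineTwo t) = 2 * Real.pi * tentDiff κ L 0 := by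
  simpa using integral_tentDiffTransform_lineTwo_mul_exp hκ L 0

/-- The one-sided Laplace transform `∫₀^∞ tentDiff κ L u · exp (α u) du`. -/
noncomputable def tentDiffLaplace (κ L α : ℝ) : ℝ :=
  ∫ u in Ioi (0 : ℝ), tentDiff κ L u * Real.exp (α * u)

lemma lineTwo_sub_re (t α : ℝ) : (lineTwo t - α).re = 2 - α := by simp

lemma one_div_lineTwo_sub_mul (hα : α < 2) (t : ℝ) (z : ℂ) :
    1 / (lineTwo t - α) * z = ∫ u in Ioi (0 : ℝ), z * cexp (-(lineTwo t - α) * u) := by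
  have hre : (-(lineTwo t - α)).re < 0 := by
    rw [neg_re, lineTwo_sub_re]
    linarith
  rw [integral_const_mul, integral_exp_mul_complex_Ioi hre, ofReal_zero, mul_zero, exp_zero,
    neg_div_neg_eq, mul_comm]

lemma norm_exp_neg_lineTwo_sub_mul (t α u : ℝ) :
    ‖cexp (-(lineTwo t - α) * u)‖ = Real.exp (-(2 - α) * u) := by
  rw [norm_exp, re_mul_ofReal, neg_re, lineTwo_sub_re]

lemma integrable_one_div_lineTwo_sub_mul (hα : α < 2) {f : ℝ → ℂ} (hf : Integrable f) :
    Integrable fun t : ℝ ↦ 1 / (lineTwo t - α) * f t := by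
  have hdist (t : ℝ) : 2 - α ≤ ‖lineTwo t - α‖ := by
    simpa only [lineTwo_sub_re] using re_le_norm (lineTwo t - α)
  have hα' : 0 < 2 - α := sub_pos.mpr hα
  have hne (t : ℝ) : lineTwo t - α ≠ 0 := norm_pos_iff.mp (hα'.trans_le (hdist t))
  refine hf.bdd_mul (c := 1 / (2 - α)) (Continuous.aestronglyMeasurable ?_) (.of_forall fun t ↦ ?_)
  · exact continuous_const.div (by fun_prop) hne
  · rw [norm_div, norm_one]
    exact one_div_le_one_div_of_le hα' (hdist t)

lemma integral_one_div_lineTwo_sub_mul (hκ : 0 < κ) (hL : 0 ≤ L) (hα : α < 2) :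
    ∫ t : ℝ, 1 / (lineTwo t - α) * tentDiffTransform κ L (lineTwo t) =
      2 * Real.pi * tentDiffLaplace κ L α := by
  have hΦ := integrable_tentDiffTransform_lineTwo hκ.le hL
  have hprod : Integrable (Function.uncurry fun t u : ℝ ↦
      tentDiffTransform κ L (lineTwo t) * cexp (-(lineTwo t - α) * u))
      (volume.prod (volume.restrict (Ioi 0))) := by
    have hexp : IntegrableOn (fun u : ℝ ↦ Real.exp (-(2 - α) * u)) (Ioi 0) :=
      integrableOn_exp_mul_Ioi (by linarith) 0
    have hcont := (differentiable_tentDiffTransform κ L).continuous.comp continuous_lineTwo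
    refine (hΦ.norm.mul_prod hexp).mono' (Continuous.aestronglyMeasurable ?_)
      (.of_forall fun p ↦ (norm_mul_le _ _).trans_eq ?_)
    · exact (hcont.comp continuous_fst).mul (by fun_prop)
    · rw [norm_exp_neg_lineTwo_sub_mul]
  have hinner (u : ℝ) :
      ∫ t : ℝ, tentDiffTransform κ L (lineTwo t) * cexp (-(lineTwo t - α) * u) =
        2 * Real.pi * ((tentDiff κ L u * Real.exp (α * u) : ℝ) : ℂ) := by
    have hsplit (t : ℝ) : tentDiffTransform κ L (lineTwo t) * cexp (-(lineTwo t - α) * u) =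
        tentDiffTransform κ L (lineTwo t) * cexp (-(u * lineTwo t)) * cexp (α * u) := by
      rw [mul_assoc, ← Complex.exp_add]
      congr 2
      ring
    simp only [hsplit]
    rw [integral_mul_const, integral_tentDiffTransform_lineTwo_mul_exp hκ]
    push_cast
    ring
  simp only [one_div_lineTwo_sub_mul hα]
  rw [integral_integral_swap hprod]
  simp only [hinner]
  rw [integral_const_mul]
  exact congrArg _ integral_ofReal

end LaplaceTransform

section ExplicitFormula

variable {κ L δ : ℝ}

/-- The contribution of the trivial zero `-2 m - 2` of `ζ` to the explicit formula. -/
noncomputable def trivialZeroWeight (κ L δ : ℝ) (m : ℕ) : ℝ :=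
  tentDiff κ L 0 / (2 * ((m : ℝ) + 1)) - tentDiffLaplace κ L (-(2 * ((m : ℝ) + 1) + 1 / 2 + δ))

/-- The contribution of the integer `n`, nonzero only for prime powers, to the explicit formula. -/
noncomputable def primePowerWeight (κ L δ : ℝ) (n : ℕ) : ℝ :=
  Λ n * (n : ℝ) ^ (-(1 / 2 + δ)) * tentDiff κ L (Real.log n)

/-- The `n`-th term of the series for `contourIntegrand` on `Re w = 2`, combining the `n`-th trivial
zero with the integer `n`. -/
noncomputable def explicitTerm (κ L δ : ℝ) (n : ℕ) (t : ℝ) : ℂ :=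
  trivialZeroTerm (1 / 2 + δ + lineTwo t) n * tentDiffTransform κ L (lineTwo t) -
    (Λ n : ℂ) * (n : ℂ) ^ (-(1 / 2 + δ + lineTwo t)) * tentDiffTransform κ L (lineTwo t)

lemma half_add_lineTwo_re (δ t : ℝ) : (1 / 2 + δ + lineTwo t).re = 5 / 2 + δ := by
  rw [half_add_add_re, lineTwo_re]
  ring

lemma trivialZeroTerm_lineTwo_mul (δ : ℝ) (m : ℕ) (t : ℝ) (z : ℂ) :
    trivialZeroTerm (1 / 2 + δ + lineTwo t) m * z = 1 / (2 * ((m : ℂ) + 1)) * z -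
      1 / (lineTwo t - (-(2 * ((m : ℝ) + 1) + 1 / 2 + δ) : ℝ)) * z := by
  rw [trivialZeroTerm, sub_mul]
  congr 3
  push_cast
  ring

lemma integrable_trivialZeroTerm_mul (hκ : 0 ≤ κ) (hL : 0 ≤ L) (hδ : 0 ≤ δ) (m : ℕ) :
    Integrable fun t : ℝ ↦
      trivialZeroTerm (1 / 2 + δ + lineTwo t) m * tentDiffTransform κ L (lineTwo t) := by
  have hΦ := integrable_tentDiffTransform_lineTwo hκ hL
  simp only [trivialZeroTerm_lineTwo_mul]
  exact (hΦ.const_mul _).sub (integrable_one_div_lineTwo_sub_mul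
    (by linarith [m.cast_nonneg (α := ℝ)]) hΦ)

lemma integral_trivialZeroTerm_mul (hκ : 0 < κ) (hL : 0 ≤ L) (hδ : 0 ≤ δ) (m : ℕ) :
    ∫ t : ℝ, trivialZeroTerm (1 / 2 + δ + lineTwo t) m * tentDiffTransform κ L (lineTwo t) =
      2 * Real.pi * trivialZeroWeight κ L δ m := by
  have hΦ := integrable_tentDiffTransform_lineTwo hκ.le hL
  have hα : -(2 * ((m : ℝ) + 1) + 1 / 2 + δ) < 2 := by linarith [m.cast_nonneg (α := ℝ)]
  simp only [trivialZeroTerm_lineTwo_mul]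
  rw [integral_sub (hΦ.const_mul _) (integrable_one_div_lineTwo_sub_mul hα hΦ),
    integral_const_mul, integral_tentDiffTransform_lineTwo hκ,
    integral_one_div_lineTwo_sub_mul hκ hL hα, trivialZeroWeight]
  push_cast
  ring

lemma vonMangoldt_mul_cpow_lineTwo_mul (δ : ℝ) (n : ℕ) (t : ℝ) (z : ℂ) :
    (Λ n : ℂ) * (n : ℂ) ^ (-(1 / 2 + δ + lineTwo t)) * z =
      (Λ n * (n : ℝ) ^ (-(1 / 2 + δ)) : ℝ) * (z * cexp (-(Real.log n * lineTwo t))) := by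
  rcases n.eq_zero_or_pos with rfl | hn
  · simp
  have hn0 : (n : ℂ) ≠ 0 := Nat.cast_ne_zero.mpr hn.ne'
  have hexp : (-(1 / 2 + δ + lineTwo t) : ℂ) = (-(1 / 2 + δ) : ℝ) + -lineTwo t := by
    push_cast
    ring
  rw [hexp, cpow_add _ _ hn0, ofReal_mul, ofReal_cpow n.cast_nonneg, ofReal_natCast,
    cpow_def_of_ne_zero hn0 (-lineTwo t), ← natCast_log, mul_neg]
  ring

lemma integrable_vonMangoldt_mul_cpow_mul (hκ : 0 ≤ κ) (hL : 0 ≤ L) (δ : ℝ) (n : ℕ) :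
    Integrable fun t : ℝ ↦ (Λ n : ℂ) * (n : ℂ) ^ (-(1 / 2 + δ + lineTwo t)) *
      tentDiffTransform κ L (lineTwo t) := by
  simp only [vonMangoldt_mul_cpow_lineTwo_mul]
  exact (integrable_mul_exp_neg_lineTwo (integrable_tentDiffTransform_lineTwo hκ hL) _).const_mul _

lemma integral_vonMangoldt_mul_cpow_mul (hκ : 0 < κ) (L δ : ℝ) (n : ℕ) :
    ∫ t : ℝ, (Λ n : ℂ) * (n : ℂ) ^ (-(1 / 2 + δ + lineTwo t)) *
      tentDiffTransform κ L (lineTwo t) = 2 * Real.pi * primePowerWeight κ L δ n := by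
  simp only [vonMangoldt_mul_cpow_lineTwo_mul]
  rw [integral_const_mul, integral_tentDiffTransform_lineTwo_mul_exp hκ, primePowerWeight]
  push_cast
  ring

lemma integrable_explicitTerm (hκ : 0 ≤ κ) (hL : 0 ≤ L) (hδ : 0 ≤ δ) (n : ℕ) :
    Integrable (explicitTerm κ L δ n) :=
  (integrable_trivialZeroTerm_mul hκ hL hδ n).sub (integrable_vonMangoldt_mul_cpow_mul hκ hL δ n)

lemma integral_explicitTerm (hκ : 0 < κ) (hL : 0 ≤ L) (hδ : 0 ≤ δ) (n : ℕ) :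
    ∫ t, explicitTerm κ L δ n t =
      (2 * Real.pi * (trivialZeroWeight κ L δ n - primePowerWeight κ L δ n) : ℝ) := by
  simp only [explicitTerm]
  rw [integral_sub (integrable_trivialZeroTerm_mul hκ.le hL hδ n)
    (integrable_vonMangoldt_mul_cpow_mul hκ.le hL δ n), integral_trivialZeroTerm_mul hκ hL hδ,
    integral_vonMangoldt_mul_cpow_mul hκ]
  push_cast
  ring

lemma contourIntegrand_lineTwo_eq (hδ : 0 ≤ δ) (κ L t : ℝ) :
    contourIntegrand κ L δ (lineTwo t) =
      1 / (lineTwo t - (1 / 2 - δ : ℝ)) * tentDiffTransform κ L (lineTwo t) +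
        xiConst * tentDiffTransform κ L (lineTwo t) + ∑' n, explicitTerm κ L δ n t := by
  have hre := half_add_lineTwo_re δ t
  have hone : 1 < (1 / 2 + δ + lineTwo t).re := by linarith
  have hΛ := (hasSum_vonMangoldt hone).summable
  have htrivial := summable_trivialZeroTerm (zero_lt_one.trans hone)
  have hpole : (1 / 2 + δ + lineTwo t - 1 : ℂ) = lineTwo t - (1 / 2 - δ : ℝ) := by
    push_cast
    ring
  simp only [contourIntegrand, explicitTerm]
  rw [logDeriv_xi hone, hpole, (htrivial.mul_right _).tsum_sub (hΛ.mul_right _), tsum_mul_right,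
    tsum_mul_right]
  ring

lemma exists_norm_explicitTerm_le (hκ : 0 ≤ κ) (hL : 0 ≤ L) (hδ : 0 < δ) :
    ∃ K : ℝ, 0 < K ∧ ∀ n t, ‖explicitTerm κ L δ n t‖ ≤
      K * (1 / ((n : ℝ) + 1) ^ (3 / 2 : ℝ) + ‖(Λ n : ℂ) * (n : ℂ) ^ (-((2 : ℝ) : ℂ))‖) *
        ‖lineTwo t‖ ^ (-(3 / 2) : ℝ) := by
  set C := (2 * Real.exp (2 * κ) + 2) * (1 + Real.exp (2 * L)) ^ 2
  refine ⟨(1 + √(4 + δ)) * C, by positivity, fun n t ↦ ?_⟩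
  set s := 1 / 2 + δ + lineTwo t
  have hsre : s.re = 5 / 2 + δ := half_add_lineTwo_re δ t
  have hnorm : 1 ≤ ‖lineTwo t‖ := one_le_two.trans (two_le_norm_lineTwo t)
  have hsqrt : √‖s‖ ≤ √(4 + δ) * √‖lineTwo t‖ :=
    (Real.sqrt_le_sqrt (by linarith)).trans (sqrt_norm_half_add_add_le hδ hnorm)
  have hcoeff : ‖trivialZeroTerm s n - (Λ n : ℂ) * (n : ℂ) ^ (-s)‖ ≤
      (1 + √(4 + δ)) * √‖lineTwo t‖ *
        (1 / ((n : ℝ) + 1) ^ (3 / 2 : ℝ) + ‖(Λ n : ℂ) * (n : ℂ) ^ (-((2 : ℝ) : ℂ))‖) := by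
    have hone : 1 ≤ √‖lineTwo t‖ := Real.one_le_sqrt.mpr hnorm
    have hfactor : √(4 + δ) * √‖lineTwo t‖ ≤ (1 + √(4 + δ)) * √‖lineTwo t‖ := by gcongr; linarith
    have hfactor' : 1 ≤ (1 + √(4 + δ)) * √‖lineTwo t‖ :=
      one_le_mul_of_one_le_of_one_le (by linarith [Real.sqrt_nonneg (4 + δ)]) hone
    rw [mul_add]
    refine (norm_sub_le _ _).trans (add_le_add ?_ ?_)
    · refine (norm_trivialZeroTerm_le (by linarith) n).trans ?_
      gcongr
      exact hsqrt.trans hfactor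
    · exact (norm_vonMangoldt_mul_cpow_le (by linarith) n).trans
        (le_mul_of_one_le_left (norm_nonneg _) hfactor')
  calc ‖explicitTerm κ L δ n t‖
      = ‖trivialZeroTerm s n - (Λ n : ℂ) * (n : ℂ) ^ (-s)‖ *
          ‖tentDiffTransform κ L (lineTwo t)‖ := by rw [explicitTerm, ← sub_mul, norm_mul]
    _ ≤ (1 + √(4 + δ)) * √‖lineTwo t‖ * (1 / ((n : ℝ) + 1) ^ (3 / 2 : ℝ) +
          ‖(Λ n : ℂ) * (n : ℂ) ^ (-((2 : ℝ) : ℂ))‖) * (C / ‖lineTwo t‖ ^ 2) := by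
        gcongr
        exact norm_tentDiffTransform_le hκ hL (lineTwo_ne_zero t) (abs_lineTwo_re_le t)
    _ = _ := by
        rw [← sqrt_div_sq_eq_rpow (zero_lt_one.trans_le hnorm)]
        ring

lemma hasSum_integral_explicitTerm (hκ : 0 ≤ κ) (hL : 0 ≤ L) (hδ : 0 < δ) :
    HasSum (fun n ↦ ∫ t, explicitTerm κ L δ n t) (∫ t, ∑' n, explicitTerm κ L δ n t) := by
  obtain ⟨K, -, hbound⟩ := exists_norm_explicitTerm_le hκ hL hδ
  have hcoeff : Summable fun n : ℕ ↦ K * (1 / ((n : ℝ) + 1) ^ (3 / 2 : ℝ) +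
      ‖(Λ n : ℂ) * (n : ℂ) ^ (-((2 : ℝ) : ℂ))‖) :=
    (summable_one_div_succ_rpow.add (hasSum_vonMangoldt (by simp)).summable.norm).mul_left K
  refine hasSum_integral_of_summable_integral_norm
    (fun n ↦ integrable_explicitTerm hκ hL hδ.le n) (.of_nonneg_of_le
      (fun n ↦ integral_nonneg fun t ↦ norm_nonneg _) (fun n ↦ ?_)
      (hcoeff.mul_right (∫ t, ‖lineTwo t‖ ^ (-(3 / 2) : ℝ))))
  rw [← integral_const_mul]
  exact integral_mono (integrable_explicitTerm hκ hL hδ.le n).norm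
    ((integrable_norm_lineTwo_rpow_neg (by norm_num)).const_mul _) (hbound n)

theorem exists_hasSum_explicit_formula (hRH : RiemannHypothesis) (hκ : 0 < κ) (hL : 0 ≤ L)
    (hδ : 0 < δ) :
    ∃ S : ℝ, HasSum (fun n ↦ trivialZeroWeight κ L δ n - primePowerWeight κ L δ n) S ∧
      0 ≤ tentDiffLaplace κ L (1 / 2 - δ) + xiConst * tentDiff κ L 0 + S := by
  have hΦ := integrable_tentDiffTransform_lineTwo hκ.le hL
  have hα : 1 / 2 - δ < 2 := by linarith
  have hmain : ∫ t, ∑' n, explicitTerm κ L δ n t = (∫ t, contourIntegrand κ L δ (lineTwo t)) -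
      (2 * Real.pi * (tentDiffLaplace κ L (1 / 2 - δ) + xiConst * tentDiff κ L 0) : ℝ) := by
    have hpole := integrable_one_div_lineTwo_sub_mul hα hΦ
    have hsum (t : ℝ) := (sub_eq_of_eq_add' (contourIntegrand_lineTwo_eq hδ.le κ L t)).symm
    simp only [hsum]
    rw [integral_sub (integrable_contourIntegrand_lineTwo hRH hδ hκ.le hL)
      (by exact hpole.add (hΦ.const_mul _)), integral_add hpole (hΦ.const_mul _),
      integral_const_mul, integral_tentDiffTransform_lineTwo hκ,
      integral_one_div_lineTwo_sub_mul hκ hL hα]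
    push_cast
    ring
  have hnonneg := re_integral_contourIntegrand_nonneg hRH hδ hκ.le hL
  have hseries := hasSum_re (hasSum_integral_explicitTerm hκ.le hL hδ)
  rw [hmain, sub_re, ofReal_re] at hseries
  simp only [integral_explicitTerm hκ hL hδ.le, ofReal_re] at hseries
  have hpi : (2 * Real.pi : ℝ) ≠ 0 := by positivity
  refine ⟨_, by simpa only [mul_div_cancel_left₀ _ hpi] using hseries.div_const (2 * Real.pi), ?_⟩
  rw [sub_div, mul_div_cancel_left₀ _ hpi, add_sub_cancel]
  positivity

end ExplicitFormula

section TentMoments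

variable {κ L α a : ℝ}

lemma intervalIntegral_sub_self (κ : ℝ) : ∫ u in (0 : ℝ)..κ, (κ - u) = κ ^ 2 / 2 := by
  rw [intervalIntegral.integral_sub (by simp) (by simp), intervalIntegral.integral_const,
    integral_id, smul_eq_mul]
  ring

lemma intervalIntegral_sub_mul_le (hκ : 0 ≤ κ) {f g : ℝ → ℝ} (hf : Continuous f)
    (hg : Continuous g) (h : ∀ u ∈ Icc 0 κ, f u ≤ g u) :
    ∫ u in (0 : ℝ)..κ, (κ - u) * f u ≤ ∫ u in (0 : ℝ)..κ, (κ - u) * g u := by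
  refine intervalIntegral.integral_mono_on hκ (Continuous.intervalIntegrable (by fun_prop) _ _)
    (Continuous.intervalIntegrable (by fun_prop) _ _) fun u hu ↦ ?_
  exact mul_le_mul_of_nonneg_left (h u hu) (sub_nonneg.mpr hu.2)

lemma intervalIntegral_sub_mul_const (κ c : ℝ) :
    ∫ u in (0 : ℝ)..κ, (κ - u) * c = κ ^ 2 / 2 * c := by
  rw [intervalIntegral.integral_mul_const, intervalIntegral_sub_self]

lemma intervalIntegral_sub_mul_exp_le (hκ : 0 ≤ κ) (hα : 0 ≤ α) :
    ∫ u in (0 : ℝ)..κ, (κ - u) * Real.exp (α * u) ≤ κ ^ 2 / 2 * Real.exp (α * κ) := by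
  rw [← intervalIntegral_sub_mul_const]
  refine intervalIntegral_sub_mul_le hκ (by fun_prop) (by fun_prop) fun u hu ↦ ?_
  gcongr
  exact hu.2

lemma intervalIntegral_sub_mul_exp_nonneg (hκ : 0 ≤ κ) (α : ℝ) :
    0 ≤ ∫ u in (0 : ℝ)..κ, (κ - u) * Real.exp (α * u) :=
  intervalIntegral.integral_nonneg hκ fun _ hu ↦
    mul_nonneg (sub_nonneg.mpr hu.2) (Real.exp_pos _).le

lemma le_intervalIntegral_sub_mul_exp_neg (ha : 0 < a) (κ : ℝ) :
    κ / a - 1 / a ^ 2 ≤ ∫ u in (0 : ℝ)..κ, (κ - u) * Real.exp (-a * u) := by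
  have hcomplex := intervalIntegral_sub_mul_exp κ (w := -a) (by simpa using ha.ne')
  have hreal : ∫ u in (0 : ℝ)..κ, (κ - u) * Real.exp (-a * u) =
      (Real.exp (κ * -a) - 1) / (-a) ^ 2 - κ / -a := by
    rw [← ofReal_inj, ← intervalIntegral.integral_ofReal]
    push_cast
    exact hcomplex
  have hexp : 0 ≤ Real.exp (κ * -a) / a ^ 2 := by positivity
  rw [hreal, neg_sq, sub_div, div_neg]
  linarith

lemma integral_tent_mul_exp_real (hκ : 0 ≤ κ) (α : ℝ) :
    ∫ u, tent κ u * Real.exp (α * u) =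
      ∫ u in (0 : ℝ)..κ, (κ - u) * (Real.exp (α * u) + Real.exp (α * -u)) := by
  simpa only [smul_eq_mul] using
    integral_tent_smul hκ (f := fun u ↦ Real.exp (α * u)) (by fun_prop)

lemma sq_le_integral_tent_mul_exp (hκ : 0 ≤ κ) (α : ℝ) :
    κ ^ 2 ≤ ∫ u, tent κ u * Real.exp (α * u) := by
  rw [integral_tent_mul_exp_real hκ]
  calc κ ^ 2 = ∫ u in (0 : ℝ)..κ, (κ - u) * 2 := by rw [intervalIntegral_sub_mul_const]; ring
    _ ≤ _ := intervalIntegral_sub_mul_le hκ (by fun_prop) (by fun_prop) fun u _ ↦ by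
        linarith [Real.add_one_le_exp (α * u), Real.add_one_le_exp (α * -u)]

lemma integral_tent_mul_exp_le (hκ : 0 ≤ κ) (α : ℝ) :
    ∫ u, tent κ u * Real.exp (α * u) ≤ κ ^ 2 * Real.exp (|α| * κ) := by
  rw [integral_tent_mul_exp_real hκ]
  have hexp {u v : ℝ} (hu : |v| = u) (hκu : u ≤ κ) : Real.exp (α * v) ≤ Real.exp (|α| * κ) := by
    refine Real.exp_le_exp.mpr ((le_abs_self _).trans ?_)
    rw [abs_mul, hu]
    gcongr
  calc _ ≤ ∫ u in (0 : ℝ)..κ, (κ - u) * (2 * Real.exp (|α| * κ)) :=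
        intervalIntegral_sub_mul_le hκ (by fun_prop) (by fun_prop) fun u hu ↦ by
          linarith [hexp (abs_of_nonneg hu.1) hu.2,
            hexp ((abs_neg u).trans (abs_of_nonneg hu.1)) hu.2]
    _ = _ := by rw [intervalIntegral_sub_mul_const]; ring

lemma integral_Ioi_tent_sub_mul_exp (hL : κ ≤ L) (α : ℝ) :
    ∫ u in Ioi (0 : ℝ), tent κ (u - L) * Real.exp (α * u) =
      Real.exp (α * L) * ∫ u, tent κ u * Real.exp (α * u) := by
  have hzero : ∀ u ∉ Ioi (0 : ℝ), tent κ (u - L) * Real.exp (α * u) = 0 := fun u hu ↦ by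
    rw [tent_eq_zero_of_le_abs, zero_mul]
    rw [abs_sub_comm]
    exact le_trans (by linarith [notMem_Ioi.mp hu]) (le_abs_self _)
  rw [setIntegral_eq_integral_of_forall_compl_eq_zero hzero,
    ← integral_add_right_eq_self _ L, ← integral_const_mul]
  congr 1 with u
  rw [add_sub_cancel_right, mul_add, Real.exp_add]
  ring

lemma tentDiffLaplace_eq (hκ : 0 ≤ κ) (hL : κ ≤ L) (α : ℝ) :
    tentDiffLaplace κ L α = 2 * (∫ u in (0 : ℝ)..κ, (κ - u) * Real.exp (α * u)) -
      Real.exp (α * L) * ∫ u, tent κ u * Real.exp (α * u) := by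
  have hcentre : ∫ u in Ioi (0 : ℝ), tent κ u * Real.exp (α * u) =
      ∫ u in (0 : ℝ)..κ, (κ - u) * Real.exp (α * u) :=
    integral_Ioi_tent_smul hκ fun u ↦ Real.exp (α * u)
  have hint : Integrable fun u ↦ tent κ u * Real.exp (α * u) :=
    integrable_tent_smul κ (f := fun u ↦ Real.exp (α * u)) (by fun_prop)
  have hshift : Integrable fun u ↦ tent κ (u - L) * Real.exp (α * u) := by
    have h := integrable_tent_smul κ (f := fun u ↦ Real.exp (α * (u + L))) (by fun_prop)
    simpa only [sub_add_cancel, smul_eq_mul] using h.comp_sub_right L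
  rw [← hcentre, ← integral_Ioi_tent_sub_mul_exp hL, ← integral_const_mul,
    ← integral_sub (hint.const_mul 2).integrableOn hshift.integrableOn, tentDiffLaplace]
  refine setIntegral_congr_fun measurableSet_Ioi fun u hu ↦ ?_
  have hzero : tent κ (u + L) = 0 :=
    tent_eq_zero_of_le_abs (le_trans (by linarith [mem_Ioi.mp hu]) (le_abs_self _))
  simp only [tentDiff, hzero]
  ring

lemma tentDiffLaplace_le (hκ : 0 ≤ κ) (hL : κ ≤ L) (hα : 0 ≤ α) :
    tentDiffLaplace κ L α ≤ κ ^ 2 * Real.exp (α * κ) - κ ^ 2 * Real.exp (α * L) := by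
  rw [tentDiffLaplace_eq hκ hL]
  have hcentre := intervalIntegral_sub_mul_exp_le hκ hα
  have hshift := mul_le_mul_of_nonneg_left (sq_le_integral_tent_mul_exp hκ α)
    (Real.exp_pos (α * L)).le
  linarith

lemma tentDiff_zero (hκ : 0 ≤ κ) (hL : κ ≤ L) : tentDiff κ L 0 = 2 * κ := by
  have hκL : κ ≤ |L| := hL.trans (le_abs_self L)
  rw [tentDiff, zero_sub, zero_add, tent_neg, tent_eq_zero_of_le_abs hκL,
    tent_eq_sub_of_mem_Icc (left_mem_Icc.mpr hκ)]
  ring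

end TentMoments

section TrivialZeros

variable {κ L δ a : ℝ}

lemma exp_neg_mul_integral_tent_le (hκ : 0 ≤ κ) (hL : κ + 1 ≤ L) {r : ℝ} (hr : 0 < r)
    (ha : 2 * r ≤ a) :
    Real.exp (-a * L) * ∫ u, tent κ u * Real.exp (-a * u) ≤ κ ^ 2 / 2 * (1 / r ^ 2) := by
  have ha0 : 0 < a := lt_of_lt_of_le (by positivity) ha
  have hdecay : Real.exp (-(a * (L - κ))) ≤ 1 / 2 * (1 / r ^ 2) := by
    have hle : 2 * r ≤ a * (L - κ) := ha.trans (le_mul_of_one_le_right ha0.le (by linarith))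
    have hquad := Real.quadratic_le_exp_of_nonneg (x := a * (L - κ)) (by linarith)
    rw [Real.exp_neg, one_div_mul_one_div, ← one_div]
    refine one_div_le_one_div_of_le (by positivity) ?_
    nlinarith
  calc Real.exp (-a * L) * ∫ u, tent κ u * Real.exp (-a * u)
      ≤ Real.exp (-a * L) * (κ ^ 2 * Real.exp (|-a| * κ)) := by
        gcongr
        exact integral_tent_mul_exp_le hκ _
    _ = κ ^ 2 * Real.exp (-(a * (L - κ))) := by
        rw [abs_neg, abs_of_pos ha0, mul_left_comm, ← Real.exp_add]
        ring_nf
    _ ≤ κ ^ 2 * (1 / 2 * (1 / r ^ 2)) := by gcongr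
    _ = _ := by ring

lemma trivialZeroWeight_le (hκ : 0 ≤ κ) (hL : κ + 1 ≤ L) (hδ : 0 ≤ δ) (m : ℕ) :
    trivialZeroWeight κ L δ m ≤ κ / ((m : ℝ) + 1) -
      2 * (∫ u in (0 : ℝ)..κ, (κ - u) * Real.exp (-(2 * ((m : ℝ) + 1) + 1 / 2 + δ) * u)) +
        κ ^ 2 / 2 * (1 / ((m : ℝ) + 1) ^ 2) := by
  have htail := exp_neg_mul_integral_tent_le (a := 2 * ((m : ℝ) + 1) + 1 / 2 + δ) hκ hL
    m.cast_add_one_pos (by linarith)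
  rw [trivialZeroWeight, tentDiff_zero hκ (by linarith), tentDiffLaplace_eq hκ (by linarith),
    mul_div_mul_left _ _ two_ne_zero]
  linarith

lemma trivialZeroWeight_le_div (hκ : 0 ≤ κ) (hL : κ + 1 ≤ L) (hδ : 0 ≤ δ) (m : ℕ) :
    trivialZeroWeight κ L δ m ≤ κ / ((m : ℝ) + 1) + κ ^ 2 / 2 * (1 / ((m : ℝ) + 1) ^ 2) := by
  linarith [trivialZeroWeight_le hκ hL hδ m,
    intervalIntegral_sub_mul_exp_nonneg hκ (-(2 * ((m : ℝ) + 1) + 1 / 2 + δ))]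

lemma trivialZeroWeight_le_div_sq (hκ : 0 ≤ κ) (hL : κ + 1 ≤ L) (hδ : 0 ≤ δ) (hδ' : δ ≤ 1 / 2)
    (m : ℕ) : trivialZeroWeight κ L δ m ≤
      (κ + 1) / 2 * (1 / ((m : ℝ) + 1) ^ 2) + κ ^ 2 / 2 * (1 / ((m : ℝ) + 1) ^ 2) := by
  have hweight := trivialZeroWeight_le hκ hL hδ m
  set r := (m : ℝ) + 1
  have hr : 0 < r := m.cast_add_one_pos
  set a := 2 * r + 1 / 2 + δ with ha
  have hra : 2 * r ≤ a := by linarith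
  have ha0 : 0 < a := by linarith
  have hintegral := le_intervalIntegral_sub_mul_exp_neg ha0 κ
  have hsq : 2 * (1 / a ^ 2) ≤ 1 / 2 * (1 / r ^ 2) :=
    calc 2 * (1 / a ^ 2) ≤ 2 * (1 / (2 * r) ^ 2) := by gcongr
      _ = _ := by field_simp
  have hdiff : κ / r - 2 * (κ / a) ≤ κ / 2 * (1 / r ^ 2) :=
    calc κ / r - 2 * (κ / a) = κ * (1 / 2 + δ) / (r * a) := by
          rw [ha]
          field_simp
          ring
      _ ≤ κ * 1 / (r * (2 * r)) := by gcongr; linarith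
      _ = _ := by field_simp
  linarith

lemma sum_Ico_one_div_succ_sq_le {M : ℕ} (hM : M ≠ 0) (N : ℕ) :
    ∑ m ∈ Finset.Ico M N, 1 / ((m : ℝ) + 1) ^ 2 ≤ 1 / (M : ℝ) := by
  rcases le_or_gt M N with hMN | hNM
  · have hshift := Finset.sum_Ico_add' (fun m : ℕ ↦ ((m : ℝ) ^ 2)⁻¹) M N 1
    have hbound := sum_Ioc_inv_sq_le_sub (α := ℝ) hM hMN
    rw [← Finset.Ico_add_one_add_one_eq_Ioc, ← hshift] at hbound
    simp only [Nat.cast_add_one, ← one_div] at hbound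
    exact hbound.trans (sub_le_self _ (by positivity))
  · rw [Finset.Ico_eq_empty_of_le hNM.le, Finset.sum_empty]
    positivity

lemma sum_range_one_div_succ_sq_le (N : ℕ) :
    ∑ m ∈ Finset.range N, 1 / ((m : ℝ) + 1) ^ 2 ≤ 2 := by
  refine (summable_one_div_succ_sq.sum_le_tsum _ fun m _ ↦ by positivity).trans ?_
  rw [tsum_one_div_succ_sq]
  nlinarith [Real.pi_lt_d2, Real.pi_pos]

lemma sum_trivialZeroWeight_le (hκ : 0 < κ) (hL : κ + 1 ≤ L) (hδ : 0 ≤ δ) (hδ' : δ ≤ 1 / 2)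
    (N : ℕ) : ∑ m ∈ Finset.range N, trivialZeroWeight κ L δ m ≤
      κ * (1 + Real.log (1 / κ + 1)) + κ * (κ + 1) / 2 + κ ^ 2 := by
  set M := ⌈1 / κ⌉₊
  have hM : 0 < M := Nat.ceil_pos.mpr (by positivity)
  have hMle : (M : ℝ) ≤ 1 / κ + 1 := (Nat.ceil_lt_add_one (by positivity)).le
  have hweight (m : ℕ) : trivialZeroWeight κ L δ m ≤
      (if m < M then κ * (1 / ((m : ℝ) + 1)) else (κ + 1) / 2 * (1 / ((m : ℝ) + 1) ^ 2)) +
        κ ^ 2 / 2 * (1 / ((m : ℝ) + 1) ^ 2) := by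
    split_ifs
    · simpa only [mul_one_div κ] using trivialZeroWeight_le_div hκ.le hL hδ m
    · exact trivialZeroWeight_le_div_sq hκ.le hL hδ hδ' m
  have hhead : ∑ m ∈ Finset.range N with m < M, 1 / ((m : ℝ) + 1) ≤ 1 + Real.log (1 / κ + 1) :=
    calc ∑ m ∈ Finset.range N with m < M, 1 / ((m : ℝ) + 1)
        ≤ ∑ m ∈ Finset.range M, 1 / ((m : ℝ) + 1) :=
          Finset.sum_le_sum_of_subset_of_nonneg
            (fun m hm ↦ Finset.mem_range.mpr (Finset.mem_filter.mp hm).2)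
            fun m _ _ ↦ by positivity
      _ = harmonic M := by simp [harmonic]
      _ ≤ 1 + Real.log M := harmonic_le_one_add_log M
      _ ≤ _ := by gcongr
  have htail : ∑ m ∈ Finset.range N with ¬m < M, 1 / ((m : ℝ) + 1) ^ 2 ≤ κ := by
    have hfilter : {m ∈ Finset.range N | ¬m < M} = Finset.Ico M N := by
      ext m
      simp only [Finset.mem_filter, Finset.mem_range, Finset.mem_Ico, not_lt, and_comm]
    rw [hfilter]
    exact (sum_Ico_one_div_succ_sq_le hM.ne' N).trans
      ((one_div_le (Nat.cast_pos.mpr hM) hκ).mpr (Nat.le_ceil _))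
  refine (Finset.sum_le_sum fun m _ ↦ hweight m).trans ?_
  rw [Finset.sum_add_distrib, ← Finset.mul_sum, Finset.sum_ite, ← Finset.mul_sum, ← Finset.mul_sum]
  have hhead' := mul_le_mul_of_nonneg_left hhead hκ.le
  have htail' := mul_le_mul_of_nonneg_left htail (by positivity : 0 ≤ (κ + 1) / 2)
  have hall := mul_le_mul_of_nonneg_left (sum_range_one_div_succ_sq_le N)
    (by positivity : 0 ≤ κ ^ 2 / 2)
  linarith

end TrivialZeros

section PrimePowers

variable {κ L δ : ℝ}

lemma psi_sub_theta_le {Y : ℝ} (hY : 4 ≤ Y) :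
    Chebyshev.psi Y - Chebyshev.theta Y ≤
      Real.log 4 * (Y ^ (1 / 2 : ℝ) + Real.log Y / Real.log 2 * Y ^ (1 / 3 : ℝ)) := by
  have hlog2 : 0 < Real.log 2 := Real.log_pos one_lt_two
  have hlogY : 0 ≤ Real.log Y / Real.log 2 := div_nonneg (Real.log_nonneg (by linarith)) hlog2.le
  set N := ⌊Real.log Y / Real.log 2⌋₊
  have hN : 2 ≤ N := by
    rw [Nat.le_floor_iff' two_ne_zero, le_div_iff₀ hlog2, Nat.cast_ofNat, ← Real.log_rpow two_pos]
    exact Real.log_le_log (by norm_num) (by norm_num; exact hY)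
  rw [Chebyshev.psi_eq_theta_add_sum_theta (by linarith), add_sub_cancel_left,
    ← Finset.add_sum_Ioc_eq_sum_Icc hN, mul_add]
  refine add_le_add (Chebyshev.theta_le_log4_mul_x (by positivity)) ?_
  have hterm : ∀ n ∈ Finset.Ioc 2 N, Chebyshev.theta (Y ^ (1 / (n : ℝ))) ≤
      Real.log 4 * Y ^ (1 / 3 : ℝ) := fun n hn ↦ by
    have hn3 : (3 : ℝ) ≤ n := by exact_mod_cast (Finset.mem_Ioc.mp hn).1
    refine (Chebyshev.theta_le_log4_mul_x (by positivity)).trans ?_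
    gcongr
    linarith
  calc ∑ n ∈ Finset.Ioc 2 N, Chebyshev.theta (Y ^ (1 / (n : ℝ)))
      ≤ (N - 2 : ℕ) * (Real.log 4 * Y ^ (1 / 3 : ℝ)) := by
        simpa only [nsmul_eq_mul, Nat.card_Ioc] using Finset.sum_le_card_nsmul _ _ _ hterm
    _ ≤ Real.log Y / Real.log 2 * (Real.log 4 * Y ^ (1 / 3 : ℝ)) := by
        gcongr
        exact (Nat.cast_le.mpr (Nat.sub_le N 2)).trans (Nat.floor_le hlogY)
    _ = _ := by ring

lemma tentDiff_log_natCast (hκ : κ ≤ Real.log 2) (hL : 0 ≤ L) {n : ℕ} (hn : 2 ≤ n) :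
    tentDiff κ L (Real.log n) = -tent κ (Real.log n - L) := by
  have hlog : Real.log 2 ≤ Real.log n := Real.log_le_log two_pos (by exact_mod_cast hn)
  rw [tentDiff, tent_eq_zero_of_le_abs ((hκ.trans hlog).trans (le_abs_self _)),
    tent_eq_zero_of_le_abs (le_trans (by linarith) (le_abs_self (Real.log n + L)))]
  ring

lemma neg_primePowerWeight_le (hκ : 0 ≤ κ) (hκ' : κ ≤ Real.log 2) (hL : κ ≤ L) (hδ : 0 ≤ δ)
    (hgap : ∀ p : ℕ, p.Prime → Real.exp (L - κ) < p → Real.exp (L + κ) ≤ p) (n : ℕ) :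
    -primePowerWeight κ L δ n ≤ κ * Real.exp (-(L - κ) / 2) *
      if n ∈ {m ∈ Finset.Ioc 0 ⌊Real.exp (L + κ)⌋₊ | ¬m.Prime} then Λ n else 0 := by
  have hΛ : 0 ≤ Λ n := ArithmeticFunction.vonMangoldt_nonneg
  have hnonneg : 0 ≤ κ * Real.exp (-(L - κ) / 2) *
      if n ∈ {m ∈ Finset.Ioc 0 ⌊Real.exp (L + κ)⌋₊ | ¬m.Prime} then Λ n else 0 := by positivity
  rcases lt_or_ge n 2 with hn | hn
  · have hzero : Λ n = 0 := by interval_cases n <;> simp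
    simpa only [primePowerWeight, hzero, zero_mul, neg_zero] using hnonneg
  rw [primePowerWeight, tentDiff_log_natCast hκ' (hκ.trans hL) hn, mul_neg, neg_neg]
  rcases le_or_gt κ |Real.log n - L| with hout | hin
  · rwa [tent_eq_zero_of_le_abs hout, mul_zero]
  have hn0 : (0 : ℝ) < n := by positivity
  obtain ⟨hlower, hupper⟩ := abs_lt.mp hin
  have hnL : Real.exp (L - κ) < n := (Real.lt_log_iff_exp_lt hn0).mp (by linarith)
  have hnU : (n : ℝ) < Real.exp (L + κ) := (Real.log_lt_iff_lt_exp hn0).mp (by linarith)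
  have hpow : (n : ℝ) ^ (-(1 / 2 + δ)) ≤ Real.exp (-(L - κ) / 2) := by
    rw [Real.rpow_def_of_pos hn0]
    exact Real.exp_le_exp.mpr (by nlinarith)
  rw [if_pos (Finset.mem_filter.mpr ⟨Finset.mem_Ioc.mpr ⟨by lia, Nat.le_floor hnU.le⟩,
    fun hp ↦ (hgap n hp hnL).not_gt hnU⟩)]
  calc Λ n * (n : ℝ) ^ (-(1 / 2 + δ)) * tent κ (Real.log n - L)
      ≤ Λ n * Real.exp (-(L - κ) / 2) * κ := by
        gcongr
        · exact tent_nonneg _ _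
        · exact tent_le hκ _
    _ = _ := by ring

lemma sum_neg_primePowerWeight_le (hκ : 0 ≤ κ) (hκ' : κ ≤ Real.log 2) (hL : κ ≤ L) (hδ : 0 ≤ δ)
    (hgap : ∀ p : ℕ, p.Prime → Real.exp (L - κ) < p → Real.exp (L + κ) ≤ p) (s : Finset ℕ) :
    ∑ n ∈ s, -primePowerWeight κ L δ n ≤ κ * Real.exp (-(L - κ) / 2) *
      (Chebyshev.psi (Real.exp (L + κ)) - Chebyshev.theta (Real.exp (L + κ))) := by
  refine (Finset.sum_le_sum fun n _ ↦ neg_primePowerWeight_le hκ hκ' hL hδ hgap n).trans ?_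
  rw [← Finset.mul_sum, Finset.sum_ite_mem, Chebyshev.psi_sub_theta_eq_sum_not_prime]
  refine mul_le_mul_of_nonneg_left ?_ (by positivity)
  exact Finset.sum_le_sum_of_subset_of_nonneg Finset.inter_subset_right fun n _ _ ↦
    ArithmeticFunction.vonMangoldt_nonneg

end PrimePowers

section PrimeFreeInterval

variable {κ L : ℝ}

lemma xiConst_nonpos : xiConst ≤ 0 := by
  have hπ : 0 ≤ Real.log Real.pi := Real.log_nonneg (by linarith [Real.pi_gt_three])
  rw [xiConst]
  linarith [Real.one_half_lt_eulerMascheroniConstant]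

lemma mul_exp_half_le_of_forall_prime (hRH : RiemannHypothesis) (hκ : 0 < κ)
    (hκ' : κ ≤ Real.log 2) (hL : κ + 1 ≤ L)
    (hgap : ∀ p : ℕ, p.Prime → Real.exp (L - κ) < p → Real.exp (L + κ) ≤ p) :
    κ * Real.exp (L / 2) ≤ κ * Real.exp (κ / 2) + (1 + Real.log (1 / κ + 1) + (κ + 1) / 2 + κ) +
      Real.exp (-(L - κ) / 2) *
        (Chebyshev.psi (Real.exp (L + κ)) - Chebyshev.theta (Real.exp (L + κ))) := by
  set E := Chebyshev.psi (Real.exp (L + κ)) - Chebyshev.theta (Real.exp (L + κ))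
  set B := κ * (1 + Real.log (1 / κ + 1)) + κ * (κ + 1) / 2 + κ ^ 2 +
    κ * Real.exp (-(L - κ) / 2) * E with hB
  have hκL : κ ≤ L := by linarith
  have hδ (δ : ℝ) (hδ : δ ∈ Ioc (0 : ℝ) (1 / 2)) :
      κ ^ 2 * Real.exp ((1 / 2 - δ) * L) ≤ κ ^ 2 * Real.exp ((1 / 2 - δ) * κ) + B := by
    obtain ⟨S, hsum, hformula⟩ := exists_hasSum_explicit_formula hRH hκ (hκ.le.trans hκL) hδ.1
    have hS : S ≤ B := le_of_tendsto' hsum.tendsto_sum_nat fun N ↦ by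
      simp only [sub_eq_add_neg]
      rw [Finset.sum_add_distrib]
      exact add_le_add (sum_trivialZeroWeight_le hκ hL hδ.1.le hδ.2 N)
        (sum_neg_primePowerWeight_le hκ.le hκ' hκL hδ.1.le hgap _)
    have hLaplace := tentDiffLaplace_le hκ.le hκL (sub_nonneg.mpr hδ.2)
    have hconst : xiConst * tentDiff κ L 0 ≤ 0 := by
      rw [tentDiff_zero hκ.le hκL]
      exact mul_nonpos_of_nonpos_of_nonneg xiConst_nonpos (by positivity)
    linarith
  have hcont (c : ℝ) : Tendsto (fun δ : ℝ ↦ κ ^ 2 * Real.exp ((1 / 2 - δ) * c)) (𝓝[>] 0)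
      (𝓝 (κ ^ 2 * Real.exp (c / 2))) := by
    have h : Continuous fun δ : ℝ ↦ κ ^ 2 * Real.exp ((1 / 2 - δ) * c) := by fun_prop
    simpa only [sub_zero, one_div_mul_eq_div] using (h.tendsto 0).mono_left nhdsWithin_le_nhds
  have hlimit : κ ^ 2 * Real.exp (L / 2) ≤ κ ^ 2 * Real.exp (κ / 2) + B :=
    le_of_tendsto_of_tendsto (hcont L) ((hcont κ).add_const B)
      (Filter.mem_of_superset (Ioc_mem_nhdsGT one_half_pos) hδ)
  refine le_of_mul_le_mul_left ?_ hκ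
  linarith

end PrimeFreeInterval

section Window

variable {Y : ℝ}

lemma log_ten_pow_six_le : Real.log (10 ^ 6) ≤ 20 * Real.log 2 := by
  have h : Real.log (10 ^ 6) ≤ Real.log (2 ^ 20) :=
    Real.log_le_log (by norm_num) (by norm_num)
  rwa [Real.log_pow 2 20] at h

lemma le_log_of_ten_pow_six_le (hY : 10 ^ 6 ≤ Y) : 13.5 ≤ Real.log Y := by
  have h : Real.log (2 ^ 39) ≤ Real.log (Y ^ 2) :=
    Real.log_le_log (by norm_num) (by nlinarith)
  rw [Real.log_pow, Real.log_pow] at h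
  push_cast at h
  linarith [Real.log_two_gt_d9]

lemma log_le_mul_rpow_one_div_six (hY : 10 ^ 6 ≤ Y) :
    Real.log Y ≤ 2 * Real.log 2 * Y ^ (1 / 6 : ℝ) := by
  have hten : ((10 : ℝ) ^ 6) ^ (1 / 6 : ℝ) = 10 := by
    rw [← Real.rpow_natCast, ← Real.rpow_mul (by norm_num)]
    norm_num
  have hexp {Z : ℝ} (hZ : 10 ^ 6 ≤ Z) : Real.exp (1 / 6 : ℝ)⁻¹ ≤ Z := by
    rw [← Real.le_log_iff_exp_le (lt_of_lt_of_le (by norm_num) hZ)]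
    exact le_trans (by norm_num) (le_log_of_ten_pow_six_le hZ)
  have hanti := Real.log_div_self_rpow_antitoneOn (a := 1 / 6) (by norm_num) (hexp le_rfl)
    (hexp hY) hY
  rw [← div_le_iff₀ (by positivity)]
  calc Real.log Y / Y ^ (1 / 6 : ℝ)
      ≤ Real.log (10 ^ 6) / ((10 : ℝ) ^ 6) ^ (1 / 6 : ℝ) := hanti
    _ = Real.log (10 ^ 6) / 10 := by rw [hten]
    _ ≤ 20 * Real.log 2 / 10 := by gcongr; exact log_ten_pow_six_le
    _ = 2 * Real.log 2 := by ring

lemma psi_sub_theta_le_mul_sqrt (hY : 10 ^ 6 ≤ Y) :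
    Chebyshev.psi Y - Chebyshev.theta Y ≤ 6 * Real.log 2 * √Y := by
  have hY0 : 0 < Y := lt_of_lt_of_le (by norm_num) hY
  have hlog4 : Real.log 4 = 2 * Real.log 2 := by
    rw [← Real.log_rpow two_pos]
    norm_num
  have hsecond : Real.log Y / Real.log 2 * Y ^ (1 / 3 : ℝ) ≤ 2 * √Y :=
    calc Real.log Y / Real.log 2 * Y ^ (1 / 3 : ℝ)
        ≤ 2 * Real.log 2 * Y ^ (1 / 6 : ℝ) / Real.log 2 * Y ^ (1 / 3 : ℝ) := by
          gcongr
          exact log_le_mul_rpow_one_div_six hY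
      _ = 2 * (Y ^ (1 / 6 : ℝ) * Y ^ (1 / 3 : ℝ)) := by field_simp
      _ = 2 * √Y := by
          rw [← Real.rpow_add hY0, Real.sqrt_eq_rpow]
          norm_num
  calc Chebyshev.psi Y - Chebyshev.theta Y
      ≤ Real.log 4 * (√Y + Real.log Y / Real.log 2 * Y ^ (1 / 3 : ℝ)) := by
        rw [Real.sqrt_eq_rpow]
        exact psi_sub_theta_le (by linarith)
    _ ≤ 2 * Real.log 2 * (√Y + 2 * √Y) := by rw [hlog4]; gcongr
    _ = 6 * Real.log 2 * √Y := by ring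

/-- Half the logarithmic length of the window below `Y` that is shown to contain a prime; the
window `(Y * exp (-2 * windowRadius Y), Y)` lies in `(Y - 8 / 5 * (√Y * log Y), Y)`. -/
noncomputable def windowRadius (Y : ℝ) : ℝ := 4 / 5 * (Real.log Y / √Y)

lemma windowRadius_mul_sqrt (hY : 0 < Y) : windowRadius Y * √Y = 4 / 5 * Real.log Y := by
  rw [windowRadius]
  field_simp

lemma windowRadius_pos (hY : 1 < Y) : 0 < windowRadius Y := by
  have hlog := Real.log_pos hY
  unfold windowRadius
  positivity

lemma windowRadius_le (hY : 10 ^ 6 ≤ Y) : windowRadius Y ≤ 0.0112 := by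
  have hexp {Z : ℝ} (hZ : 10 ^ 6 ≤ Z) : Real.exp 2 ≤ Z := by
    rw [← Real.le_log_iff_exp_le (lt_of_lt_of_le (by norm_num) hZ)]
    exact le_trans (by norm_num) (le_log_of_ten_pow_six_le hZ)
  have hsqrt : √(10 ^ 6) = 10 ^ 3 := by
    rw [show (10 : ℝ) ^ 6 = (10 ^ 3) ^ 2 by norm_num, Real.sqrt_sq (by norm_num)]
  have hanti := Real.log_div_sqrt_antitoneOn (hexp le_rfl) (hexp hY) hY
  calc 4 / 5 * (Real.log Y / √Y) ≤ 4 / 5 * (Real.log (10 ^ 6) / √(10 ^ 6)) := by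
        gcongr
    _ ≤ 4 / 5 * (20 * Real.log 2 / 10 ^ 3) := by
        rw [hsqrt]
        gcongr
        exact log_ten_pow_six_le
    _ ≤ 0.0112 := by linarith [Real.log_two_lt_d9]

lemma exp_two_le : Real.exp 2 ≤ 7.5 := by
  rw [← one_add_one_eq_two, Real.exp_add]
  nlinarith [Real.exp_one_lt_d9, Real.exp_pos 1]

lemma exp_half_log_add (hY : 0 < Y) (t : ℝ) :
    Real.exp (Real.log Y / 2 + t) = √Y * Real.exp t := by
  rw [Real.exp_add, ← Real.log_sqrt hY.le, Real.exp_log (Real.sqrt_pos.mpr hY)]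

lemma log_one_div_windowRadius_add_one_le (hY : 10 ^ 6 ≤ Y) :
    Real.log (1 / windowRadius Y + 1) ≤ Real.log Y / 2 - 2 := by
  have hY0 : 0 < Y := lt_of_lt_of_le (by norm_num) hY
  have hκ := windowRadius_pos (Y := Y) (by linarith)
  have hsqrt : 10 ^ 3 ≤ √Y := Real.le_sqrt_of_sq_le (by linarith)
  have hinv : 1 / windowRadius Y ≤ √Y / 10 := by
    rw [div_le_div_iff₀ hκ (by norm_num), mul_comm √Y, windowRadius_mul_sqrt hY0]
    linarith [le_log_of_ten_pow_six_le hY]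
  rw [Real.log_le_iff_le_exp (by positivity), sub_eq_add_neg, exp_half_log_add hY0, Real.exp_neg,
    ← div_eq_mul_inv, le_div_iff₀ (Real.exp_pos 2)]
  calc (1 / windowRadius Y + 1) * Real.exp 2 ≤ (√Y / 10 + 1) * 7.5 := by
        gcongr
        exact exp_two_le
    _ ≤ √Y := by linarith

lemma window_terms_lt (hY : 10 ^ 6 ≤ Y) :
    windowRadius Y * Real.exp (windowRadius Y / 2) + (1 + Real.log (1 / windowRadius Y + 1) +
        (windowRadius Y + 1) / 2 + windowRadius Y) +
      Real.exp (windowRadius Y) * (6 * Real.log 2) <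
        4 / 5 * Real.log Y * Real.exp (-(windowRadius Y / 2)) := by
  have hlog := log_one_div_windowRadius_add_one_le hY
  have hκ := windowRadius_pos (Y := Y) (by linarith)
  have hκ' := windowRadius_le hY
  set κ := windowRadius Y
  have hs := le_log_of_ten_pow_six_le hY
  have hexp : Real.exp κ ≤ 1.012 := by
    refine (Real.exp_bound_div_one_sub_of_interval hκ.le (by linarith)).trans ?_
    rw [div_le_iff₀ (by linarith)]
    linarith
  have hexp' : Real.exp (κ / 2) ≤ 1.012 := (Real.exp_le_exp.mpr (by linarith)).trans hexp
  have hfirst : κ * Real.exp (κ / 2) ≤ 0.0112 * 1.012 := by gcongr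
  have hlast : Real.exp κ * (6 * Real.log 2) ≤ 1.012 * (6 * 0.6932) := by
    gcongr
    exact Real.log_two_lt_d9.le.trans (by norm_num)
  have hmain : 4 / 5 * Real.log Y * 0.994 ≤ 4 / 5 * Real.log Y * Real.exp (-(κ / 2)) := by
    gcongr
    linarith [Real.add_one_le_exp (-(κ / 2))]
  linarith

lemma exists_prime_mem_window (hRH : RiemannHypothesis) (hY : 10 ^ 6 ≤ Y) :
    ∃ p : ℕ, p.Prime ∧ Y * Real.exp (-(2 * windowRadius Y)) < p ∧ p < Y := by
  have hY0 : 0 < Y := lt_of_lt_of_le (by norm_num) hY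
  have hterms := window_terms_lt hY
  have hsqrt := windowRadius_mul_sqrt hY0
  have hκ := windowRadius_pos (Y := Y) (by linarith)
  have hκ' := windowRadius_le hY
  set κ := windowRadius Y
  set L := Real.log Y - κ with hL
  have hs := le_log_of_ten_pow_six_le hY
  have hexp_add : Real.exp (L + κ) = Y := by rw [hL, sub_add_cancel, Real.exp_log hY0]
  have hexp_sub : Real.exp (L - κ) = Y * Real.exp (-(2 * κ)) := by
    rw [hL, sub_sub, sub_eq_add_neg, Real.exp_add, Real.exp_log hY0, two_mul]
  have hexp_half_sub : Real.exp (L / 2) = √Y * Real.exp (-(κ / 2)) := by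
    rw [← exp_half_log_add hY0]
    congr 1
    linarith
  have hexp_neg : Real.exp (-(L - κ) / 2) * √Y = Real.exp κ := by
    rw [mul_comm, ← exp_half_log_add hY0]
    congr 1
    linarith
  by_contra! hempty
  have hbound := mul_exp_half_le_of_forall_prime (L := L) hRH hκ
    (by linarith [Real.log_two_gt_d9]) (by linarith)
    (by simpa only [hexp_add, hexp_sub] using hempty)
  have hpowers : Real.exp (-(L - κ) / 2) * (Chebyshev.psi Y - Chebyshev.theta Y) ≤
      Real.exp κ * (6 * Real.log 2) :=
    calc _ ≤ Real.exp (-(L - κ) / 2) * (6 * Real.log 2 * √Y) := by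
          gcongr
          exact psi_sub_theta_le_mul_sqrt hY
      _ = _ := by rw [← hexp_neg]; ring
  rw [hexp_add, hexp_half_sub, ← mul_assoc, hsqrt] at hbound
  linarith

lemma exists_prime_sub_sqrt_mul_log_lt (hRH : RiemannHypothesis) (hY : 10 ^ 6 ≤ Y) :
    ∃ p : ℕ, p.Prime ∧ Y - 8 / 5 * (√Y * Real.log Y) < p ∧ p < Y := by
  have hY0 : 0 < Y := lt_of_lt_of_le (by norm_num) hY
  obtain ⟨p, hp, hlower, hupper⟩ := exists_prime_mem_window hRH hY
  have hradius : Y * windowRadius Y = 4 / 5 * (√Y * Real.log Y) := by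
    calc Y * windowRadius Y = √Y * (windowRadius Y * √Y) := by
          rw [mul_left_comm, Real.mul_self_sqrt hY0.le, mul_comm]
      _ = _ := by rw [windowRadius_mul_sqrt hY0]; ring
  have hexp := mul_le_mul_of_nonneg_left (Real.add_one_le_exp (-(2 * windowRadius Y))) hY0.le
  exact ⟨p, hp, by linarith, hupper⟩

end Window

section SmallPrimes

lemma exists_mem_gt_of_isChain {α : Type*} [LinearOrder α] {R : α → α → Prop} {n : α} :
    ∀ {r : α} {l : List α}, (r :: l).IsChain R → r ≤ n → (∃ a ∈ l, n < a) →
      ∃ b ≤ n, ∃ a ∈ l, n < a ∧ R b a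
  | _, [], _, _, ⟨_, ha, _⟩ => absurd ha List.not_mem_nil
  | r, a :: l, hchain, hr, hex => by
    rw [List.isChain_cons_cons] at hchain
    rcases lt_or_ge n a with hna | han
    · exact ⟨r, hr, a, List.mem_cons_self, hna, hchain.1⟩
    · have hex' : ∃ c ∈ l, n < c := by
        simpa only [List.exists_mem_cons_iff, han.not_gt, false_or] using hex
      obtain ⟨b, hb, c, hc, hnc, hR⟩ := exists_mem_gt_of_isChain hchain.2 han hex'
      exact ⟨b, hb, c, List.mem_cons_of_mem a hc, hnc, hR⟩

/-- Primes starting at `3` and passing `10 ^ 6` which, preceded by `2`, leave gaps small enough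
to settle the prime gap bound below `10 ^ 6`. Each one is the largest prime allowed by
`isChain_smallPrimes`. -/
def smallPrimes : List ℕ := [
  3, 5, 7, 13, 23, 43, 79, 137, 227, 349, 509, 719, 983, 1307, 1699, 2161, 2719, 3347,
  4079, 4889, 5813, 6863, 7993, 9221, 10597, 12073, 13709, 15451, 17299, 19319, 21467, 23719,
  26183, 28771, 31481, 34319, 37379, 40577, 43891, 47353, 51071, 54919, 58921, 63073, 67369,
  71947, 76679, 81569, 86599, 91781, 97127, 102797, 108637, 114641, 120779, 127103, 133597,
  140453, 147481, 154681, 162059, 169607, 177323, 185221, 193283, 201769, 210437, 219293,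
  228337, 237563, 246979, 256579, 266359, 276599, 287047, 297691, 308527, 319547, 330767,
  342191, 353813, 365627, 377633, 390161, 402881, 415823, 428977, 442333, 455899, 469687,
  483671, 497873, 512269, 526871, 542093, 557533, 573179, 589049, 605147, 621461, 637939,
  654679, 671651, 688813, 706213, 723839, 741683, 760211, 778979, 797977, 817183, 836623,
  856309, 876229, 896369, 916733, 937337, 958163, 979229, 1000507]

lemma prime_of_mem_smallPrimes : ∀ p ∈ smallPrimes, p.Prime := by
  simp only [smallPrimes, List.forall_mem_cons]
  norm_num

-- `69 / 100 < log 2`, and squaring `r` makes the rounding in `Nat.log2` harmless at `r = 3`.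
lemma isChain_smallPrimes : (2 :: smallPrimes).IsChain fun r a ↦
    (125 * (a - r)) ^ 2 ≤ r * (69 * Nat.log2 (r ^ 2)) ^ 2 := by
  decide +kernel

lemma mul_log2_sq_le_log {r : ℕ} (hr : r ≠ 0) :
    69 * (Nat.log2 (r ^ 2) : ℝ) ≤ 200 * Real.log r := by
  have hpow : (2 : ℝ) ^ Nat.log2 (r ^ 2) ≤ (r : ℝ) ^ 2 := by
    exact_mod_cast Nat.log2_self_le (pow_ne_zero 2 hr)
  have hlog := Real.log_le_log (by positivity) hpow
  rw [Real.log_pow, Real.log_pow] at hlog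
  have hlog2 : (Nat.log2 (r ^ 2) : ℝ) * 0.69 ≤ Nat.log2 (r ^ 2) * Real.log 2 := by
    gcongr
    exact le_trans (by norm_num) Real.log_two_gt_d9.le
  push_cast at hlog
  linarith

lemma cast_le_of_sq_le_log2 {r d : ℕ} (hr : r ≠ 0)
    (h : (125 * d) ^ 2 ≤ r * (69 * Nat.log2 (r ^ 2)) ^ 2) :
    (d : ℝ) ≤ 8 / 5 * (√r * Real.log r) := by
  have hsq : (125 * (d : ℝ)) ^ 2 ≤ (√r * (69 * Nat.log2 (r ^ 2))) ^ 2 := by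
    rw [mul_pow √(r : ℝ), Real.sq_sqrt r.cast_nonneg]
    exact_mod_cast h
  have hroot : 125 * (d : ℝ) ≤ √r * (69 * Nat.log2 (r ^ 2)) :=
    le_of_sq_le_sq hsq (by positivity)
  have hlog : √(r : ℝ) * (69 * Nat.log2 (r ^ 2)) ≤ √r * (200 * Real.log r) := by
    gcongr √_ * ?_
    exact mul_log2_sq_le_log hr
  linarith

lemma exists_prime_sub_le_of_lt {n : ℕ} (hn : 2 ≤ n) (hn' : n < 10 ^ 6) :
    ∃ p : ℕ, p.Prime ∧ n < p ∧ (p : ℝ) - n ≤ 8 / 5 * (√n * Real.log n) := by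
  obtain ⟨r, hrn, p, hp, hnp, hgap⟩ := exists_mem_gt_of_isChain isChain_smallPrimes hn
    ⟨1000507, by decide, by lia⟩
  have hr : r ≠ 0 := by
    rintro rfl
    have hp0 : p = 0 := by simpa using hgap
    lia
  refine ⟨p, prime_of_mem_smallPrimes p hp, hnp, ?_⟩
  calc (p : ℝ) - n ≤ (p : ℝ) - r := by gcongr
    _ = ((p - r : ℕ) : ℝ) := (Nat.cast_sub (hrn.trans hnp.le)).symm
    _ ≤ 8 / 5 * (√r * Real.log r) := cast_le_of_sq_le_log2 hr hgap
    _ ≤ 8 / 5 * (√n * Real.log n) := by gcongr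

end SmallPrimes

section PrimeGaps

lemma nth_prime_succ_sub_le (hRH : RiemannHypothesis) (i : ℕ) :
    (Nat.nth Nat.Prime (i + 1) : ℝ) - Nat.nth Nat.Prime i ≤
      8 / 5 * (√(Nat.nth Nat.Prime (i + 1)) * Real.log (Nat.nth Nat.Prime (i + 1))) := by
  have hp : (Nat.nth Nat.Prime i).Prime := Nat.prime_nth_prime i
  have hlt : Nat.nth Nat.Prime i < Nat.nth Nat.Prime (i + 1) :=
    Nat.nth_strictMono Nat.infinite_setOfPred_prime i.lt_succ_self
  have hle {a : ℕ} (ha : a.Prime) (haq : a < Nat.nth Nat.Prime (i + 1)) :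
      a ≤ Nat.nth Nat.Prime i := Nat.le_nth_of_lt_nth_succ haq ha
  set p := Nat.nth Nat.Prime i
  set q := Nat.nth Nat.Prime (i + 1)
  rcases le_or_gt (10 ^ 6) q with hlarge | hsmall
  · obtain ⟨a, ha, hlower, hupper⟩ :=
      exists_prime_sub_sqrt_mul_log_lt hRH (Y := q) (by exact_mod_cast hlarge)
    have hap : (a : ℝ) ≤ p := Nat.cast_le.mpr (hle ha (Nat.cast_lt.mp hupper))
    linarith
  · obtain ⟨a, ha, hpa, hgap⟩ := exists_prime_sub_le_of_lt hp.two_le (hlt.trans hsmall)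
    have hqa : q ≤ a := not_lt.mp fun haq ↦ (hle ha haq).not_gt hpa
    calc (q : ℝ) - p ≤ a - p := by gcongr
      _ ≤ 8 / 5 * (√p * Real.log p) := hgap
      _ ≤ 8 / 5 * (√q * Real.log q) := by
        gcongr
        exact_mod_cast hp.pos

lemma nth_prime_add_sub_le (hRH : RiemannHypothesis) (i k : ℕ) :
    (Nat.nth Nat.Prime (i + k) : ℝ) - Nat.nth Nat.Prime i ≤
      k * (8 / 5 * (√(Nat.nth Nat.Prime (i + k)) * Real.log (Nat.nth Nat.Prime (i + k)))) := by
  induction k with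
  | zero => simp only [add_zero, sub_self, Nat.cast_zero, zero_mul, le_refl]
  | succ k ih =>
    have hgap := nth_prime_succ_sub_le hRH (i + k)
    have hp : 0 < Nat.nth Nat.Prime (i + k) := (Nat.prime_nth_prime _).pos
    have hlt : Nat.nth Nat.Prime (i + k) < Nat.nth Nat.Prime (i + k + 1) :=
      Nat.nth_strictMono Nat.infinite_setOfPred_prime (i + k).lt_succ_self
    rw [← add_assoc]
    set p := Nat.nth Nat.Prime (i + k)
    set q := Nat.nth Nat.Prime (i + k + 1)
    have hmono : (k : ℝ) * (8 / 5 * (√p * Real.log p)) ≤ k * (8 / 5 * (√q * Real.log q)) := by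
      gcongr
    push_cast
    linarith

lemma one_sub_mul_log_div_sqrt_le_nth_prime_div (hRH : RiemannHypothesis) (i k : ℕ) :
    1 - 8 * (k : ℝ) / 5 * (Real.log (Nat.nth Nat.Prime (i + k)) / √(Nat.nth Nat.Prime (i + k))) ≤
      (Nat.nth Nat.Prime i : ℝ) / Nat.nth Nat.Prime (i + k) := by
  have hgap := nth_prime_add_sub_le hRH i k
  have hq : (0 : ℝ) < Nat.nth Nat.Prime (i + k) :=
    Nat.cast_pos.mpr (Nat.prime_nth_prime (i + k)).pos
  set q : ℝ := (Nat.nth Nat.Prime (i + k) : ℝ)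
  have hdiv : Real.log q / √q * q = √q * Real.log q := by
    rw [div_mul_eq_mul_div, mul_div_assoc, Real.div_sqrt, mul_comm]
  rw [le_div_iff₀ hq, sub_mul, one_mul, mul_assoc, hdiv]
  linarith

lemma exists_lt_nth_prime_add (k : ℕ) (x : ℝ) : ∃ i : ℕ, x < Nat.nth Nat.Prime (i + k) := by
  obtain ⟨n, hn⟩ := exists_nat_gt x
  have hle : n + k ≤ Nat.nth Nat.Prime (n + k) :=
    (Nat.nth_strictMono Nat.infinite_setOfPred_prime).le_apply
  exact ⟨n, hn.trans_le (Nat.cast_le.mpr ((Nat.le_add_right n k).trans hle))⟩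

end PrimeGaps

end RHPrimeGap

/-- Under the Riemann hypothesis, for k ≥ 1 and x ≥ max(p_k, e²) one has
η_k(x) ≥ 1 − (8k/5)·(log x)/√x. -/
theorem stmt12 (hRH : RiemannHypothesis) (k : ℕ) (hk : 1 ≤ k) (x : ℝ)
    (hx : max (Nat.nth Nat.Prime (k - 1) : ℝ) (Real.exp 2) ≤ x) :
    1 - (8 * (k : ℝ) / 5) * (Real.log x / Real.sqrt x) ≤ eta k x := by
  have hxexp : Real.exp 2 ≤ x := (le_max_right _ _).trans hx
  refine le_csInf ?_ ?_
  · obtain ⟨i, hi⟩ := RHPrimeGap.exists_lt_nth_prime_add k x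
    exact ⟨_, i, hi, rfl⟩
  · rintro _ ⟨i, hi, rfl⟩
    refine le_trans ?_ (RHPrimeGap.one_sub_mul_log_div_sqrt_le_nth_prime_div hRH i k)
    gcongr 1 - 8 * (k : ℝ) / 5 * ?_
    exact Real.log_div_sqrt_antitoneOn hxexp (hxexp.trans hi.le) hi.le
end

section
/- Let n be an integer and let q be a prime dividing g(n). Let 0 < η < 1 with η ≤ η₃(q/4), and let (γ_j) be the uniform g-sequence of parameter η (γ_0 = 0, γ_j = (1 + η·γ_{j−1}²)/2 for j ≥ 1). Then for every integer k ≥ 1 with θ(q·γ_{k+1})/q − k·(log q)/q > 0, one has q ≤ (log g(n)) / ( θ(q·γ_{k+1})/q − k·(log q)/q ). -/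
/-- Landau's function: the maximal order of a permutation of the symmetric group on `n` letters. -/
noncomputable def landau (n : ℕ) : ℕ :=
  Finset.univ.sup fun σ : Equiv.Perm (Fin n) => orderOf σ

/-- The largest prime factor of `m` (0 if `m` has no prime factor). -/
def maxPrimeFac (m : ℕ) : ℕ := m.primeFactors.sup id

/-- Chebyshev's function θ(x) = Σ_{p ≤ x, p prime} log p. -/
noncomputable def chebTheta (x : ℝ) : ℝ :=
  ∑ p ∈ Finset.filter Nat.Prime (Finset.range (⌊x⌋₊ + 1)), Real.log p

/-!
Write `ℓ(m)` for the sum of the prime powers exactly dividing `m`; then `g(n)` is the largest `m`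
with `ℓ(m) ≤ n`, so a divisor of `g(n)` cannot be replaced by something larger without increasing
`ℓ`. Call a prime *missing* if it does not divide `g(n)`. Exchanging `q`, or `q p` with `p` another
prime divisor of `g(n)`, for powers of two missing primes `r < s` gives `r + s > q`, and shows that
every prime `p ≠ q` with `r + s - q ≤ p ≤ r s / q` is missing.

If `r < s` were both in `[q γ_i, q γ_{i+1}]`, then all primes of `[q η γ_i ^ 2, q γ_i ^ 2]` would be
missing, and there are at least three of them by the choice of `η`. That interval is covered by
two consecutive intervals of the same kind, one of which again contains two missing primes: this
is an infinite descent. Hence there are at most `k` missing primes up to `q γ_{k+1}`, and all the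
other primes up to there divide `g(n)`.
-/

open Equiv

/-- Landau's additive function `ℓ(m)`, the sum of the prime powers exactly dividing `m`: the
least degree of a permutation of order `m`. By convention `ℓ(0) = 0`. -/
noncomputable def ell (m : ℕ) : ℕ := m.factorization.sum fun p a => p ^ a

theorem ell_mul_of_coprime {a b : ℕ} (h : a.Coprime b) : ell (a * b) = ell a + ell b := by
  rw [ell, Nat.factorization_mul_of_coprime h, Finsupp.sum_add_index_of_disjoint]
  · rfl
  · simpa only [Nat.support_factorization] using h.disjoint_primeFactors

theorem ell_one : ell 1 = 0 := by simp [ell]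

theorem ell_prime_pow {p a : ℕ} (hp : p.Prime) (ha : a ≠ 0) : ell (p ^ a) = p ^ a := by
  rw [ell, hp.factorization_pow, Finsupp.sum, Finsupp.support_single _ ha, Finset.sum_singleton,
    Finsupp.single_eq_same]

theorem ell_le_self (m : ℕ) : ell m ≤ m := by
  induction m using Nat.recOnPosPrimePosCoprime with
  | prime_pow p a hp ha => rw [ell_prime_pow hp ha.ne']
  | zero => simp [ell]
  | one => simp [ell]
  | coprime a b ha hb hab iha ihb =>
    rw [ell_mul_of_coprime hab]
    nlinarith

theorem ell_le_of_dvd {d m : ℕ} (hm : m ≠ 0) (h : d ∣ m) : ell d ≤ ell m :=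
  calc
    ell d ≤ ∑ p ∈ d.primeFactors, p ^ m.factorization p :=
      Finset.sum_le_sum fun p hp => Nat.pow_le_pow_right (Nat.pos_of_mem_primeFactors hp)
        ((Nat.factorization_le_iff_dvd (ne_zero_of_dvd_ne_zero hm h) hm).2 h p)
    _ ≤ ell m := Finset.sum_le_sum_of_subset (Nat.primeFactors_mono h hm)

theorem ell_lcm_le {a b : ℕ} (ha : a ≠ 0) (hb : b ≠ 0) : ell (a.lcm b) ≤ ell a + ell b := by
  rw [← Nat.factorizationLCMLeft_mul_factorizationLCMRight ha hb,
    ell_mul_of_coprime (Nat.coprime_factorizationLCMLeft_factorizationLCMRight a b)]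
  exact add_le_add (ell_le_of_dvd ha (Nat.factorizationLCMLeft_dvd_left a b))
    (ell_le_of_dvd hb (Nat.factorizationLCMRight_dvd_right a b))

theorem ell_multisetLcm_le_sum {s : Multiset ℕ} (hs : 0 ∉ s) : ell s.lcm ≤ s.sum := by
  induction s using Multiset.induction_on with
  | empty => simp [ell_one]
  | cons a s ih =>
    obtain ⟨ha, hs⟩ : 0 ≠ a ∧ 0 ∉ s := by simpa only [Multiset.mem_cons, not_or] using hs
    rw [Multiset.lcm_cons, Multiset.sum_cons]
    calc
      ell (a.lcm s.lcm) ≤ ell a + ell s.lcm :=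
        ell_lcm_le ha.symm (by rwa [ne_eq, Multiset.lcm_eq_zero_iff])
      _ ≤ a + s.sum := add_le_add (ell_le_self a) (ih hs)

theorem ell_add_le_ell_mul {m q : ℕ} (hm : m ≠ 0) (hq : q.Prime) :
    ell m + q ≤ ell (q * m) := by
  obtain ⟨a, c, hqc, rfl⟩ := Nat.exists_eq_pow_mul_and_not_dvd hm q hq.ne_one
  have hcop : q.Coprime c := hq.coprime_iff_not_dvd.2 hqc
  rw [← mul_assoc, ← pow_succ', ell_mul_of_coprime (hcop.pow_left _),
    ell_mul_of_coprime (hcop.pow_left _), ell_prime_pow hq (by lia : a + 1 ≠ 0)]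
  rcases eq_or_ne a 0 with rfl | ha
  · simp [ell_one, add_comm]
  · have hqa : q ≤ q ^ a := Nat.le_self_pow ha q
    have hsum : q ^ a + q ≤ q ^ (a + 1) := by nlinarith [hq.two_le, pow_succ q a]
    rw [ell_prime_pow hq ha]
    linarith

section Perm

variable {α : Type*} [Fintype α]

theorem ell_orderOf_le_card (σ : Perm α) : ell (orderOf σ) ≤ Fintype.card α := by
  classical
  rw [← Perm.lcm_cycleType]
  refine (ell_multisetLcm_le_sum fun h => ?_).trans (Perm.sum_cycleType_le σ)
  exact absurd (Perm.two_le_of_mem_cycleType h) (by norm_num)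

theorem exists_perm_dvd_orderOf_of_ell_le {m : ℕ} (hm : m ≠ 0) (h : ell m ≤ Fintype.card α) :
    ∃ σ : Perm α, m ∣ orderOf σ := by
  classical
  obtain ⟨σ, hσ⟩ : ∃ σ : Perm α,
      σ.cycleType = m.primeFactors.val.map fun p => p ^ m.factorization p := by
    refine (Perm.exists_with_cycleType_iff α).2 ⟨h, fun a ha => ?_⟩
    obtain ⟨p, hp, rfl⟩ := Multiset.mem_map.1 ha
    have hp' := Nat.prime_of_mem_primeFactors hp
    exact hp'.two_le.trans (Nat.le_self_pow
      (hp'.factorization_pos_of_dvd hm (Nat.dvd_of_mem_primeFactors hp)).ne' p)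
  refine ⟨σ, (Nat.dvd_iff_prime_pow_dvd_dvd _ _).2 fun p k hp hpk => ?_⟩
  rcases eq_or_ne k 0 with rfl | hk
  · simp
  have hmem : p ∈ m.primeFactors :=
    Nat.mem_primeFactors.2 ⟨hp, (dvd_pow_self p hk).trans hpk, hm⟩
  calc
    p ^ k ∣ p ^ m.factorization p := pow_dvd_pow p ((hp.pow_dvd_iff_le_factorization hm).1 hpk)
    _ ∣ orderOf σ := by
      rw [← Perm.lcm_cycleType, hσ]
      exact Multiset.dvd_lcm (Multiset.mem_map_of_mem _ hmem)

end Perm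

theorem isGreatest_landau (n : ℕ) : IsGreatest {m | m ≠ 0 ∧ ell m ≤ n} (landau n) := by
  constructor
  · obtain ⟨σ, -, hσ⟩ := Finset.exists_mem_eq_sup (Finset.univ : Finset (Perm (Fin n)))
      Finset.univ_nonempty fun σ => orderOf σ
    rw [landau, hσ]
    exact ⟨(orderOf_pos σ).ne', by simpa only [Fintype.card_fin] using ell_orderOf_le_card σ⟩
  · rintro m ⟨hm, hmn⟩
    obtain ⟨σ, hσ⟩ := exists_perm_dvd_orderOf_of_ell_le (α := Fin n) hm (by simpa using hmn)
    exact (Nat.le_of_dvd (orderOf_pos σ) hσ).trans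
      (Finset.le_sup (f := fun σ : Perm (Fin n) => orderOf σ) (Finset.mem_univ σ))

theorem landau_ne_zero (n : ℕ) : landau n ≠ 0 := (isGreatest_landau n).1.1

theorem le_of_landau_eq_mul {n d m x : ℕ} (hg : landau n = d * m) (hx : x ≠ 0)
    (hmx : m.Coprime x) (h : ell m + ell x ≤ ell (landau n)) : x ≤ d := by
  have hm : m ≠ 0 := right_ne_zero_of_mul (hg ▸ landau_ne_zero n)
  have hle : m * x ≤ landau n := (isGreatest_landau n).2
    ⟨mul_ne_zero hm hx, (ell_mul_of_coprime hmx).trans_le (h.trans (isGreatest_landau n).1.2)⟩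
  rw [hg, mul_comm d] at hle
  exact Nat.le_of_mul_le_mul_left hle hm.bot_lt

/-- The primes that do not divide `g(n)`; the argument is a count of the small ones. -/
def missingPrimes (n : ℕ) : Set ℕ := {p | p.Prime ∧ ¬ p ∣ landau n}

theorem pow_mul_pow_le_of_landau_eq_mul {n d m r s a b : ℕ} (hg : landau n = d * m)
    (hr : r ∈ missingPrimes n) (hs : s ∈ missingPrimes n) (hrs : r ≠ s) (ha : a ≠ 0) (hb : b ≠ 0)
    (h : ell m + (r ^ a + s ^ b) ≤ ell (landau n)) : r ^ a * s ^ b ≤ d := by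
  have hcop : (r ^ a).Coprime (s ^ b) := ((Nat.coprime_primes hr.1 hs.1).2 hrs).pow _ _
  have hm : ∀ p ∈ missingPrimes n, m.Coprime p := fun p hp =>
    (hp.1.coprime_iff_not_dvd.2 fun hpm => hp.2 (hg ▸ hpm.mul_left d)).symm
  refine le_of_landau_eq_mul hg
    (mul_ne_zero (pow_ne_zero a hr.1.ne_zero) (pow_ne_zero b hs.1.ne_zero))
    (((hm r hr).pow_right a).mul_right ((hm s hs).pow_right b)) ?_
  rwa [ell_mul_of_coprime hcop, ell_prime_pow hr.1 ha, ell_prime_pow hs.1 hb]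

theorem exists_pow_add_le_and_lt_pow_mul {q r s : ℕ} (hq : q.Prime) (hr : 1 < r) (hrs : r < s)
    (h : r + s ≤ q) : ∃ a ≠ 0, r ^ a + s ≤ q ∧ q < r ^ a * s := by
  have hs : 0 < s := by lia
  set b := Nat.log r (q / s)
  have hlo : r ^ b * s ≤ q := (Nat.le_div_iff_mul_le hs).1
    (Nat.pow_log_le_self r (Nat.div_pos (by lia) hs).ne')
  have hhi : q < r ^ (b + 1) * s :=
    (Nat.div_lt_iff_lt_mul hs).1 (Nat.lt_pow_succ_log_self hr _)
  refine ⟨b + 1, b.succ_ne_zero, ?_, hhi⟩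
  rcases eq_or_ne b 0 with hb | hb
  · simpa [hb] using h
  have hne : r ^ b * s ≠ q := fun heq => by
    have hdvd : r ∣ q := heq ▸ (dvd_pow_self r hb).mul_right s
    rcases (Nat.dvd_prime hq).1 hdvd with h1 | h1 <;> lia
  have hlt : r ^ b * s + 1 ≤ q := lt_of_le_of_ne hlo hne
  have hrb : r ≤ r ^ b := Nat.le_self_pow hb r
  obtain ⟨t, rfl⟩ := Nat.exists_eq_add_of_lt hrs
  nlinarith [pow_succ r b, Nat.mul_le_mul_right t hr.le, Nat.mul_le_mul_right t hrb]

section MissingPrimes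

variable {n q r s : ℕ} (hq : q.Prime) (hqd : q ∣ landau n)
  (hr : r ∈ missingPrimes n) (hs : s ∈ missingPrimes n) (hrs : r < s)
include hq hqd hr hs hrs

theorem lt_add_of_mem_missingPrimes : q < r + s := by
  by_contra! hle
  obtain ⟨a, ha, hadd, hmul⟩ := exists_pow_add_le_and_lt_pow_mul hq hr.1.one_lt hrs hle
  obtain ⟨m, hg⟩ := hqd
  have hm : m ≠ 0 := right_ne_zero_of_mul (hg ▸ landau_ne_zero n)
  have hell : ell m + q ≤ ell (landau n) := hg ▸ ell_add_le_ell_mul hm hq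
  have := pow_mul_pow_le_of_landau_eq_mul hg hr hs hrs.ne ha one_ne_zero
    (by rw [pow_one]; lia)
  rw [pow_one] at this
  lia

theorem mem_missingPrimes_of_add_le_of_mul_le {p : ℕ} (hp : p.Prime) (hpq : p ≠ q)
    (hadd : r + s ≤ q + p) (hmul : q * p ≤ r * s) : p ∈ missingPrimes n := by
  refine ⟨hp, fun hpd => ?_⟩
  obtain ⟨m, hg⟩ := ((Nat.coprime_primes hq hp).2 hpq.symm).mul_dvd_of_dvd_of_dvd hqd hpd
  have hm : m ≠ 0 := right_ne_zero_of_mul (hg ▸ landau_ne_zero n)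
  have hell : ell m + (q + p) ≤ ell (landau n) := by
    have h₁ := ell_add_le_ell_mul hm hp
    have h₂ := ell_add_le_ell_mul (mul_ne_zero hp.ne_zero hm) hq
    rw [hg, mul_assoc]
    lia
  have hle := pow_mul_pow_le_of_landau_eq_mul hg hr hs hrs.ne one_ne_zero one_ne_zero
    (by simpa only [pow_one] using (Nat.add_le_add_left hadd _).trans hell)
  rw [pow_one, pow_one] at hle
  have hdvd : q ∣ r * s := ⟨p, hle.antisymm hmul⟩
  rcases hq.dvd_mul.1 hdvd with h | h
  · exact hr.2 ((Nat.prime_dvd_prime_iff_eq hq hr.1).1 h ▸ hqd)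
  · exact hs.2 ((Nat.prime_dvd_prime_iff_eq hq hs.1).1 h ▸ hqd)

theorem two_mul_lt_three_mul_of_mem_missingPrimes (hrq : 2 * r ≤ q) : 2 * q < 3 * s := by
  by_contra! hsq
  have hsum := lt_add_of_mem_missingPrimes hq hqd hr hs hrs
  have hprod : 2 * q * (r + s) ≤ r * s + 2 * q * q := by
    zify at hrq hsq ⊢
    nlinarith
  have hpos : r * s / (2 * q) ≠ 0 :=
    (Nat.div_pos (by nlinarith) (by have := hq.pos; lia)).ne'
  obtain ⟨p, hp, hlt, hle⟩ := Nat.exists_prime_lt_and_le_two_mul _ hpos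
  rw [Nat.div_lt_iff_lt_mul (by have := hq.pos; lia)] at hlt
  have hmul : q * p ≤ r * s := by
    have := Nat.div_mul_le_self (r * s) (2 * q)
    nlinarith
  have hpr : p < r := by
    have : r * s < r * q := Nat.mul_lt_mul_of_pos_left (by lia) hr.1.pos
    nlinarith
  have hpm : p ∈ missingPrimes n :=
    mem_missingPrimes_of_add_le_of_mul_le hq hqd hr hs hrs hp (by lia) (by nlinarith) hmul
  have := lt_add_of_mem_missingPrimes hq hqd hpm hr hpr
  lia

end MissingPrimes

theorem eta_le {k i : ℕ} {x : ℝ} (h : x < (Nat.nth Nat.Prime (i + k) : ℝ)) :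
    eta k x ≤ (Nat.nth Nat.Prime i : ℝ) / (Nat.nth Nat.Prime (i + k) : ℝ) := by
  refine csInf_le ⟨0, ?_⟩ ⟨i, h, rfl⟩
  rintro _ ⟨j, -, rfl⟩
  positivity

theorem eta_three_le {x : ℝ} (hx : x < 11) : eta 3 x ≤ 3 / 11 := by
  have h₁ : Nat.nth Nat.Prime 1 = 3 := Nat.nth_count (p := Nat.Prime) (n := 3) (by norm_num)
  have h₄ : Nat.nth Nat.Prime (1 + 3) = 11 :=
    Nat.nth_count (p := Nat.Prime) (n := 11) (by norm_num)
  simpa only [h₁, h₄, Nat.cast_ofNat] using eta_le (k := 3) (i := 1) (x := x) (by simpa [h₄])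

theorem exists_nth_prime_le_of_le_eta {k : ℕ} {η x y : ℝ} (hη : η ≤ eta k y) (hx : 0 ≤ x)
    (hyx : y ≤ x) (hk : k ≤ Nat.primeCounting ⌊x⌋₊) :
    ∃ i, η * x ≤ Nat.nth Nat.Prime i ∧ ∀ j < k, (Nat.nth Nat.Prime (i + j) : ℝ) ≤ x := by
  obtain ⟨i, hi⟩ := Nat.exists_eq_add_of_le' hk
  have hgt : x < Nat.nth Nat.Prime (i + k) :=
    Nat.lt_of_floor_lt ((Nat.count_le_iff_le_nth Nat.infinite_setOfPred_prime).1 hi.le)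
  refine ⟨i, ?_, fun j hj => ?_⟩
  · calc
      η * x ≤ Nat.nth Nat.Prime i / Nat.nth Nat.Prime (i + k) * x :=
        mul_le_mul_of_nonneg_right (hη.trans (eta_le (hyx.trans_lt hgt))) hx
      _ ≤ Nat.nth Nat.Prime i := by
        rw [div_mul_eq_mul_div]
        exact div_le_of_le_mul₀ (by positivity) (by positivity) (by gcongr)
  · have hlt : i + j < Nat.primeCounting ⌊x⌋₊ := by lia
    exact (Nat.le_floor_iff hx).1 (Nat.lt_succ_iff.1 (Nat.nth_lt_of_lt_count hlt))

/-- The uniform `g`-sequence `(γ_j)` of parameter `η`. -/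
noncomputable def gSeq (η : ℝ) : ℕ → ℝ
  | 0 => 0
  | j + 1 => (1 + η * gSeq η j ^ 2) / 2

theorem gSeq_zero (η : ℝ) : gSeq η 0 = 0 := rfl

theorem gSeq_succ (η : ℝ) (j : ℕ) : gSeq η (j + 1) = (1 + η * gSeq η j ^ 2) / 2 := rfl

theorem eq_gSeq {η : ℝ} {γ : ℕ → ℝ} (h₀ : γ 0 = 0)
    (h : ∀ j, 1 ≤ j → γ j = (1 + η * γ (j - 1) ^ 2) / 2) : γ = gSeq η := by
  funext j
  induction j with
  | zero => exact h₀
  | succ j ih => rw [h _ (Nat.le_add_left 1 j), Nat.add_sub_cancel, ih, gSeq_succ]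

theorem gSeq_one (η : ℝ) : gSeq η 1 = 1 / 2 := by simp [gSeq]

theorem gSeq_two (η : ℝ) : gSeq η 2 = (1 + η / 4) / 2 := by
  rw [gSeq_succ, gSeq_one]
  ring

section GSeq

variable {η : ℝ} (hη : 0 ≤ η)
include hη

theorem gSeq_nonneg (j : ℕ) : 0 ≤ gSeq η j := by
  cases j with
  | zero => rfl
  | succ j => rw [gSeq_succ]; positivity

theorem gSeq_le {c : ℝ} (hc : 0 ≤ c) (h : (1 + η * c ^ 2) / 2 ≤ c) (j : ℕ) : gSeq η j ≤ c := by
  induction j with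
  | zero => exact hc
  | succ j ih =>
    have := gSeq_nonneg hη j
    refine le_trans ?_ h
    rw [gSeq_succ]
    gcongr

theorem gSeq_lt_one (hη1 : η < 1) (j : ℕ) : gSeq η j < 1 := by
  refine (gSeq_le hη (c := (1 + η) / 2) (by linarith) ?_ j).trans_lt (by linarith)
  have : η * ((1 + η) / 2) ^ 2 ≤ η * 1 := by
    gcongr
    exact pow_le_one₀ (by linarith) (by linarith)
  linarith

theorem gSeq_monotone : Monotone (gSeq η) := by
  refine monotone_nat_of_le_succ fun j => ?_
  induction j with
  | zero => exact gSeq_nonneg hη 1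
  | succ j ih =>
    have := gSeq_nonneg hη j
    rw [gSeq_succ, gSeq_succ η (j + 1)]
    gcongr

theorem half_le_gSeq {j : ℕ} (hj : 1 ≤ j) : 1 / 2 ≤ gSeq η j :=
  gSeq_one η ▸ gSeq_monotone hη hj

theorem gSeq_sq_le_gSeq (hη1 : η < 1) (j : ℕ) : gSeq η j ^ 2 ≤ gSeq η j :=
  pow_le_of_le_one (gSeq_nonneg hη j) (gSeq_lt_one hη hη1 j).le two_ne_zero

-- With `t = γ_i` and `w = η * t ^ 2`, the claim follows from `2 * t ^ 2 ≤ 1 + η * w ^ 2`. As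
-- `t ≤ γ_{i+1}` says `2 * t - 1 ≤ w`, the difference of the two sides times `t ^ 2` is at least
-- `t ^ 2 + (2 * t - 1) ^ 3 - 2 * t ^ 4 = (1 - t) ^ 2 * (4 * t - 2 * t ^ 2 - 1)`.
theorem gSeq_sq_le_gSeq_succ (hη1 : η < 1) {i j : ℕ} (h : η * gSeq η i ^ 2 ≤ gSeq η j) :
    gSeq η i ^ 2 ≤ gSeq η (j + 1) := by
  have hstep : gSeq η i ≤ (1 + η * gSeq η i ^ 2) / 2 := gSeq_monotone hη i.le_succ
  have ht₀ := gSeq_nonneg hη i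
  have ht₁ := gSeq_lt_one hη hη1 i
  set t := gSeq η i
  have hsq : η * (η * t ^ 2) ^ 2 ≤ η * gSeq η j ^ 2 := by gcongr
  rw [gSeq_succ]
  suffices 2 * t ^ 2 ≤ 1 + η * (η * t ^ 2) ^ 2 by linarith
  rcases le_or_gt t (1 / 2) with ht | ht
  · have : 0 ≤ η * (η * t ^ 2) ^ 2 := by positivity
    nlinarith
  · have hcube : (2 * t - 1) ^ 3 ≤ (η * t ^ 2) ^ 3 :=
      pow_le_pow_left₀ (by linarith) (by linarith) 3
    have hfactor : 0 ≤ (1 - t) ^ 2 * (4 * t - 2 * t ^ 2 - 1) :=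
      mul_nonneg (sq_nonneg _) (by nlinarith)
    have hmul : 2 * t ^ 2 * t ^ 2 ≤ (1 + η * (η * t ^ 2) ^ 2) * t ^ 2 := by linarith
    exact le_of_mul_le_mul_right hmul (by positivity)

theorem exists_gSeq_lt_and_le_succ (hη1 : η < 1) {i : ℕ} (h : 0 < η * gSeq η i ^ 2) :
    ∃ l < i, gSeq η l < η * gSeq η i ^ 2 ∧ η * gSeq η i ^ 2 ≤ gSeq η (l + 1) := by
  have hi : η * gSeq η i ^ 2 ≤ gSeq η i :=
    (mul_le_of_le_one_left (sq_nonneg _) hη1.le).trans (gSeq_sq_le_gSeq hη hη1 i)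
  obtain ⟨l, hl, hl'⟩ := Nat.exists_not_and_succ_of_not_zero_of_exists
    (p := fun l => η * gSeq η i ^ 2 ≤ gSeq η l) (gSeq_zero η ▸ h.not_ge) ⟨i, hi⟩
  rw [not_le] at hl
  exact ⟨l, (gSeq_monotone hη).reflect_lt (hl.trans_le hi), hl, hl'⟩

end GSeq

theorem add_le_of_prime_of_prime {q r s : ℕ} (hr : r.Prime) (hs : s.Prime) (hrs : r < s)
    (hq : q < 33) (h : 11 * s ≤ 6 * q) : r + s ≤ q := by
  have hr2 := hr.two_le
  rcases hr.eq_two_or_odd with rfl | hr' <;> rcases hs.eq_two_or_odd with rfl | hs' <;> lia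

theorem card_le_one_of_forall_not_lt {α : Type*} [LinearOrder α] {S : Finset α}
    (h : ∀ a ∈ S, ∀ b ∈ S, ¬ a < b) : S.card ≤ 1 :=
  Finset.card_le_one.2 fun a ha b hb =>
    (not_lt.1 (h b hb a ha)).antisymm (not_lt.1 (h a ha b hb))

section Interval

variable {n q : ℕ} (hq : q.Prime) (hqd : q ∣ landau n) {η : ℝ} (hη : 0 ≤ η)
include hq hqd hη

theorem mul_gSeq_lt_of_lt_twenty (hη3 : η ≤ eta 3 ((q : ℝ) / 4)) (hq20 : q < 20)
    {r s : ℕ} (hr : r ∈ missingPrimes n) (hs : s ∈ missingPrimes n) (hrs : r < s) (j : ℕ) :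
    q * gSeq η j < s := by
  have hq20' : (q : ℝ) < 20 := by exact_mod_cast hq20
  have hη' : η ≤ 3 / 11 := hη3.trans (eta_three_le (by linarith))
  have hγ : gSeq η j ≤ 6 / 11 := gSeq_le hη (by norm_num) (by linarith) j
  by_contra! hsj
  have hs6 : (11 : ℝ) * s ≤ 6 * q := by nlinarith [q.cast_nonneg (α := ℝ)]
  have hle := add_le_of_prime_of_prime (q := q) hr.1 hs.1 hrs (by lia) (by exact_mod_cast hs6)
  exact hle.not_gt (lt_add_of_mem_missingPrimes hq hqd hr hs hrs)

variable (hη1 : η < 1)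
include hη1

theorem mem_missingPrimes_of_gSeq_sq {i r s p : ℕ} (hr : r ∈ missingPrimes n)
    (hs : s ∈ missingPrimes n) (hrs : r < s) (hri : q * gSeq η i ≤ r)
    (hsi : (s : ℝ) ≤ q * gSeq η (i + 1)) (hp : p.Prime) (hlo : η * (q * gSeq η i ^ 2) ≤ p)
    (hhi : (p : ℝ) ≤ q * gSeq η i ^ 2) : p ∈ missingPrimes n := by
  have hq₀ : (0 : ℝ) < q := Nat.cast_pos.2 hq.pos
  have ht₀ := gSeq_nonneg hη i
  have ht₁ := gSeq_lt_one hη hη1 i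
  have hrs' : (r : ℝ) < s := Nat.cast_lt.2 hrs
  have hpq : (p : ℝ) < q :=
    hhi.trans_lt (mul_lt_of_lt_one_right hq₀ (pow_lt_one₀ ht₀ ht₁ two_ne_zero))
  have hadd : (r : ℝ) + s ≤ q + p := by
    rw [gSeq_succ] at hsi
    linarith
  have hmul : (q : ℝ) * p ≤ r * s :=
    calc
      (q : ℝ) * p ≤ (q * gSeq η i) * (q * gSeq η i) := by nlinarith
      _ ≤ r * s := by gcongr; exact hri.trans hrs'.le
  exact mem_missingPrimes_of_add_le_of_mul_le hq hqd hr hs hrs hp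
    (Nat.cast_lt.1 hpq).ne (by exact_mod_cast hadd) (by exact_mod_cast hmul)

theorem exists_three_mem_missingPrimes (hη3 : η ≤ eta 3 ((q : ℝ) / 4)) (hq20 : 20 ≤ q)
    {i r s : ℕ} (hi : 1 ≤ i) (hr : r ∈ missingPrimes n) (hs : s ∈ missingPrimes n)
    (hrs : r < s) (hri : q * gSeq η i ≤ r) (hsi : (s : ℝ) ≤ q * gSeq η (i + 1)) :
    ∃ a ∈ missingPrimes n, ∃ b ∈ missingPrimes n, ∃ c ∈ missingPrimes n, a < b ∧ b < c ∧
      q * (η * gSeq η i ^ 2) ≤ a ∧ (c : ℝ) ≤ q * gSeq η i ^ 2 := by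
  have hq20' : (20 : ℝ) ≤ q := by exact_mod_cast hq20
  have hγ : (1 / 2) ^ 2 ≤ gSeq η i ^ 2 := by
    gcongr
    exact half_le_gSeq hη hi
  have hx : (q : ℝ) / 4 ≤ q * gSeq η i ^ 2 := by nlinarith
  have hcount : 3 ≤ Nat.primeCounting ⌊q * gSeq η i ^ 2⌋₊ :=
    (show 3 ≤ Nat.primeCounting 5 by decide).trans
      (Nat.monotone_primeCounting (Nat.le_floor (by push_cast; linarith)))
  obtain ⟨l, hlo, hhi⟩ := exists_nth_prime_le_of_le_eta hη3 (by positivity) hx hcount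
  have hmono := Nat.nth_strictMono Nat.infinite_setOfPred_prime
  have hmem : ∀ j < 3, Nat.nth Nat.Prime (l + j) ∈ missingPrimes n := fun j hj =>
    mem_missingPrimes_of_gSeq_sq hq hqd hη hη1 hr hs hrs hri hsi (Nat.prime_nth_prime _)
      (hlo.trans (Nat.cast_le.2 (hmono.monotone (l.le_add_right j)))) (hhi j hj)
  exact ⟨_, hmem 0 (by lia), _, hmem 1 (by lia), _, hmem 2 (by lia), hmono (by lia),
    hmono (by lia), by rw [add_zero]; linarith, hhi 2 (by lia)⟩

end Interval

section Descent

variable {n q : ℕ} (hq : q.Prime) (hqd : q ∣ landau n) {η : ℝ} (hη : 0 < η) (hη1 : η < 1)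
  (hη3 : η ≤ eta 3 ((q : ℝ) / 4))
include hq hqd hη hη1 hη3

theorem mul_gSeq_succ_lt_of_mul_gSeq_le {i r s : ℕ} (hr : r ∈ missingPrimes n)
    (hs : s ∈ missingPrimes n) (hrs : r < s) (hri : q * gSeq η i ≤ r) :
    q * gSeq η (i + 1) < s := by
  rcases lt_or_ge q 20 with hq20 | hq20
  · exact mul_gSeq_lt_of_lt_twenty hq hqd hη.le hη3 hq20 hr hs hrs _
  induction i using Nat.strong_induction_on generalizing r s with
  | _ i ih =>
  rcases Nat.eq_zero_or_pos i with rfl | hi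
  · have hsum : q < r + s := lt_add_of_mem_missingPrimes hq hqd hr hs hrs
    have hqs : (q : ℝ) < 2 * s := by exact_mod_cast (by lia : q < 2 * s)
    rw [zero_add, gSeq_one]
    linarith
  by_contra! hsi
  obtain ⟨a, ha, b, hb, c, hc, hab, hbc, hlo, hhi⟩ :=
    exists_three_mem_missingPrimes hq hqd hη.le hη1 hη3 hq20 hi hr hs hrs hri hsi
  have hbc' : (b : ℝ) < c := Nat.cast_lt.2 hbc
  have hγ := half_le_gSeq hη.le hi
  obtain ⟨l, hli, hl, hl'⟩ := exists_gSeq_lt_and_le_succ hη.le hη1 (i := i) (by positivity)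
  have hlb : q * gSeq η (l + 1) < b :=
    ih l hli ha hb hab (le_trans (by gcongr) hlo)
  rcases (Nat.succ_le_of_lt hli).lt_or_eq with hlt | rfl
  · have hlc : q * gSeq η (l + 2) < c := ih (l + 1) hlt hb hc hbc hlb.le
    have : q * gSeq η i ^ 2 ≤ q * gSeq η (l + 2) := by
      gcongr
      exact gSeq_sq_le_gSeq_succ hη.le hη1 hl'
    linarith
  · have : q * gSeq η (l + 1) ^ 2 ≤ q * gSeq η (l + 1) := by
      gcongr
      exact gSeq_sq_le_gSeq hη.le hη1 _
    linarith

theorem mul_gSeq_two_lt {r s : ℕ} (hr : r ∈ missingPrimes n) (hs : s ∈ missingPrimes n)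
    (hrs : r < s) : q * gSeq η 2 < s := by
  rcases le_or_gt (2 * r) q with hrq | hrq
  · have hqs : (2 : ℝ) * q < 3 * s := by
      exact_mod_cast two_mul_lt_three_mul_of_mem_missingPrimes hq hqd hr hs hrs hrq
    rw [gSeq_two]
    nlinarith [q.cast_nonneg (α := ℝ)]
  · refine mul_gSeq_succ_lt_of_mul_gSeq_le hq hqd hη hη1 hη3 (i := 1) hr hs hrs ?_
    have hqr : (q : ℝ) < 2 * r := by exact_mod_cast hrq
    rw [gSeq_one]
    linarith

theorem card_le_of_le_mul_gSeq {k : ℕ} (hk : 1 ≤ k) {S : Finset ℕ}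
    (hS : ∀ p ∈ S, p ∈ missingPrimes n ∧ (p : ℝ) ≤ q * gSeq η (k + 1)) : S.card ≤ k := by
  induction k, hk using Nat.le_induction generalizing S with
  | base =>
    refine card_le_one_of_forall_not_lt fun r hr s hs hrs => ?_
    exact (hS s hs).2.not_gt
      (mul_gSeq_two_lt hq hqd hη hη1 hη3 (hS r hr).1 (hS s hs).1 hrs)
  | succ k _ ih =>
    have hlow : (S.filter fun p : ℕ => (p : ℝ) ≤ q * gSeq η (k + 1)).card ≤ k :=
      ih fun p hp => ⟨(hS p (Finset.mem_filter.1 hp).1).1, (Finset.mem_filter.1 hp).2⟩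
    have hhigh : (S.filter fun p : ℕ => ¬ (p : ℝ) ≤ q * gSeq η (k + 1)).card ≤ 1 := by
      refine card_le_one_of_forall_not_lt fun r hr s hs hrs => ?_
      obtain ⟨hrS, hkr⟩ := Finset.mem_filter.1 hr
      have hsS := Finset.mem_of_mem_filter s hs
      exact (hS s hsS).2.not_gt (mul_gSeq_succ_lt_of_mul_gSeq_le hq hqd hη hη1 hη3
        (hS r hrS).1 (hS s hsS).1 hrs (not_le.1 hkr).le)
    rw [← Finset.card_filter_add_card_filter_not fun p : ℕ => (p : ℝ) ≤ q * gSeq η (k + 1)]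
    exact add_le_add hlow hhigh

end Descent

theorem sum_log_le_log_of_subset_primeFactors {m : ℕ} (hm : m ≠ 0) {S : Finset ℕ}
    (hS : S ⊆ m.primeFactors) : ∑ p ∈ S, Real.log p ≤ Real.log m := by
  have hpos : ∀ p ∈ S, 0 < p := fun p hp => Nat.pos_of_mem_primeFactors (hS hp)
  rw [← Real.log_prod fun p hp => Nat.cast_ne_zero.2 (hpos p hp).ne', ← Nat.cast_prod]
  refine Real.log_le_log (Nat.cast_pos.2 (Finset.prod_pos hpos)) (Nat.cast_le.2 ?_)
  exact Nat.le_of_dvd hm.bot_lt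
    ((Finset.prod_dvd_prod_of_subset _ _ _ hS).trans (Nat.prod_primeFactors_dvd m))

theorem chebTheta_mul_gSeq_le {n q : ℕ} (hq : q.Prime) (hqd : q ∣ landau n) {η : ℝ}
    (hη : 0 < η) (hη1 : η < 1) (hη3 : η ≤ eta 3 ((q : ℝ) / 4)) {k : ℕ} (hk : 1 ≤ k) :
    chebTheta (q * gSeq η (k + 1)) ≤ Real.log (landau n) + k * Real.log q := by
  set P := Nat.primesLE ⌊q * gSeq η (k + 1)⌋₊
  have hP : ∀ p ∈ P, p.Prime ∧ (p : ℝ) ≤ q * gSeq η (k + 1) := fun p hp =>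
    have hp' := Nat.mem_primesLE.1 hp
    ⟨hp'.2, (Nat.le_floor_iff (mul_nonneg q.cast_nonneg (gSeq_nonneg hη.le _))).1 hp'.1⟩
  have hdvd : ∑ p ∈ P with p ∣ landau n, Real.log p ≤ Real.log (landau n) :=
    sum_log_le_log_of_subset_primeFactors (landau_ne_zero n) fun p hp =>
      have hp' := Finset.mem_filter.1 hp
      Nat.mem_primeFactors.2 ⟨(hP p hp'.1).1, hp'.2, landau_ne_zero n⟩
  have hcard : (P.filter fun p => ¬ p ∣ landau n).card ≤ k :=
    card_le_of_le_mul_gSeq hq hqd hη hη1 hη3 hk fun p hp =>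
      have hp' := Finset.mem_filter.1 hp
      ⟨⟨(hP p hp'.1).1, hp'.2⟩, (hP p hp'.1).2⟩
  have hmissing : ∑ p ∈ P with ¬ p ∣ landau n, Real.log p ≤ k * Real.log q :=
    calc
      ∑ p ∈ P with ¬ p ∣ landau n, Real.log p
          ≤ (P.filter fun p => ¬ p ∣ landau n).card • Real.log q := by
        refine Finset.sum_le_card_nsmul _ _ _ fun p hp => ?_
        obtain ⟨hp₁, hp₂⟩ := hP p (Finset.mem_filter.1 hp).1
        exact Real.log_le_log (Nat.cast_pos.2 hp₁.pos)
          (hp₂.trans (mul_le_of_le_one_right q.cast_nonneg (gSeq_lt_one hη.le hη1 _).le))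
      _ ≤ k * Real.log q := by
        rw [nsmul_eq_mul]
        have := Real.log_natCast_nonneg q
        gcongr
  calc
    chebTheta (q * gSeq η (k + 1)) = ∑ p ∈ P, Real.log p := rfl
    _ ≤ Real.log (landau n) + k * Real.log q := by
      rw [← Finset.sum_filter_add_sum_filter_not P (· ∣ landau n)]
      exact add_le_add hdvd hmissing

/-- If q is a prime dividing g(n), η ≤ η₃(q/4), and (γ_j) is the uniform g-sequence
of parameter η, then for every k ≥ 1 with θ(qγ_{k+1})/q − k·(log q)/q > 0 one has
q ≤ log g(n) / (θ(qγ_{k+1})/q − k·(log q)/q). -/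
theorem stmt15 (n q : ℕ) (hq : q.Prime) (hqd : q ∣ landau n)
    (η : ℝ) (hη : 0 < η) (hη1 : η < 1) (hη3 : η ≤ eta 3 ((q : ℝ) / 4))
    (γ : ℕ → ℝ) (hγ0 : γ 0 = 0)
    (hγ : ∀ j : ℕ, 1 ≤ j → γ j = (1 + η * γ (j - 1) ^ 2) / 2)
    (k : ℕ) (hk : 1 ≤ k)
    (hD : 0 < chebTheta ((q : ℝ) * γ (k + 1)) / q - k * (Real.log q / q)) :
    (q : ℝ) ≤ Real.log (landau n) /
      (chebTheta ((q : ℝ) * γ (k + 1)) / q - k * (Real.log q / q)) := by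
  obtain rfl : γ = gSeq η := eq_gSeq hγ0 hγ
  have hq0 : (q : ℝ) ≠ 0 := Nat.cast_ne_zero.2 hq.ne_zero
  have hθ := chebTheta_mul_gSeq_le hq hqd hη hη1 hη3 hk
  rw [le_div_iff₀ hD]
  calc
    (q : ℝ) * (chebTheta (q * gSeq η (k + 1)) / q - k * (Real.log q / q))
        = chebTheta (q * gSeq η (k + 1)) - k * Real.log q := by field_simp
    _ ≤ Real.log (landau n) := by linarith
end
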